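/- Let a ∈ X, let f, g : 𝔹 → ℂ be holomorphic, F(x) = a + f(x)·x and G(x) = a + g(x)·x for x ∈ 𝔹. Assume F is biholomorphic on 𝔹 and G is subordinate to F, and let P_s(x) = (1/s!)·DˢG(0)(x,…,x) for s ≥ 1. Then for every x with ‖x‖ = r ≤ 3 − 2√2, Σ_{s≥1} ‖P_s(x)‖ ≤ dist(F(0), ∂F(𝔹)), where dist(F(0), ∂F(𝔹)) is the distance from F(0) to the boundary of the image F(𝔹). -/

import Mathlib

open Metric Set

noncomputable section

/-- A holomorphic map is biholomorphic on an open set `s` if it is holomorphic and injective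
on `s` and admits a holomorphic inverse on the image `f '' s`. -/
def IsBiholoOn {E₁ E₂ : Type*} [NormedAddCommGroup E₁] [NormedSpace ℂ E₁]
    [NormedAddCommGroup E₂] [NormedSpace ℂ E₂] (f : E₁ → E₂) (s : Set E₁) : Prop :=
  DifferentiableOn ℂ f s ∧ Set.InjOn f s ∧
    ∃ g : E₂ → E₁, DifferentiableOn ℂ g (f '' s) ∧ ∀ x ∈ s, g (f x) = x

/-- `G` is subordinate to `F` on the unit ball if `G = F ∘ W` for some Schwarz mapping `W`,
i.e. a holomorphic self-map of the ball fixing the origin. -/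
def Subordinate {X : Type*} [NormedAddCommGroup X] [NormedSpace ℂ X]
    (G F : X → X) : Prop :=
  ∃ W : X → X, DifferentiableOn ℂ W (ball (0 : X) 1) ∧
    Set.MapsTo W (ball (0 : X) 1) (ball (0 : X) 1) ∧ W 0 = 0 ∧
    ∀ x ∈ ball (0 : X) 1, G x = F (W x)

section BohrHelpers

/-!
Restricted to the complex line through a unit vector `u`, the map `x ↦ f x • x` becomes the
univalent function `φ z = z f(z u)`, and subordination gives `z g(z u) = φ (ω z)` with `ω` a Schwarz
function of one variable. Since `3 - 2√2 ≤ 1/3`, Bohr's inequality bounds the majorant series of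
`φ ∘ ω` by that of `φ`; it remains to bound the latter by `|φ'(0)| / 4`, which by Koebe's quarter
theorem on every line is at most the distance from `F 0` to the boundary of the image.

For that bound write `φ z = φ'(0) z γ(z)²` with `γ 0 = 1`. At `r = 3 - 2√2` the Koebe function has
`r / (1 - r)² = 1 / 4`, so it suffices that the majorant of `γ` at `r` is at most `1 / (1 - r)`.
Put `1 / γ z = 1 - z R(z)`. The area theorem for the odd univalent function `z γ(z²)` gives
`∑ (2j + 1) |R_j|² ≤ 1`. If `|R_0| ≤ 0.98`, Cauchy–Schwarz bounds the majorant of `R` by `1`, which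
is enough. Otherwise, after a rotation making `c = R_0` positive, the coefficients of `γ` are close
in mean square to `cⁿ`, so its majorant exceeds `Re γ(r)` by at most a small multiple of `1 - c`.
This is absorbed by the bound `Re R(r) ≤ 1 - 0.22 (1 - c)`, which comes from Goluzin's inequality
and Harnack's inequality.
-/

section Development

open MeasureTheory ComplexConjugate Filter Topology
open scoped Real

/-! ### Green's formula and the area inequality -/

section Green

variable {V : ℝ × ℝ → ℂ} {p : ℝ × ℝ}

lemma hasFDerivAt_im_conj_mul_fderiv (hV : ContDiffAt ℝ 2 V p) (v : ℝ × ℝ) :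
    HasFDerivAt (fun q => (conj (V q) * fderiv ℝ V q v).im)
      (Complex.imCLM.comp
        (conj (V p) • (ContinuousLinearMap.apply ℝ ℂ v).comp (fderiv ℝ (fderiv ℝ V) p) +
          fderiv ℝ V p v • (Complex.conjCLE : ℂ →L[ℝ] ℂ).comp (fderiv ℝ V p))) p := by
  have hd : HasFDerivAt V (fderiv ℝ V p) p := (hV.differentiableAt (by norm_num)).hasFDerivAt
  have hd' : HasFDerivAt (fderiv ℝ V) (fderiv ℝ (fderiv ℝ V) p) p :=
    ((hV.fderiv_right (m := 1) (by norm_num)).differentiableAt (by norm_num)).hasFDerivAt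
  have hconj : HasFDerivAt (fun q => conj (V q))
      ((Complex.conjCLE : ℂ →L[ℝ] ℂ).comp (fderiv ℝ V p)) p :=
    (Complex.conjCLE : ℂ →L[ℝ] ℂ).hasFDerivAt.comp p hd
  have happly : HasFDerivAt (fun q => fderiv ℝ V q v)
      ((ContinuousLinearMap.apply ℝ ℂ v).comp (fderiv ℝ (fderiv ℝ V) p)) p :=
    (ContinuousLinearMap.apply ℝ ℂ v).hasFDerivAt.comp p hd'
  exact Complex.imCLM.hasFDerivAt.comp p (hconj.mul happly)

lemma fderiv_im_conj_mul_fderiv_sub (hV : ContDiffAt ℝ 2 V p) :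
    fderiv ℝ (fun q => (conj (V q) * fderiv ℝ V q (0, 1)).im) p (1, 0) +
      fderiv ℝ (fun q => -(conj (V q) * fderiv ℝ V q (1, 0)).im) p (0, 1) =
      2 * (conj (fderiv ℝ V p (1, 0)) * fderiv ℝ V p (0, 1)).im := by
  have hsymm : fderiv ℝ (fderiv ℝ V) p (1, 0) (0, 1) = fderiv ℝ (fderiv ℝ V) p (0, 1) (1, 0) :=
    (hV.isSymmSndFDerivAt (by simp)) (1, 0) (0, 1)
  have hneg : HasFDerivAt (fun q => -(conj (V q) * fderiv ℝ V q (1, 0)).im) _ p :=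
    (hasFDerivAt_im_conj_mul_fderiv hV (1, 0)).neg
  rw [(hasFDerivAt_im_conj_mul_fderiv hV (0, 1)).fderiv, hneg.fderiv]
  simp [hsymm]
  ring

lemma integral_Icc_im_conj_fderiv_mul_fderiv {a b : ℝ × ℝ} (hab : a ≤ b)
    (hV : ∀ p ∈ Icc a b, ContDiffAt ℝ 2 V p) :
    (∫ p in Icc a b, 2 * (conj (fderiv ℝ V p (1, 0)) * fderiv ℝ V p (0, 1)).im) =
      (((∫ x in a.1..b.1, -(conj (V (x, b.2)) * fderiv ℝ V (x, b.2) (1, 0)).im)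
        - ∫ x in a.1..b.1, -(conj (V (x, a.2)) * fderiv ℝ V (x, a.2) (1, 0)).im) +
        ∫ y in a.2..b.2, (conj (V (b.1, y)) * fderiv ℝ V (b.1, y) (0, 1)).im) -
        ∫ y in a.2..b.2, (conj (V (a.1, y)) * fderiv ℝ V (a.1, y) (0, 1)).im := by
  have hfd : ∀ p ∈ Icc a b, ∀ v, DifferentiableAt ℝ
      (fun q => (conj (V q) * fderiv ℝ V q v).im) p :=
    fun p hp v => (hasFDerivAt_im_conj_mul_fderiv (hV p hp) v).differentiableAt
  have hdiv : ∀ p ∈ Icc a b, _ := fun p hp => fderiv_im_conj_mul_fderiv_sub (hV p hp)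
  have hIoo : ∀ p ∈ Ioo a.1 b.1 ×ˢ Ioo a.2 b.2 \ (∅ : Set (ℝ × ℝ)), p ∈ Icc a b := fun p hp =>
    ⟨⟨hp.1.1.1.le, hp.1.2.1.le⟩, ⟨hp.1.1.2.le, hp.1.2.2.le⟩⟩
  have hcont : ContinuousOn (fun p => 2 * (conj (fderiv ℝ V p (1, 0)) * fderiv ℝ V p (0, 1)).im)
      (Icc a b) := by
    have hfderiv : ContinuousOn (fderiv ℝ V) (Icc a b) := fun p hp =>
      ((hV p hp).fderiv_right (m := 1) (by norm_num)).continuousAt.continuousWithinAt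
    fun_prop
  rw [← setIntegral_congr_fun measurableSet_Icc hdiv]
  exact integral_divergence_prod_Icc_of_hasFDerivAt_off_countable_of_le _ _ _ _ a b hab ∅
    countable_empty
    (fun p hp => (hfd p hp _).continuousAt.continuousWithinAt)
    (fun p hp => (hfd p hp _).neg.continuousAt.continuousWithinAt)
    (fun p hp => (hfd p (hIoo p hp) _).hasFDerivAt)
    (fun p hp => (hfd p (hIoo p hp) _).neg.hasFDerivAt)
    ((hcont.integrableOn_compact isCompact_Icc).congr_fun (fun p hp => (hdiv p hp).symm)
      measurableSet_Icc)

end Green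

lemma im_conj_map_mul_map (L : ℂ →L[ℝ] ℂ) (c d : ℂ) :
    (conj (L c) * L d).im = L.det * (conj c * d).im := by
  have hL : ∀ c : ℂ, L c = c.re * L 1 + c.im * L Complex.I := fun c => by
    conv_lhs => rw [show c = c.re • (1 : ℂ) + c.im • Complex.I by simp]
    rw [map_add, map_smul, map_smul, Complex.real_smul, Complex.real_smul]
  have hdet : L.det = (L 1).re * (L Complex.I).im - (L Complex.I).re * (L 1).im := by
    rw [ContinuousLinearMap.det, ← LinearMap.det_toMatrix Complex.basisOneI, Matrix.det_fin_two]
    simp [LinearMap.toMatrix_apply]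
  rw [hL c, hL d, hdet]
  simp
  ring

lemma det_restrictScalars_toSpanSingleton (c : ℂ) :
    ((ContinuousLinearMap.toSpanSingleton ℂ c).restrictScalars ℝ : ℂ →L[ℝ] ℂ).det =
      Complex.normSq c := by
  rw [← Algebra.norm_complex_apply, Algebra.norm_apply, ContinuousLinearMap.det]
  congr 1
  ext
  simp [mul_comm]

lemma det_fderiv_real_of_hasDerivAt {P : ℂ → ℂ} {c w : ℂ} (h : HasDerivAt P c w) :
    (fderiv ℝ P w).det = Complex.normSq c := by
  rw [(h.hasFDerivAt.restrictScalars ℝ).fderiv, det_restrictScalars_toSpanSingleton]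

lemma fderiv_real_apply_of_hasDerivAt {P : ℂ → ℂ} {c w : ℂ} (h : HasDerivAt P c w) (v : ℂ) :
    fderiv ℝ P w v = v * c := by
  rw [(h.hasFDerivAt.restrictScalars ℝ).fderiv]
  simp

lemma contDiff_circleMap_zero_uncurry {n : WithTop ℕ∞} :
    ContDiff ℝ n fun p : ℝ × ℝ => circleMap 0 p.1 p.2 := by
  simp only [circleMap, zero_add]
  exact (Complex.ofRealCLM.contDiff.comp contDiff_fst).mul
    ((Complex.ofRealCLM.contDiff.comp contDiff_snd).mul contDiff_const).cexp

lemma fderiv_circleMap_zero_uncurry (p : ℝ × ℝ) :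
    fderiv ℝ (fun p : ℝ × ℝ => circleMap 0 p.1 p.2) p (1, 0) = circleMap 0 1 p.2 ∧
      fderiv ℝ (fun p : ℝ × ℝ => circleMap 0 p.1 p.2) p (0, 1) =
        circleMap 0 p.1 p.2 * Complex.I := by
  have hd := (contDiff_circleMap_zero_uncurry (n := 1)).differentiable (by norm_num) p
  have hline := fun v => hd.hasFDerivAt.hasLineDerivAt v
  constructor
  · refine (hline (1, 0)).unique (?_ : HasDerivAt _ _ _)
    have := ((hasDerivAt_id (0 : ℝ)).const_add p.1).ofReal_comp.mul_const (circleMap 0 1 p.2)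
    simpa [circleMap] using this
  · refine (hline (0, 1)).unique (?_ : HasDerivAt _ _ _)
    have h : HasDerivAt (circleMap 0 p.1) (circleMap 0 p.1 p.2 * Complex.I) (p.2 + 0) := by
      simpa using hasDerivAt_circleMap 0 p.1 p.2
    simpa [Function.comp_def] using h.scomp (0 : ℝ) ((hasDerivAt_id (0 : ℝ)).const_add p.2)

lemma integral_ball_eq_integral_circleMap {E : Type*} [NormedAddCommGroup E] [NormedSpace ℝ E]
    (f : ℂ → E) (R : ℝ) :
    ∫ z in ball (0 : ℂ) R, f z =
      ∫ p in Icc ((0 : ℝ), -π) (R, π), p.1 • f (circleMap 0 p.1 p.2) := by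
  have hIcc : Icc ((0 : ℝ), -π) (R, π) =ᵐ[volume] (Ioo 0 R ×ˢ Ioo (-π) π : Set (ℝ × ℝ)) := by
    rw [Icc_prod_eq]
    exact (Measure.set_prod_ae_eq Ioo_ae_eq_Icc Ioo_ae_eq_Icc).symm
  have hsub : (Ioo 0 R ×ˢ Ioo (-π) π : Set (ℝ × ℝ)) ⊆ polarCoord.target := fun p hp =>
    ⟨hp.1.1, hp.2⟩
  rw [← integral_indicator measurableSet_ball, ← Complex.integral_comp_polarCoord_symm,
    setIntegral_congr_set hIcc]
  have hpolar : ∀ p, Complex.polarCoord.symm p = circleMap 0 p.1 p.2 := fun p => by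
    rw [Complex.polarCoord_symm_apply]
    simp [circleMap, Complex.exp_mul_I]
  refine (setIntegral_eq_of_subset_of_forall_sdiff_eq_zero
    polarCoord.open_target.measurableSet hsub ?_).trans
    (setIntegral_congr_fun (measurableSet_Ioo.prod measurableSet_Ioo) ?_)
  · rintro p ⟨⟨hp1, hp2⟩, hp⟩
    have : circleMap 0 p.1 p.2 ∉ ball (0 : ℂ) R := fun hb =>
      hp ⟨⟨hp1, by simpa [abs_of_pos (mem_Ioi.1 hp1)] using hb⟩, hp2⟩
    rw [hpolar, indicator_of_notMem this, smul_zero]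
  · rintro p ⟨hp1, -⟩
    have : circleMap 0 p.1 p.2 ∈ ball (0 : ℂ) R := by simp [abs_of_pos hp1.1, hp1.2]
    simp only [hpolar, indicator_of_mem this]

section DiscGreen

variable {U : ℂ → ℂ} {R : ℝ}

lemma fderiv_comp_circleMap_zero_uncurry {p : ℝ × ℝ}
    (hU : DifferentiableAt ℝ U (circleMap 0 p.1 p.2)) :
    fderiv ℝ (fun p : ℝ × ℝ => U (circleMap 0 p.1 p.2)) p (1, 0) =
        fderiv ℝ U (circleMap 0 p.1 p.2) (circleMap 0 1 p.2) ∧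
      fderiv ℝ (fun p : ℝ × ℝ => U (circleMap 0 p.1 p.2)) p (0, 1) =
        fderiv ℝ U (circleMap 0 p.1 p.2) (circleMap 0 p.1 p.2 * Complex.I) := by
  have hcomp := fderiv_comp p hU
    (contDiff_circleMap_zero_uncurry.differentiable (n := 1) (by norm_num) p)
  rw [Function.comp_def] at hcomp
  rw [hcomp, ContinuousLinearMap.comp_apply, ContinuousLinearMap.comp_apply,
    (fderiv_circleMap_zero_uncurry p).1, (fderiv_circleMap_zero_uncurry p).2]
  exact ⟨rfl, rfl⟩

lemma im_conj_circleMap_one_mul_circleMap_mul_I (r θ : ℝ) :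
    (conj (circleMap 0 1 θ) * (circleMap 0 r θ * Complex.I)).im = r := by
  have hexp : conj (Complex.exp (θ * Complex.I)) * Complex.exp (θ * Complex.I) = 1 := by
    rw [← Complex.normSq_eq_conj_mul_self, Complex.normSq_eq_norm_sq,
      Complex.norm_exp_ofReal_mul_I]
    simp
  have : conj (circleMap 0 1 θ) * (circleMap 0 r θ * Complex.I) = r * Complex.I := by
    simp only [circleMap, Complex.ofReal_one, one_mul, zero_add]
    linear_combination (r * Complex.I) * hexp
  rw [this]
  simp

lemma integral_ball_two_mul_det_fderiv (hR : 0 ≤ R)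
    (hU : ∀ z ∈ closedBall (0 : ℂ) R, ContDiffAt ℝ 2 U z) :
    ∫ z in ball (0 : ℂ) R, 2 * (fderiv ℝ U z).det =
      ∫ θ in -π..π, (conj (U (circleMap 0 R θ)) *
        fderiv ℝ U (circleMap 0 R θ) (circleMap 0 R θ * Complex.I)).im := by
  set V : ℝ × ℝ → ℂ := fun p => U (circleMap 0 p.1 p.2)
  have hπ : -π ≤ π := by linarith [Real.pi_pos]
  have hUm : ∀ p ∈ Icc ((0 : ℝ), -π) (R, π), ContDiffAt ℝ 2 U (circleMap 0 p.1 p.2) :=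
    fun p hp => hU _ (by simpa [abs_of_nonneg (show 0 ≤ p.1 from hp.1.1)] using hp.2.1)
  have hV : ∀ p ∈ Icc ((0 : ℝ), -π) (R, π),
      fderiv ℝ V p (1, 0) = fderiv ℝ U (circleMap 0 p.1 p.2) (circleMap 0 1 p.2) ∧
        fderiv ℝ V p (0, 1) =
          fderiv ℝ U (circleMap 0 p.1 p.2) (circleMap 0 p.1 p.2 * Complex.I) := fun p hp =>
    fderiv_comp_circleMap_zero_uncurry ((hUm p hp).differentiableAt (by norm_num))
  have hperiod : ∀ x, circleMap 0 x π = circleMap 0 x (-π) := fun x => by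
    rw [← periodic_circleMap 0 x (-π)]
    ring_nf
  have hdet : ∀ p ∈ Icc ((0 : ℝ), -π) (R, π),
      2 * (conj (fderiv ℝ V p (1, 0)) * fderiv ℝ V p (0, 1)).im =
        p.1 • (2 * (fderiv ℝ U (circleMap 0 p.1 p.2)).det) := fun p hp => by
    rw [(hV p hp).1, (hV p hp).2, im_conj_map_mul_map,
      im_conj_circleMap_one_mul_circleMap_mul_I, smul_eq_mul]
    ring
  have hsides : ∫ x in (0 : ℝ)..R, -(conj (V (x, π)) * fderiv ℝ V (x, π) (1, 0)).im =
      ∫ x in (0 : ℝ)..R, -(conj (V (x, -π)) * fderiv ℝ V (x, -π) (1, 0)).im := by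
    refine intervalIntegral.integral_congr fun x hx => ?_
    rw [uIcc_of_le hR] at hx
    simp only [(hV (x, π) ⟨⟨hx.1, hπ⟩, ⟨hx.2, le_rfl⟩⟩).1,
      (hV (x, -π) ⟨⟨hx.1, le_rfl⟩, ⟨hx.2, hπ⟩⟩).1, V, hperiod]
  have hcentre : ∫ y in -π..π, (conj (V (0, y)) * fderiv ℝ V (0, y) (0, 1)).im = 0 := by
    rw [← intervalIntegral.integral_zero (a := -π) (b := π) (μ := volume)]
    refine intervalIntegral.integral_congr fun y hy => ?_
    rw [uIcc_of_le hπ] at hy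
    simp [(hV (0, y) ⟨⟨le_rfl, hy.1⟩, ⟨hR, hy.2⟩⟩).2]
  have hcircle : ∫ y in -π..π, (conj (V (R, y)) * fderiv ℝ V (R, y) (0, 1)).im =
      ∫ θ in -π..π, (conj (U (circleMap 0 R θ)) *
        fderiv ℝ U (circleMap 0 R θ) (circleMap 0 R θ * Complex.I)).im := by
    refine intervalIntegral.integral_congr fun y hy => ?_
    rw [uIcc_of_le hπ] at hy
    simp only [(hV (R, y) ⟨⟨hR, hy.1⟩, ⟨le_rfl, hy.2⟩⟩).2, V]
  have hgreen := integral_Icc_im_conj_fderiv_mul_fderiv (V := V) (Prod.mk_le_mk.2 ⟨hR, hπ⟩)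
    fun p hp => (hUm p hp).comp p contDiff_circleMap_zero_uncurry.contDiffAt
  rw [integral_ball_eq_integral_circleMap, ← setIntegral_congr_fun measurableSet_Icc hdet, hgreen,
    hsides, hcentre, hcircle, sub_self, zero_add, sub_zero]

end DiscGreen

lemma isOpen_image_of_injOn {g : ℂ → ℂ} {U : Set ℂ} (hU : IsOpen U) (hg : DifferentiableOn ℂ g U)
    (hinj : InjOn g U) : IsOpen (g '' U) := by
  rw [isOpen_iff_mem_nhds]
  rintro _ ⟨z, hz, rfl⟩
  obtain ⟨r, hr, hball⟩ := Metric.isOpen_iff.1 hU z hz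
  rcases ((hg.mono hball).analyticOnNhd isOpen_ball).is_constant_or_isOpen
    (convex_ball z r).isPreconnected with ⟨w, hw⟩ | hopen
  · have hz' : z + (r / 2 : ℝ) ∈ ball z r := by
      simpa [abs_of_pos hr] using hr
    have := hinj hz (hball hz') ((hw z (mem_ball_self hr)).trans (hw _ hz').symm)
    simp [hr.ne'] at this
  · exact Filter.mem_of_superset ((hopen _ subset_rfl isOpen_ball).mem_nhds
      (mem_image_of_mem g (mem_ball_self hr))) (image_mono hball)

section AreaInequality

open scoped Manifold in
lemma exists_contDiff_eventuallyEq {K O : Set ℂ} (hK : IsClosed K) (hO : IsOpen O) (hKO : K ⊆ O)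
    {P : ℂ → ℂ} (hP : DifferentiableOn ℂ P Kᶜ) :
    ∃ U : ℂ → ℂ, ContDiff ℝ 2 U ∧ ∀ w ∉ O, U =ᶠ[𝓝 w] P := by
  obtain ⟨κ, hκK, hκO, -⟩ := exists_contMDiffMap_zero_one_nhds_of_isClosed (n := 2) 𝓘(ℝ, ℂ) hK
    hO.isClosed_compl (disjoint_compl_right_iff_subset.2 hKO)
  rw [eventually_nhdsSet_iff_forall] at hκK hκO
  refine ⟨fun w => (κ w : ℂ) * P w, contDiff_iff_contDiffAt.2 fun w => ?_, fun w hw => ?_⟩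
  · by_cases hw : w ∈ K
    · refine (contDiffAt_const (c := 0)).congr_of_eventuallyEq ?_
      filter_upwards [hκK w hw] with x hx
      simp [hx]
    · have : ContDiffAt ℂ 2 P w :=
        (hP.contDiffOn hK.isOpen_compl).contDiffAt (hK.isOpen_compl.mem_nhds hw)
      exact (Complex.ofRealCLM.contDiff.comp κ.contMDiff.contDiff).contDiffAt.mul
        (this.restrict_scalars ℝ)
  · filter_upwards [hκO w hw] with x hx
    simp [hx]

variable {U U' : ℂ → ℂ}

lemma continuous_two_mul_det_fderiv (hU : ContDiff ℝ 2 U) :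
    Continuous fun w => 2 * (fderiv ℝ U w).det :=
  continuous_const.mul
    (ContinuousLinearMap.continuous_det.comp (hU.continuous_fderiv (by norm_num)))

lemma integral_two_mul_det_fderiv_nonpos {Ω : Set ℂ} (hU : ContDiff ℝ 2 U)
    (hΩ : MeasurableSet Ω) (hbdd : Bornology.IsBounded Ω)
    (hU' : ∀ w ∉ Ω, HasDerivAt U (U' w) w)
    (hdec : Tendsto (fun w => ‖U w‖ * ‖w‖ * ‖U' w‖) (cocompact ℂ) (𝓝 0)) :
    ∫ w in Ω, 2 * (fderiv ℝ U w).det ≤ 0 := by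
  have hpi := Real.pi_pos
  refine le_of_forall_pos_le_add fun ε hε => ?_
  obtain ⟨K, hK, hdecK⟩ := hasBasis_cocompact.eventually_iff.1
    ((hdec.eventually (gt_mem_nhds (show 0 < ε / (2 * π) by positivity))).mono fun _ h => h.le)
  obtain ⟨R, hR0, hR⟩ := (hK.isBounded.union hbdd).subset_ball_lt 0 0
  have hcircle : (∫ θ in -π..π, (conj (U (circleMap 0 R θ)) *
      fderiv ℝ U (circleMap 0 R θ) (circleMap 0 R θ * Complex.I)).im) ≤ ε := by
    refine (Real.le_norm_self _).trans ((intervalIntegral.norm_integral_le_of_norm_le_const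
      (C := ε / (2 * π)) fun θ _ => ?_).trans_eq ?_)
    · have hout : circleMap 0 R θ ∉ ball 0 R := by simp [abs_of_pos hR0]
      rw [fderiv_real_apply_of_hasDerivAt (hU' _ fun h => hout (hR (Or.inr h)))]
      refine (Complex.abs_im_le_norm _).trans (le_trans (le_of_eq ?_)
        (hdecK fun h => hout (hR (Or.inl h))))
      simp [mul_assoc]
    · rw [abs_of_pos (by linarith)]
      field_simp
      ring
  have hdet : 0 ≤ ∫ w in ball (0 : ℂ) R \ Ω, 2 * (fderiv ℝ U w).det := by
    refine setIntegral_nonneg (measurableSet_ball.diff hΩ) fun w hw => ?_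
    rw [det_fderiv_real_of_hasDerivAt (hU' w hw.2)]
    exact mul_nonneg zero_le_two (Complex.normSq_nonneg _)
  have hint : IntegrableOn (fun w => 2 * (fderiv ℝ U w).det) (ball 0 R) :=
    ((continuous_two_mul_det_fderiv hU).continuousOn.integrableOn_compact
      (isCompact_closedBall 0 R)).mono_set ball_subset_closedBall
  have hsplit := integral_inter_add_sdiff hΩ hint
  rw [inter_eq_self_of_subset_right (subset_union_right.trans hR),
    integral_ball_two_mul_det_fderiv hR0.le fun z _ => hU.contDiffAt] at hsplit
  linarith

variable {g : ℂ → ℂ} {r s : ℝ}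

lemma integral_image_ball_two_mul_det_fderiv (hg : DifferentiableOn ℂ g (ball 0 r))
    (hinj : InjOn g (ball 0 r)) (hs0 : 0 ≤ s) (hsr : s < r) (hU : ContDiff ℝ 2 U) :
    ∫ w in g '' ball 0 s, 2 * (fderiv ℝ U w).det =
      ∫ θ in -π..π, (conj (U (g (circleMap 0 s θ))) *
        fderiv ℝ (U ∘ g) (circleMap 0 s θ) (circleMap 0 s θ * Complex.I)).im := by
  have hsub := ball_subset_ball (x := (0 : ℂ)) hsr.le
  have hgd : ∀ z ∈ ball (0 : ℂ) r, HasDerivAt g (deriv g z) z := fun z hz =>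
    (hg.differentiableAt (isOpen_ball.mem_nhds hz)).hasDerivAt
  have hgC : ∀ z ∈ ball (0 : ℂ) r, ContDiffAt ℝ 2 g z := fun z hz =>
    ((hg.contDiffOn isOpen_ball).contDiffAt (isOpen_ball.mem_nhds hz)).restrict_scalars ℝ
  have hdet : ∀ z ∈ ball (0 : ℂ) s, |(fderiv ℝ g z).det| • (2 * (fderiv ℝ U (g z)).det) =
      2 * (fderiv ℝ (U ∘ g) z).det := fun z hz => by
    have hz' := hgd z (hsub hz)
    rw [fderiv_comp z ((hU.differentiable (by norm_num)) _)
      ((hgC z (hsub hz)).differentiableAt (by norm_num)), det_fderiv_real_of_hasDerivAt hz',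
      abs_of_nonneg (Complex.normSq_nonneg _), ← det_fderiv_real_of_hasDerivAt hz', smul_eq_mul]
    simp only [ContinuousLinearMap.det, ContinuousLinearMap.toLinearMap_comp, LinearMap.det_comp]
    ring
  rw [integral_image_eq_integral_abs_det_fderiv_smul volume measurableSet_ball
    (fun z hz => ((hgC z (hsub hz)).differentiableAt
      (by norm_num)).hasFDerivAt.hasFDerivWithinAt) (hinj.mono hsub),
    setIntegral_congr_fun measurableSet_ball hdet, integral_ball_two_mul_det_fderiv hs0
      fun z hz => hU.contDiffAt.comp z (hgC z (closedBall_subset_ball hsr hz))]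
  rfl

-- The integral is twice the area enclosed by `P ∘ g` on the circle of radius `s`; by Green's
-- formula outside that circle it is minus twice the area of the image of the exterior under `P`.
lemma integral_re_conj_mul_deriv_nonpos (hg : DifferentiableOn ℂ g (ball 0 r))
    (hinj : InjOn g (ball 0 r)) {ρ : ℝ} (hρ : 0 ≤ ρ) (hρs : ρ < s) (hsr : s < r) {P P' : ℂ → ℂ}
    (hP : ∀ w ∉ g '' closedBall 0 ρ, HasDerivAt P (P' w) w)
    (hdec : Tendsto (fun w => ‖P w‖ * ‖w‖ * ‖P' w‖) (cocompact ℂ) (𝓝 0)) :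
    ∫ θ in -π..π, (conj (P (g (circleMap 0 s θ))) *
      (P' (g (circleMap 0 s θ)) * deriv g (circleMap 0 s θ) * circleMap 0 s θ)).re ≤ 0 := by
  obtain ⟨t, hρt, hts⟩ := exists_between hρs
  have hcompact : ∀ {t : ℝ}, t < r → IsCompact (g '' closedBall 0 t) := fun ht =>
    (isCompact_closedBall _ _).image_of_continuousOn
      (hg.continuousOn.mono (closedBall_subset_ball ht))
  have hopen : ∀ {t : ℝ}, t < r → IsOpen (g '' ball 0 t) := fun ht =>
    isOpen_image_of_injOn isOpen_ball (hg.mono (ball_subset_ball ht.le))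
      (hinj.mono (ball_subset_ball ht.le))
  have hsub : g '' closedBall 0 ρ ⊆ g '' ball 0 t := image_mono (closedBall_subset_ball hρt)
  obtain ⟨U, hU, hUP⟩ := exists_contDiff_eventuallyEq (hcompact (hρs.trans hsr)).isClosed
    (hopen (hts.trans hsr)) hsub fun w hw => (hP w hw).differentiableAt.differentiableWithinAt
  have hU' : ∀ w ∉ g '' ball 0 t, HasDerivAt U (P' w) w := fun w hw =>
    (hP w fun h => hw (hsub h)).congr_of_eventuallyEq (hUP w hw)
  have hdecU : Tendsto (fun w => ‖U w‖ * ‖w‖ * ‖P' w‖) (cocompact ℂ) (𝓝 0) := by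
    refine hdec.congr' ?_
    filter_upwards [(hcompact (hts.trans hsr)).compl_mem_cocompact] with w hw
    rw [(hUP w fun h => hw (image_mono ball_subset_closedBall h)).eq_of_nhds]
  have harea := integral_two_mul_det_fderiv_nonpos hU (hopen hsr).measurableSet
    ((hcompact hsr).isBounded.subset (image_mono ball_subset_closedBall))
    (fun w hw => hU' w fun h => hw (image_mono (ball_subset_ball hts.le) h)) hdecU
  rw [integral_image_ball_two_mul_det_fderiv hg hinj (hρ.trans hρs.le) hsr hU] at harea
  refine (intervalIntegral.integral_congr fun θ _ => ?_).trans_le harea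
  have hz : ‖circleMap 0 s θ‖ = s := by simp [abs_of_pos (hρ.trans_lt hρs)]
  have hzr : circleMap 0 s θ ∈ ball 0 r := by simpa [hz] using hsr
  have hgz : g (circleMap 0 s θ) ∉ g '' ball 0 t := by
    rintro ⟨y, hy, hyz⟩
    rw [hinj (ball_subset_ball (hts.trans hsr).le hy) hzr hyz, mem_ball_zero_iff, hz] at hy
    exact hts.not_gt hy
  have hcomp := (hU' _ hgz).comp _ (hg.differentiableAt (isOpen_ball.mem_nhds hzr)).hasDerivAt
  simp only [fderiv_real_apply_of_hasDerivAt hcomp, (hUP _ hgz).eq_of_nhds, ← Complex.mul_I_im]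
  ring_nf

end AreaInequality

/-! ### Laurent coefficients -/

section Fourier

/-- The exponential monomial `e^{ikθ}`, as a function of the real angle `θ`. -/
def expMonomial (k : ℤ) (θ : ℝ) : ℂ := Complex.exp (k * θ * Complex.I)

lemma continuous_expMonomial (k : ℤ) : Continuous (expMonomial k) := by
  unfold expMonomial
  fun_prop

lemma norm_expMonomial (k : ℤ) (θ : ℝ) : ‖expMonomial k θ‖ = 1 := by
  simpa [expMonomial] using Complex.norm_exp_ofReal_mul_I (k * θ)

lemma expMonomial_mul (k l : ℤ) (θ : ℝ) :
    expMonomial k θ * expMonomial l θ = expMonomial (k + l) θ := by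
  simp only [expMonomial, ← Complex.exp_add, Int.cast_add]
  ring_nf

lemma conj_expMonomial (k : ℤ) (θ : ℝ) : conj (expMonomial k θ) = expMonomial (-k) θ := by
  simp [expMonomial, ← Complex.exp_conj]

lemma hasDerivAt_expMonomial (k : ℤ) (θ : ℝ) :
    HasDerivAt (expMonomial k) (k * Complex.I * expMonomial k θ) θ := by
  have : HasDerivAt (fun θ : ℝ => (k * θ * Complex.I : ℂ)) (k * Complex.I) θ := by
    simpa using ((Complex.ofRealCLM.hasDerivAt (x := θ)).const_mul (k : ℂ)).mul_const Complex.I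
  exact this.cexp.congr_deriv (mul_comm _ _)

lemma expMonomial_pi (k : ℤ) : expMonomial k π = expMonomial k (-π) := by
  simp only [expMonomial]
  rw [Complex.exp_eq_exp_iff_exists_int]
  exact ⟨k, by push_cast; ring⟩

lemma circleMap_zpow_eq_mul_expMonomial (s θ : ℝ) (k : ℤ) :
    circleMap 0 s θ ^ k = (s : ℂ) ^ k * expMonomial k θ := by
  rw [circleMap, zero_add, mul_zpow, expMonomial, mul_assoc (k : ℂ), Complex.exp_int_mul]

lemma integral_expMonomial (k : ℤ) :
    ∫ θ in -π..π, expMonomial k θ = if k = 0 then (2 * π : ℂ) else 0 := by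
  split_ifs with h
  · simp only [h, expMonomial, Int.cast_zero, zero_mul, Complex.exp_zero,
      intervalIntegral.integral_const, sub_neg_eq_add, Complex.real_smul, Complex.ofReal_add,
      mul_one]
    ring
  · have hk : (k : ℂ) * Complex.I ≠ 0 := mul_ne_zero (Int.cast_ne_zero.2 h) Complex.I_ne_zero
    have hprim : ∀ θ ∈ uIcc (-π) π,
        HasDerivAt (fun θ => expMonomial k θ / (k * Complex.I)) (expMonomial k θ) θ := fun θ _ => by
      simpa only [mul_div_cancel_left₀ _ hk] using
        (hasDerivAt_expMonomial k θ).div_const (k * Complex.I)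
    rw [intervalIntegral.integral_eq_sub_of_hasDerivAt hprim
      ((continuous_expMonomial k).intervalIntegrable _ _), expMonomial_pi, sub_self]

variable {c : ℤ → ℂ} {B H F : ℝ → ℂ}

lemma continuous_of_hasSum_expMonomial (hc : Summable fun k => ‖c k‖)
    (hB : ∀ θ, HasSum (fun k => c k * expMonomial k θ) (B θ)) : Continuous B := by
  rw [show B = fun θ => ∑' k, c k * expMonomial k θ from funext fun θ => (hB θ).tsum_eq.symm]
  exact continuous_tsum (fun k => continuous_const.mul (continuous_expMonomial k)) hc
    fun k θ => by simp [norm_expMonomial]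

lemma hasSum_integral_mul_expMonomial (hc : Summable fun k => ‖c k‖) (hF : Continuous F)
    (hB : ∀ θ, HasSum (fun k => c k * expMonomial k θ) (B θ)) :
    HasSum (fun k => c k * ∫ θ in -π..π, F θ * expMonomial k θ) (∫ θ in -π..π, F θ * B θ) := by
  have := intervalIntegral.hasSum_integral_of_dominated_convergence (μ := volume)
    (a := -π) (b := π) (F := fun k θ => F θ * (c k * expMonomial k θ)) (f := fun θ => F θ * B θ)
    (fun k θ => ‖F θ‖ * ‖c k‖)
    (fun k => (hF.mul (continuous_const.mul (continuous_expMonomial k))).aestronglyMeasurable)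
    (fun k => Eventually.of_forall fun θ _ => by simp [norm_expMonomial])
    (Eventually.of_forall fun θ _ => hc.mul_left _)
    (by
      simp only [tsum_mul_left]
      exact (hF.norm.mul continuous_const).intervalIntegrable _ _)
    (Eventually.of_forall fun θ _ => (hB θ).mul_left _)
  refine this.congr_fun fun k => ?_
  simp only [← intervalIntegral.integral_const_mul, mul_left_comm]

lemma integral_expMonomial_neg_mul (hc : Summable fun k => ‖c k‖)
    (hB : ∀ θ, HasSum (fun k => c k * expMonomial k θ) (B θ)) (k : ℤ) :
    ∫ θ in -π..π, expMonomial (-k) θ * B θ = 2 * π * c k := by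
  rw [← (hasSum_integral_mul_expMonomial hc (continuous_expMonomial (-k)) hB).tsum_eq,
    tsum_eq_single k fun l hl => by
      rw [funext (expMonomial_mul (-k) l), integral_expMonomial, if_neg (by lia), mul_zero]]
  rw [funext (expMonomial_mul (-k) k), integral_expMonomial, if_pos (neg_add_cancel k)]
  ring

lemma intCast_mul_integral_expMonomial_neg_mul (hB : Continuous B)
    (hH : ∀ θ, HasDerivAt H (Complex.I * B θ) θ) (hper : H π = H (-π)) (k : ℤ) :
    k * ∫ θ in -π..π, expMonomial (-k) θ * H θ = ∫ θ in -π..π, expMonomial (-k) θ * B θ := by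
  have hparts := intervalIntegral.integral_mul_deriv_eq_deriv_mul (a := -π) (b := π)
    (fun θ _ => hasDerivAt_expMonomial (-k) θ) (fun θ _ => hH θ)
    ((continuous_const.mul (continuous_expMonomial _)).intervalIntegrable _ _)
    ((continuous_const.mul hB).intervalIntegrable _ _)
  have hB' : ∀ θ, expMonomial (-k) θ * (Complex.I * B θ) =
      Complex.I * (expMonomial (-k) θ * B θ) := fun θ => by ring
  have hH' : ∀ θ, (-k : ℤ) * Complex.I * expMonomial (-k) θ * H θ =
      -(k * Complex.I) * (expMonomial (-k) θ * H θ) := fun θ => by push_cast; ring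
  simp only [hB', hH', intervalIntegral.integral_const_mul, hper, expMonomial_pi] at hparts
  refine mul_left_cancel₀ Complex.I_ne_zero ?_
  linear_combination -hparts

lemma hasSum_integral_conj_mul (hc : Summable fun k => ‖c k‖) (hc0 : c 0 = 0)
    (hB : ∀ θ, HasSum (fun k => c k * expMonomial k θ) (B θ))
    (hH : ∀ θ, HasDerivAt H (Complex.I * B θ) θ) (hper : H π = H (-π)) :
    HasSum (fun k => 2 * π * (‖c k‖ ^ 2 / k)) (∫ θ in -π..π, (conj (H θ) * B θ).re) := by
  have hHc : Continuous H := continuous_iff_continuousAt.2 fun θ => (hH θ).continuousAt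
  have hBc := continuous_of_hasSum_expMonomial hc hB
  have hconj : Continuous fun θ => conj (H θ) := Complex.continuous_conj.comp hHc
  have hterm : ∀ k, c k * ∫ θ in -π..π, conj (H θ) * expMonomial k θ =
      (2 * π * (‖c k‖ ^ 2 / k) : ℝ) := fun k => by
    rcases eq_or_ne k 0 with rfl | hk
    · simp [hc0]
    have hk' : (k : ℂ) ≠ 0 := Int.cast_ne_zero.2 hk
    have hcoeff := integral_expMonomial_neg_mul hc hB k
    rw [← intCast_mul_integral_expMonomial_neg_mul hBc hH hper, mul_comm, ← eq_div_iff hk']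
      at hcoeff
    have hswap : (fun θ => conj (H θ) * expMonomial k θ) =
        fun θ => conj (expMonomial (-k) θ * H θ) := funext fun θ => by
      rw [map_mul, conj_expMonomial, neg_neg, mul_comm]
    have hnorm : c k * conj (c k) = (‖c k‖ : ℂ) ^ 2 := Complex.mul_conj' _
    rw [hswap, intervalIntegral.intervalIntegral_conj, hcoeff]
    simp only [map_mul, map_div₀, Complex.conj_ofReal, map_ofNat, map_intCast]
    push_cast
    rw [← hnorm]
    ring
  have hsum := Complex.reCLM.hasSum (hasSum_integral_mul_expMonomial hc hconj hB)
  simp only [hterm] at hsum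
  have hre : ∫ θ in -π..π, (conj (H θ) * B θ).re = (∫ θ in -π..π, conj (H θ) * B θ).re :=
    Complex.reCLM.intervalIntegral_comp_comm ((hconj.mul hBc).intervalIntegrable (-π) π)
  rwa [hre]

end Fourier

lemma laurent_tsum_nonpos {g : ℂ → ℂ} {r s ρ : ℝ} (hg : DifferentiableOn ℂ g (ball 0 r))
    (hinj : InjOn g (ball 0 r)) (hρ : 0 ≤ ρ) (hρs : ρ < s) (hsr : s < r) {P P' : ℂ → ℂ}
    (hP : ∀ w ∉ g '' closedBall 0 ρ, HasDerivAt P (P' w) w)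
    (hdec : Tendsto (fun w => ‖P w‖ * ‖w‖ * ‖P' w‖) (cocompact ℂ) (𝓝 0))
    {c : ℤ → ℂ} (hc0 : c 0 = 0)
    (hc : ∀ z, ‖z‖ = s → HasSum (fun k => c k * z ^ k) (P' (g z) * deriv g z * z)) :
    Summable (fun k => ‖c k * (s : ℂ) ^ k‖ ^ 2 / k) ∧ ∑' k, ‖c k * (s : ℂ) ^ k‖ ^ 2 / k ≤ 0 := by
  have hs := hρ.trans_lt hρs
  have hcircle : ∀ θ, ‖circleMap 0 s θ‖ = s := fun θ => by simp [abs_of_pos hs]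
  have hderiv : ∀ θ, HasDerivAt (fun θ => P (g (circleMap 0 s θ))) (Complex.I *
      (P' (g (circleMap 0 s θ)) * deriv g (circleMap 0 s θ) * circleMap 0 s θ)) θ := fun θ => by
    have hz : circleMap 0 s θ ∈ ball 0 r := by simpa [hcircle] using hsr
    have hgz : g (circleMap 0 s θ) ∉ g '' closedBall 0 ρ := by
      rintro ⟨y, hy, hyz⟩
      rw [hinj (closedBall_subset_ball (hρs.trans hsr) hy) hz hyz, mem_closedBall_zero_iff,
        hcircle] at hy
      exact hρs.not_ge hy
    refine (((hP _ hgz).comp _ (hg.differentiableAt (isOpen_ball.mem_nhds hz)).hasDerivAt).scomp θ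
      (hasDerivAt_circleMap 0 s θ)).congr_deriv ?_
    simp only [smul_eq_mul]
    ring
  have hperiod : circleMap 0 s π = circleMap 0 s (-π) := by
    rw [← periodic_circleMap 0 s (-π)]
    ring_nf
  have hcs : Summable fun k => ‖c k * (s : ℂ) ^ k‖ := by
    simpa [circleMap] using (hc _ (hcircle 0)).summable.norm
  have hint := hasSum_integral_conj_mul (c := fun k => c k * (s : ℂ) ^ k) hcs (by simp [hc0])
    (fun θ => by simpa only [circleMap_zpow_eq_mul_expMonomial, mul_assoc] using hc _ (hcircle θ))
    hderiv (congrArg (fun z => P (g z)) hperiod)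
  have harea := integral_re_conj_mul_deriv_nonpos hg hinj hρ hρs hsr hP hdec
  have hsum := hint.mul_left (2 * π)⁻¹
  simp only [inv_mul_cancel_left₀ (by positivity : 2 * π ≠ 0)] at hsum
  exact ⟨hsum.summable,
    hsum.tsum_eq.trans_le (mul_nonpos_of_nonneg_of_nonpos (by positivity) harea)⟩

section TaylorCoeff

/-- The `n`-th Taylor coefficient at the origin of a function of one complex variable. -/
def taylorCoeff (h : ℂ → ℂ) (n : ℕ) : ℂ := (n.factorial : ℂ)⁻¹ * iteratedDeriv n h 0

variable {h k : ℂ → ℂ} {r : ℝ}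

lemma taylorCoeff_zero (h : ℂ → ℂ) : taylorCoeff h 0 = h 0 := by simp [taylorCoeff]

lemma taylorCoeff_one (h : ℂ → ℂ) : taylorCoeff h 1 = deriv h 0 := by simp [taylorCoeff]

lemma taylorCoeff_deriv (h : ℂ → ℂ) (n : ℕ) :
    taylorCoeff (deriv h) n = (n + 1) * taylorCoeff h (n + 1) := by
  have hfact : (n.factorial : ℂ) ≠ 0 := by exact_mod_cast n.factorial_ne_zero
  have hsucc : (n + 1 : ℂ) ≠ 0 := by exact_mod_cast n.succ_ne_zero
  rw [taylorCoeff, taylorCoeff, ← iteratedDeriv_succ', Nat.factorial_succ]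
  push_cast
  field_simp

lemma hasSum_taylorCoeff (hh : DifferentiableOn ℂ h (ball 0 r)) {z : ℂ} (hz : ‖z‖ < r) :
    HasSum (fun n => taylorCoeff h n * z ^ n) (h z) := by
  have := Complex.hasSum_taylorSeries_on_ball (f := h) (c := 0) (z := z) hh (by simpa using hz)
  refine this.congr_fun fun n => ?_
  simp only [taylorCoeff, sub_zero, smul_eq_mul]
  ring

lemma summable_norm_taylorCoeff_mul_pow (hh : DifferentiableOn ℂ h (ball 0 r)) {s : ℝ}
    (hs : 0 ≤ s) (hsr : s < r) : Summable fun n => ‖taylorCoeff h n‖ * s ^ n := by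
  have hs' : ‖(s : ℂ)‖ = s := by simp [abs_of_nonneg hs]
  simpa only [norm_mul, norm_pow, hs'] using
    (hasSum_taylorCoeff hh (hs'.trans_lt hsr)).summable.norm

lemma hasSum_nat_mul_taylorCoeff (hh : DifferentiableOn ℂ h (ball 0 r)) {z : ℂ} (hz : ‖z‖ < r) :
    HasSum (fun n : ℕ => n * taylorCoeff h n * z ^ n) (z * deriv h z) := by
  rw [← hasSum_nat_add_iff' 1]
  simp only [Finset.range_one, Finset.sum_singleton, Nat.cast_zero, zero_mul, sub_zero]
  refine ((hasSum_taylorCoeff (hh.deriv isOpen_ball) hz).mul_left z).congr_fun fun n => ?_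
  rw [taylorCoeff_deriv]
  push_cast
  ring

lemma hasFPowerSeriesAt_ofScalars_of_hasSum {c : ℕ → ℂ} (hr : 0 < r)
    (hc : ∀ z : ℂ, ‖z‖ < r → HasSum (fun n => c n * z ^ n) (h z)) :
    HasFPowerSeriesAt h (FormalMultilinearSeries.ofScalars ℂ c) 0 := by
  lift r to NNReal using hr.le
  have hr2 : ((r / 2 : NNReal) : ℝ) < r := by
    rw [NNReal.coe_div, NNReal.coe_ofNat]
    linarith
  refine ⟨(r / 2 : NNReal), ?_, by simpa [pos_iff_ne_zero] using hr, fun {y} hy => ?_⟩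
  · refine FormalMultilinearSeries.le_radius_of_summable_norm _ ?_
    have := (hc (r / 2 : NNReal) (by simpa using hr2)).summable.norm
    simpa [FormalMultilinearSeries.ofScalars_norm] using this
  · rw [Metric.eball_coe, mem_ball_zero_iff] at hy
    simpa [FormalMultilinearSeries.ofScalars_apply_eq, mul_comm] using hc y (hy.trans hr2)

lemma taylorCoeff_eq_of_hasSum {c : ℕ → ℂ} (hr : 0 < r)
    (hc : ∀ z : ℂ, ‖z‖ < r → HasSum (fun n => c n * z ^ n) (h z)) (n : ℕ) :
    taylorCoeff h n = c n := by
  have hfp := hasFPowerSeriesAt_ofScalars_of_hasSum hr hc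
  have hfp' := hfp.analyticAt.hasFPowerSeriesAt
  rw [← FormalMultilinearSeries.ofScalars_series_injective ℂ ℂ
    (hfp'.eq_formalMultilinearSeries hfp)]
  exact (div_eq_inv_mul _ _).symm

lemma taylorCoeff_congr (hr : 0 < r) (hh : DifferentiableOn ℂ h (ball 0 r))
    (hk : ∀ z : ℂ, ‖z‖ < r → h z = k z) (n : ℕ) : taylorCoeff k n = taylorCoeff h n :=
  taylorCoeff_eq_of_hasSum hr (fun z hz => by rw [← hk z hz]; exact hasSum_taylorCoeff hh hz) n

lemma taylorCoeff_mul (hr : 0 < r) (hh : DifferentiableOn ℂ h (ball 0 r))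
    (hk : DifferentiableOn ℂ k (ball 0 r)) (n : ℕ) :
    taylorCoeff (fun z => h z * k z) n =
      ∑ p ∈ Finset.HasAntidiagonal.antidiagonal n, taylorCoeff h p.1 * taylorCoeff k p.2 := by
  refine taylorCoeff_eq_of_hasSum
    (c := fun n => ∑ p ∈ Finset.HasAntidiagonal.antidiagonal n,
      taylorCoeff h p.1 * taylorCoeff k p.2) hr (fun z hz => ?_) n
  have hhz := hasSum_taylorCoeff hh hz
  have hkz := hasSum_taylorCoeff hk hz
  have hprod := (summable_norm_sum_mul_antidiagonal_of_summable_norm hhz.summable.norm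
    hkz.summable.norm).of_norm.hasSum
  rw [← tsum_mul_tsum_eq_tsum_sum_antidiagonal_of_summable_norm hhz.summable.norm
    hkz.summable.norm, hhz.tsum_eq, hkz.tsum_eq] at hprod
  refine hprod.congr_fun fun n => ?_
  rw [Finset.sum_mul]
  refine Finset.sum_congr rfl fun p hp => ?_
  rw [← Finset.HasAntidiagonal.mem_antidiagonal.1 hp]
  ring

lemma exists_eq_mul_exp (hh : DifferentiableOn ℂ h (ball 0 r)) (h0 : ∀ z ∈ ball 0 r, h z ≠ 0) :
    ∃ q : ℂ → ℂ, DifferentiableOn ℂ q (ball 0 r) ∧ q 0 = 0 ∧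
      ∀ z ∈ ball 0 r, h z = h 0 * Complex.exp (q z) := by
  obtain ⟨q, hq0, hq⟩ := ((hh.deriv isOpen_ball).div hh h0).isExactOn_ball.with_val_at 0 0
  refine ⟨q, fun z hz => (hq z hz).differentiableAt.differentiableWithinAt, hq0, fun z hz => ?_⟩
  have hderiv : ∀ z ∈ ball 0 r, HasDerivAt (fun z => h z * Complex.exp (-q z)) 0 z := fun z hz => by
    have := (hh.differentiableAt (isOpen_ball.mem_nhds hz)).hasDerivAt.mul (hq z hz).neg.cexp
    refine this.congr_deriv ?_
    simp only [Pi.div_apply]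
    field_simp [h0 z hz]
    ring
  have hconst := isOpen_ball.is_const_of_deriv_eq_zero (convex_ball 0 r).isPreconnected
    (fun z hz => (hderiv z hz).differentiableAt.differentiableWithinAt)
    (fun z hz => (hderiv z hz).deriv) hz (mem_ball_self (pos_of_mem_ball hz))
  simp only [hq0, neg_zero, Complex.exp_zero, mul_one] at hconst
  rw [← hconst, mul_assoc, ← Complex.exp_add, neg_add_cancel, Complex.exp_zero, mul_one]

end TaylorCoeff

/-! ### Univalent functions -/

section Injective

variable {g : ℂ → ℂ} {U : Set ℂ}

lemma continuousOn_invFunOn (hU : IsOpen U) (hg : DifferentiableOn ℂ g U) (hinj : InjOn g U) :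
    ContinuousOn (Function.invFunOn g U) (g '' U) := by
  have hleft : ∀ z ∈ U, Function.invFunOn g U (g z) = z := fun z hz => hinj.leftInvOn_invFunOn hz
  refine continuousOn_iff'.2 fun t ht => ⟨g '' (U ∩ t), isOpen_image_of_injOn (hU.inter ht)
    (hg.mono inter_subset_left) (hinj.mono inter_subset_left), ?_⟩
  ext w
  constructor
  · rintro ⟨hw, z, hz, rfl⟩
    exact ⟨⟨z, ⟨hz, by simpa [hleft z hz] using hw⟩, rfl⟩, z, hz, rfl⟩
  · rintro ⟨⟨z, ⟨hz, hzt⟩, rfl⟩, -⟩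
    exact ⟨by simpa [hleft z hz] using hzt, z, hz, rfl⟩

lemma eventually_deriv_ne_zero_of_injOn (hU : IsOpen U) (hg : DifferentiableOn ℂ g U)
    (hinj : InjOn g U) {z : ℂ} (hz : z ∈ U) : ∀ᶠ y in 𝓝[≠] z, deriv g y ≠ 0 := by
  have hUz := hU.mem_nhds hz
  refine ((hg.deriv hU).analyticAt hUz).eventually_eq_zero_or_eventually_ne_zero.resolve_left
    fun hzero => ?_
  obtain ⟨ε, hε, hball⟩ := Metric.eventually_nhds_iff_ball.1 (hzero.and hUz)
  have hz' : z + (ε / 2 : ℝ) ∈ ball z ε := by simpa [abs_of_pos hε] using hε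
  have := isOpen_ball.is_const_of_deriv_eq_zero (convex_ball z ε).isPreconnected
    (hg.mono fun y hy => (hball y hy).2) (fun y hy => (hball y hy).1) hz' (mem_ball_self hε)
  simpa [hε.ne'] using hinj (hball _ hz').2 hz this

-- The inverse is continuous, and differentiable off the isolated images of critical points of `g`.
lemma differentiableOn_invFunOn (hU : IsOpen U) (hg : DifferentiableOn ℂ g U)
    (hinj : InjOn g U) : DifferentiableOn ℂ (Function.invFunOn g U) (g '' U) := by
  have hleft : ∀ z ∈ U, Function.invFunOn g U (g z) = z := fun z hz => hinj.leftInvOn_invFunOn hz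
  have himage : ∀ z ∈ U, g '' U ∈ 𝓝 (g z) := fun z hz =>
    (isOpen_image_of_injOn hU hg hinj).mem_nhds (mem_image_of_mem g hz)
  have hcont : ∀ z ∈ U, ContinuousAt (Function.invFunOn g U) (g z) := fun z hz =>
    (continuousOn_invFunOn hU hg hinj).continuousAt (himage z hz)
  have hregular : ∀ z ∈ U, deriv g z ≠ 0 →
      DifferentiableAt ℂ (Function.invFunOn g U) (g z) := fun z hz hz' => by
    refine (HasDerivAt.of_local_left_inverse (f := g) (hcont z hz) ?_ hz' ?_).differentiableAt
    · rw [hleft z hz]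
      exact (hg.differentiableAt (hU.mem_nhds hz)).hasDerivAt
    · filter_upwards [himage z hz] with w hw using Function.invFunOn_eq hw
  rintro _ ⟨z, hz, rfl⟩
  have hwithin : g '' U ∈ 𝓝[≠] g z := mem_nhdsWithin_of_mem_nhds (himage z hz)
  have htendsto : Tendsto (Function.invFunOn g U) (𝓝[≠] g z) (𝓝[≠] z) := by
    have hnhds := (hcont z hz).tendsto
    rw [hleft z hz] at hnhds
    refine tendsto_nhdsWithin_iff.2 ⟨hnhds.mono_left nhdsWithin_le_nhds, ?_⟩
    filter_upwards [self_mem_nhdsWithin, hwithin] with w hw hwU hwz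
    exact hw (by rw [← Function.invFunOn_eq hwU]; exact congrArg g hwz)
  refine (Complex.analyticAt_of_differentiable_on_punctured_nhds_of_continuousAt ?_
    (hcont z hz)).differentiableAt.differentiableWithinAt
  filter_upwards [htendsto.eventually (eventually_deriv_ne_zero_of_injOn hU hg hinj hz),
    hwithin] with w hw hwU
  obtain ⟨y, hy, rfl⟩ := hwU
  rw [hleft y hy] at hw
  exact hregular y hy hw

lemma deriv_ne_zero_of_injOn (hU : IsOpen U) (hg : DifferentiableOn ℂ g U) (hinj : InjOn g U)
    {z : ℂ} (hz : z ∈ U) : deriv g z ≠ 0 := by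
  intro hzero
  have hinv := (differentiableOn_invFunOn hU hg hinj).differentiableAt
    ((isOpen_image_of_injOn hU hg hinj).mem_nhds (mem_image_of_mem g hz))
  have hcomp := hinv.hasDerivAt.comp z (hg.differentiableAt (hU.mem_nhds hz)).hasDerivAt
  have hid : Function.invFunOn g U ∘ g =ᶠ[𝓝 z] id := by
    filter_upwards [hU.mem_nhds hz] with y hy using hinj.leftInvOn_invFunOn hy
  have := hcomp.unique ((hasDerivAt_id z).congr_of_eventuallyEq hid)
  simp [hzero] at this

end Injective

section Gronwall

variable {g φ : ℂ → ℂ}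

lemma sum_mul_norm_taylorCoeff_sq_le {ρ s : ℝ} (hg : DifferentiableOn ℂ g (ball 0 1))
    (hinj : InjOn g (ball 0 1)) (hφ : DifferentiableOn ℂ φ (ball 0 1)) (hρ : 0 ≤ ρ) (hρs : ρ < s)
    (hs1 : s < 1) {P P' : ℂ → ℂ} (hP : ∀ w ∉ g '' closedBall 0 ρ, HasDerivAt P (P' w) w)
    (hdec : Tendsto (fun w => ‖P w‖ * ‖w‖ * ‖P' w‖) (cocompact ℂ) (𝓝 0)) {b : ℕ → ℂ}
    (hb : ∀ z, ‖z‖ = s → HasSum (fun n : ℕ => (n + 1) * b n * z⁻¹ ^ (n + 1))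
      (z * deriv φ z - P' (g z) * deriv g z * z)) {S : ℝ}
    (hS : HasSum (fun n : ℕ => (n + 1) * ‖b n‖ ^ 2 * s⁻¹ ^ (2 * (n + 1))) S) (N : ℕ) :
    ∑ n ∈ Finset.range N, n * ‖taylorCoeff φ n‖ ^ 2 * s ^ (2 * n) ≤ S := by
  have hs := hρ.trans_lt hρs
  obtain ⟨c, hcnat, hcneg⟩ : ∃ c : ℤ → ℂ, (∀ n : ℕ, c n = n * taylorCoeff φ n) ∧
      ∀ n : ℕ, c (Int.negSucc n) = -((n + 1) * b n) :=
    ⟨fun k => Int.rec (fun n => n * taylorCoeff φ n) (fun n => -((n + 1) * b n)) k,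
      fun _ => rfl, fun _ => rfl⟩
  have hlaurent : ∀ z, ‖z‖ = s →
      HasSum (fun k => c k * z ^ k) (P' (g z) * deriv g z * z) := fun z hz => by
    have hpos : HasSum (fun n : ℕ => c n * z ^ (n : ℤ)) (z * deriv φ z) := by
      simpa only [hcnat, zpow_natCast] using hasSum_nat_mul_taylorCoeff hφ (hz.trans_lt hs1)
    have hneg : HasSum (fun n : ℕ => c (-(n + 1 : ℤ)) * z ^ (-(n + 1 : ℤ)))
        (-(z * deriv φ z - P' (g z) * deriv g z * z)) := by
      simpa only [← Int.negSucc_eq, hcneg, zpow_negSucc, inv_pow, neg_mul] using (hb z hz).neg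
    simpa only [neg_sub, add_sub_cancel] using
      HasSum.of_nat_of_neg_add_one (f := fun k => c k * z ^ k) hpos hneg
  obtain ⟨hsum, hle⟩ := laurent_tsum_nonpos hg hinj hρ hρs hs1 hP hdec (by simpa using hcnat 0)
    hlaurent
  have hposTerm (n : ℕ) : ‖c n * (s : ℂ) ^ (n : ℤ)‖ ^ 2 / (n : ℤ) =
      n * ‖taylorCoeff φ n‖ ^ 2 * s ^ (2 * n) := by
    rcases eq_or_ne n 0 with rfl | hn
    · simp
    · simp only [hcnat, zpow_natCast, norm_mul, norm_pow, Complex.norm_natCast, Complex.norm_real,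
        Real.norm_of_nonneg hs.le, Int.cast_natCast, pow_mul']
      field_simp
  have hnegTerm (n : ℕ) : ‖c (-(n + 1 : ℤ)) * (s : ℂ) ^ (-(n + 1 : ℤ))‖ ^ 2 / (-(n + 1 : ℤ) : ℤ) =
      -((n + 1) * ‖b n‖ ^ 2 * s⁻¹ ^ (2 * (n + 1))) := by
    have hn : ‖(n + 1 : ℂ)‖ = n + 1 := by exact_mod_cast Complex.norm_natCast (n + 1)
    rw [← Int.negSucc_eq, hcneg, zpow_negSucc]
    simp only [norm_neg, norm_mul, norm_inv, norm_pow, Complex.norm_real, hn,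
      Real.norm_of_nonneg hs.le, Int.cast_negSucc]
    push_cast
    rw [inv_pow, pow_mul']
    field_simp
  have hnat : Summable fun n : ℕ => n * ‖taylorCoeff φ n‖ ^ 2 * s ^ (2 * n) :=
    (hsum.comp_injective Nat.cast_injective).congr hposTerm
  have htotal := HasSum.of_nat_of_neg_add_one (f := fun k : ℤ => ‖c k * (s : ℂ) ^ k‖ ^ 2 / k)
    (hnat.hasSum.congr_fun hposTerm) (hS.neg.congr_fun hnegTerm)
  rw [htotal.tsum_eq] at hle
  exact (hnat.sum_le_tsum _ fun n _ => by positivity).trans (by linarith)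

end Gronwall

section LogPrimitive

variable {p p' : ℝ → ℂ}

-- Differentiation under the integral sign in a Cauchy-type integral, away from the path `p`.
lemma hasDerivAt_integral_mul_inv_sub {f : ℝ → ℂ} (hf : ContinuousOn f (Icc 0 1))
    (hp : ContinuousOn p (Icc 0 1)) {w : ℂ} (hw : w ∉ p '' Icc 0 1) :
    HasDerivAt (fun w => ∫ u in 0..1, f u * (w - p u)⁻¹)
      (∫ u in 0..1, f u * -((w - p u) ^ 2)⁻¹) w := by
  have hpath : IsCompact (p '' Icc 0 1) := isCompact_Icc.image_of_continuousOn hp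
  obtain ⟨B, hB⟩ := isCompact_Icc.exists_bound_of_continuousOn hf
  obtain ⟨δ, hδ, hfar⟩ : ∃ δ > 0, ∀ y ∈ ball w δ, ∀ u ∈ Icc (0 : ℝ) 1, δ ≤ ‖y - p u‖ := by
    obtain ⟨δ, hδ, hball⟩ := Metric.isOpen_iff.1 hpath.isClosed.isOpen_compl w hw
    refine ⟨δ / 2, half_pos hδ, fun y hy u hu => not_lt.1 fun hlt => ?_⟩
    refine hball ?_ (mem_image_of_mem p hu)
    rw [mem_ball', ← add_halves δ]
    exact (dist_triangle w y _).trans_lt (add_lt_add (mem_ball'.1 hy) (by rwa [dist_eq_norm]))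
  have hne : ∀ y ∈ ball w δ, ∀ u ∈ Icc (0 : ℝ) 1, y - p u ≠ 0 := fun y hy u hu =>
    norm_pos_iff.1 (hδ.trans_le (hfar y hy u hu))
  have hcont : ∀ y ∈ ball w δ, ContinuousOn (fun u => f u * (y - p u)⁻¹) (Icc 0 1) :=
    fun y hy => hf.mul ((continuousOn_const.sub hp).inv₀ (hne y hy))
  have hcont' : ContinuousOn (fun u => f u * -((w - p u) ^ 2)⁻¹) (Icc 0 1) :=
    hf.mul (((continuousOn_const.sub hp).pow 2).inv₀ fun u hu =>
      pow_ne_zero 2 (hne w (mem_ball_self hδ) u hu)).neg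
  have hIoc : uIoc (0 : ℝ) 1 = Ioc 0 1 := uIoc_of_le zero_le_one
  have hmeas : ∀ k : ℝ → ℂ, ContinuousOn k (Icc 0 1) →
      AEStronglyMeasurable k (volume.restrict (uIoc 0 1)) := fun k hk => by
    rw [hIoc]
    exact (hk.mono Ioc_subset_Icc_self).aestronglyMeasurable measurableSet_Ioc
  refine (intervalIntegral.hasDerivAt_integral_of_dominated_loc_of_deriv_le
    (F' := fun y u => f u * -((y - p u) ^ 2)⁻¹) (bound := fun _ => B * (δ ^ 2)⁻¹)
    (ball_mem_nhds w hδ) ?_ ?_ (hmeas _ hcont') (.of_forall fun u hu y hy => ?_) (by simp)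
    (.of_forall fun u hu y hy => ?_)).2
  · filter_upwards [ball_mem_nhds w hδ] with y hy using hmeas _ (hcont y hy)
  · exact (hcont w (mem_ball_self hδ)).intervalIntegrable_of_Icc zero_le_one
  · have hu := Ioc_subset_Icc_self (hIoc ▸ hu)
    rw [norm_mul, norm_neg, norm_inv, norm_pow]
    gcongr
    exacts [(norm_nonneg _).trans (hB u hu), hB u hu, hfar y hy u hu]
  · have hu := Ioc_subset_Icc_self (hIoc ▸ hu)
    refine ((((hasDerivAt_id y).sub_const (p u)).inv
      (hne y hy u hu)).const_mul (f u)).congr_deriv ?_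
    simp only [id, neg_div, one_div]

lemma integral_mul_neg_inv_sub_sq (hp : ∀ u ∈ Icc (0 : ℝ) 1, HasDerivAt p (p' u) u)
    (hp' : ContinuousOn p' (Icc 0 1)) {w : ℂ} (hw : w ∉ p '' Icc 0 1) :
    ∫ u in 0..1, p' u * -((w - p u) ^ 2)⁻¹ = (w - p 0)⁻¹ - (w - p 1)⁻¹ := by
  have huIcc : uIcc (0 : ℝ) 1 = Icc 0 1 := uIcc_of_le zero_le_one
  have hne : ∀ u ∈ Icc (0 : ℝ) 1, w - p u ≠ 0 := fun u hu hzero =>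
    hw ⟨u, hu, (sub_eq_zero.1 hzero).symm⟩
  have hcont : ContinuousOn p (Icc 0 1) := fun u hu => (hp u hu).continuousAt.continuousWithinAt
  rw [intervalIntegral.integral_eq_sub_of_hasDerivAt (f := fun u => -(w - p u)⁻¹)]
  · ring
  · intro u hu
    rw [huIcc] at hu
    refine (((hp u hu).const_sub w).inv (hne u hu)).neg.congr_deriv ?_
    ring
  · exact (hp'.mul (((continuousOn_const.sub hcont).pow 2).inv₀ fun u hu =>
      pow_ne_zero 2 (hne u hu)).neg).intervalIntegrable_of_Icc zero_le_one

lemma exists_hasDerivAt_inv_sub_sub_inv_sub (hp : ∀ u ∈ Icc (0 : ℝ) 1, HasDerivAt p (p' u) u)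
    (hp' : ContinuousOn p' (Icc 0 1)) :
    ∃ P : ℂ → ℂ, (∀ w ∉ p '' Icc 0 1, HasDerivAt P ((w - p 1)⁻¹ - (w - p 0)⁻¹) w) ∧
      ∃ C, ∀ᶠ w in cocompact ℂ, ‖P w‖ ≤ C := by
  have hcont : ContinuousOn p (Icc 0 1) := fun u hu => (hp u hu).continuousAt.continuousWithinAt
  obtain ⟨B, hB⟩ := isCompact_Icc.exists_bound_of_continuousOn hp'
  obtain ⟨M, hM⟩ := isCompact_Icc.exists_bound_of_continuousOn hcont
  refine ⟨fun w => -∫ u in 0..1, p' u * (w - p u)⁻¹, fun w hw => ?_, B, ?_⟩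
  · refine (hasDerivAt_integral_mul_inv_sub hp' hcont hw).neg.congr_deriv ?_
    rw [integral_mul_neg_inv_sub_sq hp hp' hw, neg_sub]
  · filter_upwards [(tendsto_norm_cocompact_atTop (E := ℂ)).eventually_ge_atTop (M + 1)] with w hw
    rw [norm_neg]
    refine (intervalIntegral.norm_integral_le_of_norm_le_const (C := B) fun u hu => ?_).trans_eq
      (by simp)
    have hu := Ioc_subset_Icc_self ((uIoc_of_le (zero_le_one' ℝ)).subset hu)
    have hfar : 1 ≤ ‖w - p u‖ := by linarith [norm_sub_norm_le w (p u), hM u hu]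
    rw [norm_mul, norm_inv]
    exact (mul_le_of_le_one_right (norm_nonneg _) (inv_le_one_of_one_le₀ hfar)).trans (hB u hu)

lemma tendsto_norm_mul_norm_inv_sub_sub_inv_sub {P : ℂ → ℂ} {C : ℝ}
    (hP : ∀ᶠ w in cocompact ℂ, ‖P w‖ ≤ C) (a b : ℂ) :
    Tendsto (fun w => ‖P w‖ * ‖w‖ * ‖(w - a)⁻¹ - (w - b)⁻¹‖) (cocompact ℂ) (𝓝 0) := by
  have hnorm := tendsto_norm_cocompact_atTop (E := ℂ)
  have hdom : Tendsto (fun w : ℂ => |C| * (4 * ‖a - b‖) * ‖w‖⁻¹) (cocompact ℂ) (𝓝 0) := by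
    simpa using (tendsto_inv_atTop_zero.comp hnorm).const_mul (|C| * (4 * ‖a - b‖))
  refine squeeze_zero' (.of_forall fun w => by positivity) ?_ hdom
  filter_upwards [hP, hnorm.eventually_ge_atTop (2 * ‖a‖), hnorm.eventually_ge_atTop (2 * ‖b‖),
    hnorm.eventually_ge_atTop 1] with w hPw hwa hwb hw1
  have ha : ‖w‖ / 2 ≤ ‖w - a‖ := by linarith [norm_sub_norm_le w a]
  have hb : ‖w‖ / 2 ≤ ‖w - b‖ := by linarith [norm_sub_norm_le w b]
  have hane : w - a ≠ 0 := norm_pos_iff.1 (by linarith)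
  have hbne : w - b ≠ 0 := norm_pos_iff.1 (by linarith)
  rw [inv_sub_inv hane hbne, sub_sub_sub_cancel_left, norm_div, norm_mul]
  calc ‖P w‖ * ‖w‖ * (‖a - b‖ / (‖w - a‖ * ‖w - b‖))
      ≤ |C| * ‖w‖ * (‖a - b‖ / (‖w‖ / 2 * (‖w‖ / 2))) := by
        gcongr
        exact hPw.trans (le_abs_self C)
    _ = |C| * (4 * ‖a - b‖) * ‖w‖⁻¹ := by
        field_simp
        ring

end LogPrimitive

section Goluzin

variable {g q : ℂ → ℂ} {a b : ℂ}

lemma logDeriv_dslope {z : ℂ} (hza : z ≠ a) (hg : DifferentiableAt ℂ g z) (hgz : g z ≠ g a) :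
    logDeriv (dslope g a) z = deriv g z / (g z - g a) - (z - a)⁻¹ := by
  have hslope : dslope g a =ᶠ[𝓝 z] fun w => (g w - g a) / (w - a) := by
    filter_upwards [isOpen_ne.mem_nhds hza] with w hw
    rw [dslope_of_ne g hw, slope_def_field]
  rw [logDeriv_apply, hslope.deriv_eq, hslope.eq_of_nhds, ← logDeriv_apply,
    logDeriv_div (f := fun w => g w - g a) (g := fun w => w - a) z (sub_ne_zero.2 hgz)
      (sub_ne_zero.2 hza) (hg.sub_const _) (differentiableAt_id.sub_const _)]
  simp [logDeriv_apply]

lemma dslope_ne_zero_of_injOn {U : Set ℂ} (hU : IsOpen U) (hg : DifferentiableOn ℂ g U)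
    (hinj : InjOn g U) {z : ℂ} (hz : z ∈ U) (ha : a ∈ U) : dslope g a z ≠ 0 := by
  rcases eq_or_ne z a with rfl | hza
  · rw [dslope_same]
    exact deriv_ne_zero_of_injOn hU hg hinj hz
  · rw [dslope_of_ne g hza, slope_def_field]
    exact div_ne_zero (sub_ne_zero.2 fun h => hza (hinj hz ha h)) (sub_ne_zero.2 hza)

lemma hasSum_norm_pow_sub_pow_sq_div (ha : ‖a‖ < 1) (hb : ‖b‖ < 1) :
    HasSum (fun n : ℕ => ‖a ^ (n + 1) - b ^ (n + 1)‖ ^ 2 / (n + 1))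
      (2 * Real.log ‖1 - a * conj b‖ - Real.log (1 - ‖a‖ ^ 2) - Real.log (1 - ‖b‖ ^ 2)) := by
  have hlt {x : ℝ} (hx : 0 ≤ x) (hx1 : x < 1) : |x ^ 2| < 1 := by
    rw [abs_of_nonneg (sq_nonneg x)]
    exact pow_lt_one₀ hx hx1 two_ne_zero
  have hab : ‖a * conj b‖ < 1 := by
    rw [norm_mul, RCLike.norm_conj]
    exact mul_lt_one_of_nonneg_of_lt_one_left (norm_nonneg a) ha hb.le
  have hcross := Complex.hasSum_re ((hasSum_nat_add_iff' 1).2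
    (Complex.hasSum_taylorSeries_neg_log hab))
  rw [Finset.sum_range_one, Nat.cast_zero, div_zero, sub_zero] at hcross
  have hterm (n : ℕ) : ‖a ^ (n + 1) - b ^ (n + 1)‖ ^ 2 / (n + 1) =
      (‖a‖ ^ 2) ^ (n + 1) / (n + 1) + (‖b‖ ^ 2) ^ (n + 1) / (n + 1) -
        2 * ((a * conj b) ^ (n + 1) / ((n + 1 : ℕ) : ℂ)).re := by
    have hpow {c : ℂ} : (‖c‖ ^ 2) ^ (n + 1) = Complex.normSq (c ^ (n + 1)) := by
      rw [← Complex.normSq_eq_norm_sq, map_pow]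
    rw [Complex.div_natCast_re, mul_pow, ← map_pow, hpow, hpow, ← Complex.normSq_eq_norm_sq,
      Complex.normSq_sub]
    push_cast
    ring
  have hvalue : 2 * Real.log ‖1 - a * conj b‖ - Real.log (1 - ‖a‖ ^ 2) - Real.log (1 - ‖b‖ ^ 2) =
      -Real.log (1 - ‖a‖ ^ 2) + -Real.log (1 - ‖b‖ ^ 2) -
        2 * (-Complex.log (1 - a * conj b)).re := by
    rw [Complex.neg_re, Complex.log_re]
    ring
  rw [hvalue]
  exact (((Real.hasSum_pow_div_log_of_abs_lt_one (hlt (norm_nonneg a) ha)).add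
    (Real.hasSum_pow_div_log_of_abs_lt_one (hlt (norm_nonneg b) hb))).sub
    (hcross.mul_left 2)).congr_fun hterm

lemma hasSum_pow_sub_pow_mul_inv_pow {z : ℂ} (ha : ‖a‖ < ‖z‖) (hb : ‖b‖ < ‖z‖) :
    HasSum (fun n : ℕ => (a ^ (n + 1) - b ^ (n + 1)) * z⁻¹ ^ (n + 1))
      (z * ((z - a)⁻¹ - (z - b)⁻¹)) := by
  have hz : z ≠ 0 := norm_pos_iff.1 ((norm_nonneg a).trans_lt ha)
  have hgeom {c : ℂ} (hc : ‖c‖ < ‖z‖) :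
      HasSum (fun n : ℕ => c ^ (n + 1) * z⁻¹ ^ (n + 1)) (z * (z - c)⁻¹ - 1) := by
    have hcz : ‖c * z⁻¹‖ < 1 := by
      rwa [norm_mul, norm_inv, ← div_eq_mul_inv, div_lt_one (norm_pos_iff.2 hz)]
    have hsum := (hasSum_nat_add_iff' (f := fun n => (c * z⁻¹) ^ n) 1).2
      (hasSum_geometric_of_norm_lt_one hcz)
    have hzc : z - c ≠ 0 := sub_ne_zero.2 fun h => hc.ne (by rw [h])
    have hval : (1 - c * z⁻¹)⁻¹ = z * (z - c)⁻¹ := by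
      have hone : 1 - c * z⁻¹ = (z - c) / z := by field_simp
      rw [hone, inv_div, div_eq_mul_inv]
    simpa only [hval, mul_pow, Finset.sum_range_one, pow_zero, mul_one] using hsum
  simpa only [sub_mul, mul_sub, sub_sub_sub_cancel_right] using (hgeom ha).sub (hgeom hb)

lemma sum_le_of_eventually_sum_mul_pow_le {N : ℕ} {c : ℕ → ℝ} {K : ℝ → ℝ} (hK : ContinuousAt K 1)
    (h : ∀ᶠ s in 𝓝[<] 1, ∑ n ∈ Finset.range N, c n * s ^ (2 * n) ≤ K s) :
    ∑ n ∈ Finset.range N, c n ≤ K 1 := by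
  have hleft : ContinuousAt (fun s : ℝ => ∑ n ∈ Finset.range N, c n * s ^ (2 * n)) 1 := by fun_prop
  simpa using le_of_tendsto_of_tendsto (hleft.tendsto.mono_left nhdsWithin_le_nhds)
    (hK.tendsto.mono_left nhdsWithin_le_nhds) h

lemma hasSum_mul_deriv_sub_of_dslope_eq (hg : DifferentiableOn ℂ g (ball 0 1))
    (hinj : InjOn g (ball 0 1)) (hq : DifferentiableOn ℂ q (ball 0 1))
    (hqe : ∀ z ∈ ball (0 : ℂ) 1, dslope g a z = dslope g b z * Complex.exp (q z)) {z : ℂ}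
    (hz : ‖z‖ < 1) (haz : ‖a‖ < ‖z‖) (hbz : ‖b‖ < ‖z‖) :
    HasSum (fun n : ℕ => (b ^ (n + 1) - a ^ (n + 1)) * z⁻¹ ^ (n + 1))
      (z * deriv q z - ((g z - g a)⁻¹ - (g z - g b)⁻¹) * deriv g z * z) := by
  have hz' : z ∈ ball (0 : ℂ) 1 := by simpa using hz
  have hnhds := isOpen_ball.mem_nhds hz'
  have hgz := hg.differentiableAt hnhds
  have hqz := hq.differentiableAt hnhds
  have hlog : ∀ c, ‖c‖ < ‖z‖ →
      logDeriv (dslope g c) z = deriv g z / (g z - g c) - (z - c)⁻¹ := fun c hc =>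
    have hzc : z ≠ c := fun h => hc.ne (by rw [h])
    logDeriv_dslope hzc hgz fun h => hzc (hinj hz' (by simpa using hc.trans hz) h)
  have hdslope : dslope g a =ᶠ[𝓝 z] fun z => dslope g b z * Complex.exp (q z) := by
    filter_upwards [hnhds] with w hw using hqe w hw
  have hb' : b ∈ ball (0 : ℂ) 1 := by simpa using hbz.trans hz
  have hprod : logDeriv (dslope g a) z = logDeriv (dslope g b) z + deriv q z := by
    rw [logDeriv_apply, hdslope.deriv_eq, hdslope.eq_of_nhds, ← logDeriv_apply,
      logDeriv_mul (f := dslope g b) (g := fun z => Complex.exp (q z)) z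
        (dslope_ne_zero_of_injOn isOpen_ball hg hinj hz' hb') (Complex.exp_ne_zero _)
        (((Complex.differentiableOn_dslope (isOpen_ball.mem_nhds hb')).2 hg).differentiableAt hnhds)
        hqz.cexp]
    simp only [logDeriv_apply, hqz.hasDerivAt.cexp.deriv]
    field_simp
  rw [hlog a haz, hlog b hbz] at hprod
  convert hasSum_pow_sub_pow_mul_inv_pow hbz haz using 1
  rw [div_eq_mul_inv, div_eq_mul_inv] at hprod
  linear_combination -z * hprod

lemma exists_hasDerivAt_inv_sub_sub_inv_sub_of_convex {U K : Set ℂ} (hU : IsOpen U)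
    (hg : DifferentiableOn ℂ g U) (hK : Convex ℝ K) (hKU : K ⊆ U) (ha : a ∈ K) (hb : b ∈ K) :
    ∃ P : ℂ → ℂ, (∀ w ∉ g '' K, HasDerivAt P ((w - g a)⁻¹ - (w - g b)⁻¹) w) ∧
      ∃ C, ∀ᶠ w in cocompact ℂ, ‖P w‖ ≤ C := by
  have hsegment : ∀ u ∈ Icc (0 : ℝ) 1, b + u • (a - b) ∈ K := fun u hu =>
    hK.add_smul_sub_mem hb ha hu
  have hpath : ∀ u ∈ Icc (0 : ℝ) 1, HasDerivAt (fun u : ℝ => g (b + u • (a - b)))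
      ((a - b) • deriv g (b + u • (a - b))) u := fun u hu => by
    have hline : HasDerivAt (fun u : ℝ => b + u • (a - b)) (a - b) u := by
      simpa using ((hasDerivAt_id u).smul_const (a - b)).const_add b
    exact (hg.differentiableAt
      (hU.mem_nhds (hKU (hsegment u hu)))).hasDerivAt.scomp u hline
  have hderiv : ContinuousOn (fun u : ℝ => deriv g (b + u • (a - b))) (Icc 0 1) :=
    ((hg.deriv hU).continuousOn.mono hKU).comp (by fun_prop) hsegment
  obtain ⟨P, hP, hC⟩ := exists_hasDerivAt_inv_sub_sub_inv_sub hpath (hderiv.const_smul (a - b))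
  simp only [one_smul, zero_smul, add_zero, add_sub_cancel] at hP
  exact ⟨P, fun w hw => hP w fun ⟨u, hu, huw⟩ => hw ⟨_, hsegment u hu, huw⟩, hC⟩

lemma continuousAt_log_norm_sub_log_sub_log (ha : ‖a‖ < 1) (hb : ‖b‖ < 1) :
    ContinuousAt (fun s : ℝ => 2 * Real.log ‖1 - a / s * conj (b / s)‖ -
      Real.log (1 - ‖a / s‖ ^ 2) - Real.log (1 - ‖b / s‖ ^ 2)) 1 := by
  have hdiv (c : ℂ) : ContinuousAt (fun s : ℝ => c / s) 1 :=
    continuousAt_const.div Complex.continuous_ofReal.continuousAt (by simp)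
  have hlog {c : ℂ} (hc : ‖c‖ < 1) : ContinuousAt (fun s : ℝ => Real.log (1 - ‖c / s‖ ^ 2)) 1 := by
    refine (continuousAt_const.sub ((hdiv c).norm.pow 2)).log ?_
    simpa using (sub_pos.2 (pow_lt_one₀ (norm_nonneg c) hc two_ne_zero)).ne'
  have hcross : ‖a * conj b‖ < 1 := by
    rw [norm_mul, RCLike.norm_conj]
    exact mul_lt_one_of_nonneg_of_lt_one_left (norm_nonneg a) ha hb.le
  have hne : 1 - a * conj b ≠ 0 := sub_ne_zero.2 fun h => by simp [← h] at hcross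
  refine ((continuousAt_const.mul (ContinuousAt.log ?_ (by simpa using hne))).sub
    (hlog ha)).sub (hlog hb)
  exact (continuousAt_const.sub ((hdiv a).mul
    (Complex.continuous_conj.continuousAt.comp (hdiv b)))).norm

-- Goluzin's inequality for two points: the area inequality for a primitive of
-- `1 / (w - g a) - 1 / (w - g b)`, whose pullback by `g` is `q` up to a Laurent tail.
lemma sum_mul_norm_taylorCoeff_sq_le_log (hg : DifferentiableOn ℂ g (ball 0 1))
    (hinj : InjOn g (ball 0 1)) (ha : ‖a‖ < 1) (hb : ‖b‖ < 1)
    (hq : DifferentiableOn ℂ q (ball 0 1))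
    (hqe : ∀ z ∈ ball (0 : ℂ) 1, dslope g a z = dslope g b z * Complex.exp (q z)) (N : ℕ) :
    ∑ n ∈ Finset.range N, n * ‖taylorCoeff q n‖ ^ 2 ≤
      2 * Real.log ‖1 - a * conj b‖ - Real.log (1 - ‖a‖ ^ 2) - Real.log (1 - ‖b‖ ^ 2) := by
  obtain ⟨ρ, hρa, hρb, hρ1⟩ : ∃ ρ, ‖a‖ ≤ ρ ∧ ‖b‖ ≤ ρ ∧ ρ < 1 :=
    ⟨max ‖a‖ ‖b‖, le_max_left _ _, le_max_right _ _, max_lt ha hb⟩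
  have hρ0 : 0 ≤ ρ := (norm_nonneg a).trans hρa
  obtain ⟨P, hP, C, hC⟩ := exists_hasDerivAt_inv_sub_sub_inv_sub_of_convex isOpen_ball hg
    (convex_closedBall 0 ρ) (closedBall_subset_ball hρ1) (by simpa using hρa) (by simpa using hρb)
  refine (sum_le_of_eventually_sum_mul_pow_le (continuousAt_log_norm_sub_log_sub_log ha hb)
    ?_).trans_eq (by simp)
  filter_upwards [Ioo_mem_nhdsLT hρ1] with s hs
  have hs0 : 0 < s := hρ0.trans_lt hs.1
  have hdiv : ∀ c : ℂ, ‖c‖ ≤ ρ → ‖c / s‖ < 1 := fun c hc => by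
    rw [norm_div, Complex.norm_real, Real.norm_of_nonneg hs0.le, div_lt_one hs0]
    exact hc.trans_lt hs.1
  refine sum_mul_norm_taylorCoeff_sq_le (P := P) hg hinj hq hρ0 hs.1 hs.2
    (b := fun n => (b ^ (n + 1) - a ^ (n + 1)) / (n + 1))
    hP (tendsto_norm_mul_norm_inv_sub_sub_inv_sub hC _ _) (fun z hz => ?_) ?_ N
  · have := hasSum_mul_deriv_sub_of_dslope_eq hg hinj hq hqe (hz.trans_lt hs.2)
      (hρa.trans_lt (hz ▸ hs.1)) (hρb.trans_lt (hz ▸ hs.1))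
    refine this.congr_fun fun n => ?_
    rw [mul_div_cancel₀ _ (by exact_mod_cast n.succ_ne_zero)]
  · refine (hasSum_norm_pow_sub_pow_sq_div (hdiv a hρa) (hdiv b hρb)).congr_fun fun n => ?_
    have hn : ‖(n + 1 : ℂ)‖ = n + 1 := by exact_mod_cast Complex.norm_natCast (n + 1)
    rw [div_pow, div_pow, ← sub_div, norm_div, norm_div, norm_sub_rev, norm_pow, hn,
      Complex.norm_real, Real.norm_of_nonneg hs0.le, inv_pow, pow_mul']
    field_simp

end Goluzin

section AreaTheorem

variable {g φ : ℂ → ℂ}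

lemma tendsto_norm_mul_norm_inv_cocompact :
    Tendsto (fun w : ℂ => ‖-w⁻¹‖ * ‖w‖ * ‖(w ^ 2)⁻¹‖) (cocompact ℂ) (𝓝 0) := by
  have hinv : Tendsto (fun w : ℂ => ‖w‖⁻¹ ^ 2) (cocompact ℂ) (𝓝 0) := by
    simpa using (tendsto_inv_atTop_zero.comp (tendsto_norm_cocompact_atTop (E := ℂ))).pow 2
  refine hinv.congr fun w => ?_
  rcases eq_or_ne w 0 with rfl | hw
  · simp
  · simp only [norm_neg, norm_inv, norm_pow]
    field_simp [norm_ne_zero_iff.2 hw]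

lemma mul_deriv_sub_eq_of_inv_eq (hg : DifferentiableOn ℂ g (ball 0 1))
    (hφ : DifferentiableOn ℂ φ (ball 0 1)) (hgφ : ∀ z ∈ ball (0 : ℂ) 1, z ≠ 0 → (g z)⁻¹ = z⁻¹ - φ z)
    {z : ℂ} (hz : z ∈ ball (0 : ℂ) 1) (hz0 : z ≠ 0) (hgz : g z ≠ 0) :
    z * deriv φ z - (g z ^ 2)⁻¹ * deriv g z * z = -z⁻¹ := by
  have hnhds := isOpen_ball.mem_nhds hz
  have hleft := (hg.differentiableAt hnhds).hasDerivAt.inv hgz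
  have hright := (hasDerivAt_inv hz0).sub (hφ.differentiableAt hnhds).hasDerivAt
  have heq : g⁻¹ =ᶠ[𝓝 z] (fun z => z⁻¹) - φ := by
    filter_upwards [hnhds, isOpen_ne.mem_nhds hz0] with w hw hw0 using hgφ w hw hw0
  have hderiv : -deriv g z / g z ^ 2 = -(z ^ 2)⁻¹ - deriv φ z :=
    hleft.unique (hright.congr_of_eventuallyEq heq)
  calc z * deriv φ z - (g z ^ 2)⁻¹ * deriv g z * z
      = z * (-deriv g z / g z ^ 2) + z * deriv φ z := by ring
    _ = -z⁻¹ := by rw [hderiv]; field_simp; ring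

lemma sum_mul_norm_taylorCoeff_sq_le_one (hg : DifferentiableOn ℂ g (ball 0 1))
    (hinj : InjOn g (ball 0 1)) (hg0 : g 0 = 0) (hφ : DifferentiableOn ℂ φ (ball 0 1))
    (hgφ : ∀ z ∈ ball (0 : ℂ) 1, z ≠ 0 → (g z)⁻¹ = z⁻¹ - φ z) (N : ℕ) :
    ∑ n ∈ Finset.range N, n * ‖taylorCoeff φ n‖ ^ 2 ≤ 1 := by
  suffices ∀ s ∈ Ioo (0 : ℝ) 1,
      ∑ n ∈ Finset.range N, n * ‖taylorCoeff φ n‖ ^ 2 * s ^ (2 * n) ≤ s⁻¹ ^ 2 by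
    have hcont : ContinuousAt (fun s : ℝ => s⁻¹ ^ 2) 1 :=
      (continuousAt_inv₀ one_ne_zero).pow 2
    simpa using sum_le_of_eventually_sum_mul_pow_le hcont
      (by filter_upwards [Ioo_mem_nhdsLT one_pos] with s hs using this s hs)
  rintro s ⟨hs, hs1⟩
  refine sum_mul_norm_taylorCoeff_sq_le hg hinj hφ (half_pos hs).le (half_lt_self hs) hs1
    (P := fun w => -w⁻¹) (P' := fun w => (w ^ 2)⁻¹) (b := Pi.single 0 (-1)) (fun w hw => ?_)
    tendsto_norm_mul_norm_inv_cocompact (fun z hz => ?_) ?_ N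
  · have hw0 : w ≠ 0 := fun h =>
      hw ⟨0, mem_closedBall_self (half_pos hs).le, hg0.trans h.symm⟩
    exact (hasDerivAt_inv hw0).neg.congr_deriv (neg_neg _)
  · have hz1 : z ∈ ball (0 : ℂ) 1 := mem_ball_zero_iff.2 (hz.trans_lt hs1)
    have hz0 : z ≠ 0 := norm_pos_iff.1 (hz ▸ hs)
    have hgz : g z ≠ 0 := fun h =>
      hz0 (hinj hz1 (mem_ball_self one_pos) (h.trans hg0.symm))
    rw [mul_deriv_sub_eq_of_inv_eq hg hφ hgφ hz1 hz0 hgz]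
    convert hasSum_single (f := fun n : ℕ => (n + 1 : ℂ) * (Pi.single 0 (-1) : ℕ → ℂ) n *
      z⁻¹ ^ (n + 1)) 0 (fun n hn => by simp [hn]) using 1
    simp
  · convert hasSum_single (f := fun n : ℕ => (n + 1 : ℝ) * ‖(Pi.single 0 (-1) : ℕ → ℂ) n‖ ^ 2 *
      s⁻¹ ^ (2 * (n + 1))) 0 (fun n hn => by simp [hn]) using 1
    simp

end AreaTheorem

section OddPart

lemma hasSum_two_mul_odd_of_hasSum {c : ℕ → ℂ} {t x y : ℂ} (hx : HasSum (fun n => c n * t ^ n) x)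
    (hy : HasSum (fun n => c n * (-t) ^ n) y) :
    HasSum (fun m => 2 * (c (2 * m + 1) * t ^ (2 * m + 1))) (x - y) := by
  have hzero : ∀ n ∉ range (fun m : ℕ => 2 * m + 1), c n * t ^ n - c n * (-t) ^ n = 0 := by
    intro n hn
    have heven : Even n := Nat.not_odd_iff_even.1 fun ⟨m, hm⟩ => hn ⟨m, hm.symm⟩
    rw [heven.neg_pow, sub_self]
  have hinj : Function.Injective fun m : ℕ => 2 * m + 1 := fun m n h => by
    simpa using h
  refine ((hinj.hasSum_iff hzero).2 (hx.sub hy)).congr_fun fun m => ?_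
  simp only [Function.comp_apply, (odd_two_mul_add_one m).neg_pow]
  ring

lemma sum_odd_le_sum_range {a : ℕ → ℝ} (ha : ∀ n, 0 ≤ a n) (N : ℕ) :
    ∑ m ∈ Finset.range N, a (2 * m + 1) ≤ ∑ n ∈ Finset.range (2 * N), a n := by
  rw [← Finset.sum_image (s := Finset.range N) (g := fun m => 2 * m + 1) (f := a)
    (fun m _ n _ h => by simpa using h)]
  exact Finset.sum_le_sum_of_subset_of_nonneg (fun n => by simp; omega) fun n _ _ => ha n

-- Cauchy–Schwarz against the logarithmic series `2 ∑ |t|^{2(2m+1)}/(2m+1)`.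
lemma norm_sub_le_of_sum_mul_norm_taylorCoeff_sq_le {q : ℂ → ℂ}
    (hq : DifferentiableOn ℂ q (ball 0 1)) {t : ℂ} (ht : ‖t‖ < 1)
    (hsum : ∀ N, ∑ n ∈ Finset.range N, n * ‖taylorCoeff q n‖ ^ 2 ≤
      2 * (Real.log (1 + ‖t‖ ^ 2) - Real.log (1 - ‖t‖ ^ 2))) :
    ‖q t - q (-t)‖ ≤ 2 * (Real.log (1 + ‖t‖ ^ 2) - Real.log (1 - ‖t‖ ^ 2)) := by
  set L := Real.log (1 + ‖t‖ ^ 2) - Real.log (1 - ‖t‖ ^ 2)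
  have habs : |‖t‖ ^ 2| < 1 := by
    rw [abs_of_nonneg (by positivity)]
    exact pow_lt_one₀ (norm_nonneg t) ht two_ne_zero
  have hlog : HasSum (fun m : ℕ => 2 * (1 / (2 * m + 1)) * (‖t‖ ^ 2) ^ (2 * m + 1)) L :=
    Real.hasSum_log_sub_log_of_abs_lt_one habs
  have hL : 0 ≤ L := hlog.nonneg fun n => by positivity
  have hodd := hasSum_two_mul_odd_of_hasSum (hasSum_taylorCoeff hq ht)
    (hasSum_taylorCoeff hq (by rwa [norm_neg]))
  refine le_of_tendsto hodd.tendsto_sum_nat.norm (Eventually.of_forall fun N => ?_)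
  have hcoeff : ∑ m ∈ Finset.range N, (2 * m + 1) * ‖taylorCoeff q (2 * m + 1)‖ ^ 2 ≤ 2 * L := by
    refine le_trans (le_of_eq ?_) ((sum_odd_le_sum_range (fun n => by positivity) N).trans
      (hsum (2 * N)))
    push_cast
    rfl
  have hweight : ∑ m ∈ Finset.range N, 2 * (1 / (2 * (m : ℝ) + 1)) * (‖t‖ ^ 2) ^ (2 * m + 1) ≤ L :=
    sum_le_hasSum _ (fun n _ => by positivity) hlog
  have hcauchy : (∑ m ∈ Finset.range N, ‖2 * (taylorCoeff q (2 * m + 1) * t ^ (2 * m + 1))‖) ^ 2 ≤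
      (∑ m ∈ Finset.range N, 2 * ((2 * m + 1) * ‖taylorCoeff q (2 * m + 1)‖ ^ 2)) *
        ∑ m ∈ Finset.range N, 2 * (1 / (2 * (m : ℝ) + 1)) * (‖t‖ ^ 2) ^ (2 * m + 1) := by
    refine Finset.sum_sq_le_sum_mul_sum_of_sq_le_mul _ (fun m _ => by positivity)
      (fun m _ => by positivity) fun m _ => le_of_eq ?_
    simp only [norm_mul, norm_pow, Complex.norm_ofNat]
    field_simp
    ring
  rw [← Finset.mul_sum] at hcauchy
  refine (norm_sum_le _ _).trans (abs_le_of_sq_le_sq' (hcauchy.trans ?_) (by positivity)).2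
  calc _ ≤ 2 * (2 * L) * L := by gcongr
    _ = (2 * L) ^ 2 := by ring

end OddPart

section OddInjective

variable {g : ℂ → ℂ} {t τ : ℂ}

lemma dslope_neg_neg_of_odd {𝕜 E : Type*} [NontriviallyNormedField 𝕜] [NormedAddCommGroup E]
    [NormedSpace 𝕜 E] {g : 𝕜 → E} (hodd : g.Odd) (a z : 𝕜) :
    dslope g (-a) (-z) = dslope g a z := by
  rcases eq_or_ne z a with rfl | hza
  · have hneg : (fun x => g (-x)) = -g := funext hodd
    have hderiv := deriv_comp_neg g z
    rw [hneg, deriv.neg, neg_inj] at hderiv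
    simp only [dslope_same, hderiv]
  · rw [dslope_of_ne _ hza, dslope_of_ne _ (neg_injective.ne hza), slope_def_module,
      slope_def_module, hodd z, hodd a, neg_sub_neg, neg_sub_neg,
      ← neg_sub z a, ← neg_sub (g z) (g a), inv_neg, neg_smul_neg]

lemma exists_dslope_eq_mul_exp (hg : DifferentiableOn ℂ g (ball 0 1)) (hinj : InjOn g (ball 0 1))
    (hodd : g.Odd) (hτ : ‖τ‖ < 1) : ∃ q, DifferentiableOn ℂ q (ball 0 1) ∧
      ∀ z ∈ ball 0 1, dslope g τ z = dslope g (-τ) z * Complex.exp (q z) := by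
  have hτmem : τ ∈ ball (0 : ℂ) 1 := mem_ball_zero_iff.2 hτ
  have hτneg : -τ ∈ ball (0 : ℂ) 1 := by simpa using hτ
  have hne {a z : ℂ} (ha : a ∈ ball (0 : ℂ) 1) (hz : z ∈ ball (0 : ℂ) 1) : dslope g a z ≠ 0 :=
    dslope_ne_zero_of_injOn isOpen_ball hg hinj hz ha
  have hdiff {a : ℂ} (ha : a ∈ ball (0 : ℂ) 1) : DifferentiableOn ℂ (dslope g a) (ball 0 1) :=
    (Complex.differentiableOn_dslope (isOpen_ball.mem_nhds ha)).2 hg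
  obtain ⟨q, hq, -, hqe⟩ := exists_eq_mul_exp (h := fun z => dslope g τ z / dslope g (-τ) z)
    ((hdiff hτmem).div (hdiff hτneg) fun z hz => hne hτneg hz)
    fun z hz => div_ne_zero (hne hτmem hz) (hne hτneg hz)
  have hzero : dslope g (-τ) 0 = dslope g τ 0 := by simpa using dslope_neg_neg_of_odd hodd τ 0
  refine ⟨q, hq, fun z hz => ?_⟩
  have h := hqe z hz
  rwa [hzero, div_self (hne hτmem (mem_ball_self one_pos)), one_mul, div_eq_iff (hne hτneg hz),
    mul_comm] at h

lemma norm_dslope_mul_le_norm_dslope_neg (hg : DifferentiableOn ℂ g (ball 0 1))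
    (hinj : InjOn g (ball 0 1)) (hodd : g.Odd) (ht : ‖t‖ < 1) (hτ : ‖τ‖ = ‖t‖) :
    ‖dslope g τ t‖ * (1 - ‖t‖ ^ 2) ≤ (1 + ‖t‖ ^ 2) * ‖dslope g (-τ) t‖ := by
  have hτ1 : ‖τ‖ < 1 := hτ.trans_lt ht
  have htneg : ‖-t‖ < 1 := by rwa [norm_neg]
  have hone : 0 < 1 - ‖t‖ ^ 2 := sub_pos.2 (pow_lt_one₀ (norm_nonneg t) ht two_ne_zero)
  obtain ⟨q, hq, hqe⟩ := exists_dslope_eq_mul_exp hg hinj hodd hτ1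
  have hbound := norm_sub_le_of_sum_mul_norm_taylorCoeff_sq_le hq ht fun N => by
    refine (sum_mul_norm_taylorCoeff_sq_le_log hg hinj hτ1 (by rwa [norm_neg]) hq hqe N).trans_eq ?_
    have hnorm : ‖1 - τ * conj (-τ)‖ = 1 + ‖t‖ ^ 2 := by
      rw [map_neg, mul_neg, sub_neg_eq_add, Complex.mul_conj', hτ]
      exact_mod_cast Real.norm_of_nonneg (by positivity)
    rw [hnorm, norm_neg, hτ]
    ring
  have hprod : Complex.exp (q t + q (-t)) = 1 := by
    have ht' := hqe t (mem_ball_zero_iff.2 ht)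
    have hneg := hqe (-t) (mem_ball_zero_iff.2 htneg)
    have hswap : dslope g τ (-t) = dslope g (-τ) t := by
      simpa using dslope_neg_neg_of_odd hodd (-τ) t
    rw [hswap, dslope_neg_neg_of_odd hodd τ t, ht', mul_assoc, ← Complex.exp_add] at hneg
    exact (mul_eq_left₀ (dslope_ne_zero_of_injOn isOpen_ball hg hinj (mem_ball_zero_iff.2 ht)
      (mem_ball_zero_iff.2 (by rwa [norm_neg])))).1 hneg.symm
  have hre : (q t).re ≤ Real.log (1 + ‖t‖ ^ 2) - Real.log (1 - ‖t‖ ^ 2) := by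
    have hsum : (q t).re + (q (-t)).re = 0 := by
      simpa [Complex.norm_exp] using congrArg norm hprod
    have hdiff := (Complex.re_le_norm _).trans hbound
    rw [Complex.sub_re] at hdiff
    linarith
  have hexp : ‖Complex.exp (q t)‖ * (1 - ‖t‖ ^ 2) ≤ 1 + ‖t‖ ^ 2 := by
    rw [← Real.log_div (by positivity) hone.ne', Real.le_log_iff_exp_le (by positivity)] at hre
    rwa [Complex.norm_exp, ← le_div_iff₀ hone]
  rw [hqe t (mem_ball_zero_iff.2 ht), norm_mul, mul_assoc, mul_comm]
  gcongr

lemma norm_sub_mul_norm_add_le_of_odd (hg : DifferentiableOn ℂ g (ball 0 1))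
    (hinj : InjOn g (ball 0 1)) (hodd : g.Odd) (ht : ‖t‖ < 1) (hτ : ‖τ‖ = ‖t‖) :
    ‖g t - g τ‖ * ‖t + τ‖ * (1 - ‖t‖ ^ 2) ≤ (1 + ‖t‖ ^ 2) * ‖g t + g τ‖ * ‖t - τ‖ := by
  have hsub : g t - g τ = (t - τ) * dslope g τ t := (sub_smul_dslope g τ t).symm
  have hadd : g t + g τ = (t + τ) * dslope g (-τ) t := by
    simpa [hodd τ] using (sub_smul_dslope g (-τ) t).symm
  rw [hsub, hadd, norm_mul, norm_mul]
  have h := mul_le_mul_of_nonneg_left (norm_dslope_mul_le_norm_dslope_neg hg hinj hodd ht hτ)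
    (mul_nonneg (norm_nonneg (t - τ)) (norm_nonneg (t + τ)))
  linear_combination h

lemma norm_inv_sub_inv_mul_norm_add_le_of_odd (hg : DifferentiableOn ℂ g (ball 0 1))
    (hinj : InjOn g (ball 0 1)) (hodd : g.Odd) (ht : ‖t‖ < 1) (ht0 : t ≠ 0) (hτ : ‖τ‖ = ‖t‖) :
    ‖(g τ)⁻¹ - (g t)⁻¹‖ * ‖t + τ‖ * (1 - ‖t‖ ^ 2) ≤
      (1 + ‖t‖ ^ 2) * ‖(g t)⁻¹ + (g τ)⁻¹‖ * ‖t - τ‖ := by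
  have hτ0 : τ ≠ 0 := norm_ne_zero_iff.1 (hτ ▸ norm_ne_zero_iff.2 ht0)
  have hne {z : ℂ} (hz : ‖z‖ < 1) (hz0 : z ≠ 0) : g z ≠ 0 := fun h =>
    hz0 (hinj (mem_ball_zero_iff.2 hz) (mem_ball_self one_pos) (h.trans hodd.map_zero.symm))
  have hgt := hne ht ht0
  have hgτ := hne (hτ.trans_lt ht) hτ0
  rw [inv_sub_inv hgτ hgt, inv_add_inv hgt hgτ, mul_comm (g τ), norm_div, norm_div,
    div_mul_eq_mul_div, div_mul_eq_mul_div, mul_div_assoc', div_mul_eq_mul_div]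
  exact div_le_div_of_nonneg_right (norm_sub_mul_norm_add_le_of_odd hg hinj hodd ht hτ)
    (norm_nonneg _)

end OddInjective

/-! ### Square roots of univalent functions -/

/-- `γ` is normalised by `γ 0 = 1` and `z ↦ z * γ z ^ 2` is univalent on the unit disc, so that `γ`
is the square root of `S z / z` for a normalised univalent function `S`. -/
structure IsUnivalentSqrt (γ : ℂ → ℂ) : Prop where
  differentiableOn : DifferentiableOn ℂ γ (ball 0 1)
  map_zero : γ 0 = 1
  injOn : InjOn (fun z => z * γ z ^ 2) (ball 0 1)

/-- The quotient `(1 - 1 / γ x) / x`, extended analytically to `0`; for the Koebe function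
`γ x = 1 / (1 - x)` it is identically `1`. -/
def koebeRatio (γ : ℂ → ℂ) : ℂ → ℂ := -dslope (fun z => (γ z)⁻¹) 0

/-- The odd square-root transform `t ↦ √(S (t ^ 2))` of `S z = z * γ z ^ 2`. -/
def sqrtTransform (γ : ℂ → ℂ) (t : ℂ) : ℂ := t * γ (t ^ 2)

lemma inv_eq_one_sub_mul_koebeRatio {γ : ℂ → ℂ} (hγ : γ 0 = 1) (x : ℂ) :
    (γ x)⁻¹ = 1 - x * koebeRatio γ x := by
  have := sub_smul_dslope (fun z => (γ z)⁻¹) 0 x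
  simp only [sub_zero, smul_eq_mul, hγ, inv_one] at this
  rw [koebeRatio, Pi.neg_apply]
  linear_combination -this

lemma sq_mem_unitBall {z : ℂ} (hz : z ∈ ball (0 : ℂ) 1) : z ^ 2 ∈ ball (0 : ℂ) 1 := by
  rw [mem_ball_zero_iff] at hz ⊢
  rw [norm_pow]
  exact pow_lt_one₀ (norm_nonneg z) hz two_ne_zero

lemma sqrtTransform_odd (γ : ℂ → ℂ) : (sqrtTransform γ).Odd := fun t => by
  simp only [sqrtTransform, neg_sq, neg_mul]

namespace IsUnivalentSqrt

variable {γ : ℂ → ℂ}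

lemma ne_zero (hγ : IsUnivalentSqrt γ) {z : ℂ} (hz : z ∈ ball 0 1) : γ z ≠ 0 := by
  intro h0
  have hz0 : z = 0 := hγ.injOn hz (mem_ball_self one_pos) (by simp [h0])
  rw [hz0, hγ.map_zero] at h0
  exact one_ne_zero h0

lemma differentiableOn_koebeRatio (hγ : IsUnivalentSqrt γ) :
    DifferentiableOn ℂ (koebeRatio γ) (ball 0 1) :=
  ((Complex.differentiableOn_dslope (ball_mem_nhds 0 one_pos)).2
    (hγ.differentiableOn.inv fun _ => hγ.ne_zero)).neg

lemma differentiableOn_sqrtTransform (hγ : IsUnivalentSqrt γ) :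
    DifferentiableOn ℂ (sqrtTransform γ) (ball 0 1) :=
  differentiableOn_id.mul
    (hγ.differentiableOn.comp (differentiableOn_id.pow 2) fun _ => sq_mem_unitBall)

lemma injOn_sqrtTransform (hγ : IsUnivalentSqrt γ) : InjOn (sqrtTransform γ) (ball 0 1) := by
  intro z hz w hw e
  have hsq : z ^ 2 = w ^ 2 := by
    refine hγ.injOn (sq_mem_unitBall hz) (sq_mem_unitBall hw) ?_
    simpa only [sqrtTransform, ← mul_pow] using congrArg (· ^ 2) e
  simp only [sqrtTransform, hsq] at e
  exact mul_right_cancel₀ (hγ.ne_zero (sq_mem_unitBall hw)) e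

lemma inv_sqrtTransform (hγ : IsUnivalentSqrt γ) (z : ℂ) :
    (sqrtTransform γ z)⁻¹ = z⁻¹ - z * koebeRatio γ (z ^ 2) := by
  rcases eq_or_ne z 0 with rfl | hz
  · simp [sqrtTransform]
  · rw [sqrtTransform, mul_inv, inv_eq_one_sub_mul_koebeRatio hγ.map_zero]
    field_simp

lemma sum_mul_norm_taylorCoeff_koebeRatio_sq_le_one (hγ : IsUnivalentSqrt γ) (N : ℕ) :
    ∑ j ∈ Finset.range N, (2 * j + 1 : ℝ) * ‖taylorCoeff (koebeRatio γ) j‖ ^ 2 ≤ 1 := by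
  set φ : ℂ → ℂ := fun t => t * koebeRatio γ (t ^ 2)
  have hdiff : DifferentiableOn ℂ φ (ball 0 1) := differentiableOn_id.mul
    (hγ.differentiableOn_koebeRatio.comp (differentiableOn_id.pow 2) fun _ => sq_mem_unitBall)
  have hcoeff (j : ℕ) : taylorCoeff φ (2 * j + 1) = taylorCoeff (koebeRatio γ) j := by
    have hinj : Function.Injective fun j : ℕ => 2 * j + 1 := fun i j h => by simpa using h
    have hsum (z : ℂ) (hz : ‖z‖ < 1) : HasSum (fun n => Function.extend (fun j : ℕ => 2 * j + 1)
        (taylorCoeff (koebeRatio γ)) 0 n * z ^ n) (φ z) := by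
      rw [← hinj.hasSum_iff fun n hn => by
        rw [Function.extend_apply' _ _ _ hn, Pi.zero_apply, zero_mul]]
      refine ((hasSum_taylorCoeff hγ.differentiableOn_koebeRatio (mem_ball_zero_iff.1
        (sq_mem_unitBall (mem_ball_zero_iff.2 hz)))).mul_left z).congr_fun fun n => ?_
      simp only [Function.comp_apply, hinj.extend_apply]
      ring
    rw [taylorCoeff_eq_of_hasSum one_pos hsum, hinj.extend_apply]
  have harea := sum_mul_norm_taylorCoeff_sq_le_one hγ.differentiableOn_sqrtTransform
    hγ.injOn_sqrtTransform (by simp [sqrtTransform]) hdiff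
    (fun z _ _ => hγ.inv_sqrtTransform z) (2 * N)
  have hodd := sum_odd_le_sum_range (a := fun n => n * ‖taylorCoeff φ n‖ ^ 2)
    (fun n => by positivity) N
  refine le_trans (le_of_eq ?_) (hodd.trans harea)
  refine Finset.sum_congr rfl fun j _ => ?_
  rw [hcoeff]
  push_cast
  ring

end IsUnivalentSqrt

section Harnack

open InnerProductSpace

lemma harnack_le {u : ℂ → ℝ} {c w : ℂ} {R : ℝ} (hu : HarmonicContOnCl u (ball c R))
    (hpos : ∀ z ∈ sphere c R, 0 ≤ u z) (hw : w ∈ ball c R) :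
    (R - ‖w - c‖) / (R + ‖w - c‖) * u c ≤ u w := by
  have hR : |R| = R := abs_of_pos (pos_of_mem_ball hw)
  have hcont : ContinuousOn u (sphere c |R|) := by
    rw [hR]
    exact hu.continuousOn_ball.mono sphere_subset_closedBall
  have hker : ContinuousOn (Complex.re ∘ herglotzRieszKernel c w) (sphere c |R|) :=
    Complex.continuous_re.comp_continuousOn (continuousOn_herglotzRieszKernel_sphere hw)
  have hmean : Real.circleAverage u c R = u c :=
    InnerProductSpace.HarmonicContOnCl.circleAverage_eq (hR.symm ▸ hu)
  rw [← hu.circleAverage_re_herglotzRieszKernel_smul hw,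
    ← hmean, ← smul_eq_mul, ← Real.circleAverage_fun_smul]
  refine Real.circleAverage_mono (hcont.fun_const_smul _).circleIntegrable'
    (hker.smul hcont).circleIntegrable' fun z hz => ?_
  rw [hR] at hz
  exact mul_le_mul_of_nonneg_right (le_re_herglotzRieszKernel hz hw) (hpos z hz)

lemma harnack_re_le {h : ℂ → ℂ} {c w : ℂ} {R R' : ℝ} (hh : DifferentiableOn ℂ h (ball c R'))
    (hRR' : R < R') (hpos : ∀ z ∈ sphere c R, 0 ≤ (h z).re) (hw : w ∈ ball c R) :
    (R - ‖w - c‖) / (R + ‖w - c‖) * (h c).re ≤ (h w).re := by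
  refine harnack_le (u := fun z => (h z).re) (HarmonicOnNhd.harmonicContOnCl fun z hz => ?_) hpos hw
  have hz' := closedBall_subset_ball hRR' (closure_ball_subset_closedBall hz)
  exact (hh.analyticAt (isOpen_ball.mem_nhds hz')).harmonicAt_re

end Harnack

section OddSeries

lemma abs_im_pow_le (t : ℂ) (n : ℕ) : |(t ^ n).im| ≤ n * ‖t‖ ^ (n - 1) * |t.im| := by
  induction n with
  | zero => simp
  | succ n ih =>
    have hre : |(t ^ n).re| ≤ ‖t‖ ^ n := (Complex.abs_re_le_norm _).trans_eq (norm_pow t n)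
    rw [pow_succ, Complex.mul_im]
    calc |(t ^ n).re * t.im + (t ^ n).im * t.re|
        ≤ |(t ^ n).re| * |t.im| + |(t ^ n).im| * |t.re| := by
          rw [← abs_mul, ← abs_mul]
          exact abs_add_le _ _
      _ ≤ ‖t‖ ^ n * |t.im| + n * ‖t‖ ^ (n - 1) * |t.im| * ‖t‖ := by
          gcongr
          exact Complex.abs_re_le_norm t
      _ = (n + 1 : ℕ) * ‖t‖ ^ (n + 1 - 1) * |t.im| := by
          rcases n with _ | n
          · simp
          · rw [Nat.add_sub_cancel, Nat.add_sub_cancel]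
            push_cast
            ring

variable {a A : ℕ → ℝ} {t U : ℂ} {y : ℝ}

lemma abs_im_sub_le_of_hasSum_odd (ha : ∀ n, |a n| ≤ A n)
    (hA : ∀ N, ∑ j ∈ Finset.range N, A (j + 1) * ((2 * (j + 1 : ℕ) + 1) * ‖t‖ ^ (2 * (j + 1))) ≤ y)
    (hU : HasSum (fun j : ℕ => (a j : ℂ) * t ^ (2 * j + 1)) U) :
    |(U - a 0 * t).im| ≤ y * |t.im| := by
  have hlim := ((hasSum_nat_add_iff' 1).2 hU).tendsto_sum_nat
  simp only [Finset.range_one, Finset.sum_singleton, mul_zero, zero_add, pow_one] at hlim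
  refine le_of_tendsto ((Complex.continuous_im.tendsto _).comp hlim).abs (.of_forall fun N => ?_)
  simp only [Function.comp_apply, Complex.im_sum]
  calc |∑ j ∈ Finset.range N, ((a (j + 1) : ℂ) * t ^ (2 * (j + 1) + 1)).im|
      ≤ ∑ j ∈ Finset.range N, |((a (j + 1) : ℂ) * t ^ (2 * (j + 1) + 1)).im| :=
        Finset.abs_sum_le_sum_abs _ _
    _ ≤ ∑ j ∈ Finset.range N,
          A (j + 1) * ((2 * (j + 1 : ℕ) + 1) * ‖t‖ ^ (2 * (j + 1))) * |t.im| := by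
        refine Finset.sum_le_sum fun j _ => ?_
        have hpow := abs_im_pow_le t (2 * (j + 1) + 1)
        rw [Nat.add_sub_cancel, Nat.cast_add_one, Nat.cast_mul, Nat.cast_two] at hpow
        rw [Complex.im_ofReal_mul, abs_mul, mul_assoc]
        exact mul_le_mul (ha _) hpow (abs_nonneg _) ((abs_nonneg _).trans (ha _))
    _ ≤ y * |t.im| := by
        rw [← Finset.sum_mul]
        exact mul_le_mul_of_nonneg_right (hA N) (abs_nonneg _)

lemma abs_re_sub_le_of_hasSum_odd (ha : ∀ n, |a n| ≤ A n)
    (hA : ∀ N, ∑ j ∈ Finset.range N, A (j + 1) * ((2 * (j + 1 : ℕ) + 1) * ‖t‖ ^ (2 * (j + 1))) ≤ y)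
    (hU : HasSum (fun j : ℕ => (a j : ℂ) * t ^ (2 * j + 1)) U) :
    |(U - a 0 * t).re| ≤ y * |t.re| := by
  have hrot := abs_im_sub_le_of_hasSum_odd (a := fun n => (-1) ^ n * a n) (A := A)
    (t := Complex.I * t) (U := Complex.I * U) (y := y) (by simpa [abs_mul] using ha)
    (by simpa using hA) ?_
  · have hre : (Complex.I * U - ((-1) ^ 0 * a 0 : ℝ) * (Complex.I * t)).im = (U - a 0 * t).re := by
      simp
    rw [hre] at hrot
    simpa using hrot
  · refine (hU.mul_left Complex.I).congr_fun fun j => ?_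
    rw [mul_pow, pow_succ, pow_mul, Complex.I_sq]
    have hsign : ((-1 : ℂ) ^ j) * (-1) ^ j = 1 := by rw [← mul_pow]; norm_num
    push_cast
    linear_combination a j * Complex.I * t ^ (2 * j + 1) * hsign

lemma sum_mul_le_of_sum_mul_sq_le {w : ℕ → ℝ} {T : ℝ}
    (hA : ∀ N, ∑ j ∈ Finset.range N, (2 * j + 1) * A j ^ 2 ≤ 1)
    (hT : HasSum (fun j : ℕ => w (j + 1) ^ 2 / (2 * (j + 1 : ℕ) + 1)) T)
    (hy : 0 ≤ y) (hTy : (1 - A 0 ^ 2) * T ≤ y ^ 2) (N : ℕ) :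
    ∑ j ∈ Finset.range N, A (j + 1) * w (j + 1) ≤ y := by
  have hcs : (∑ j ∈ Finset.range N, A (j + 1) * w (j + 1)) ^ 2 ≤
      (∑ j ∈ Finset.range N, (2 * (j + 1 : ℕ) + 1) * A (j + 1) ^ 2) *
        ∑ j ∈ Finset.range N, w (j + 1) ^ 2 / (2 * (j + 1 : ℕ) + 1) := by
    refine Finset.sum_sq_le_sum_mul_sum_of_sq_le_mul _ (fun _ _ => by positivity)
      (fun _ _ => by positivity) fun j _ => le_of_eq ?_
    field_simp
  have htail : ∑ j ∈ Finset.range N, (2 * ((j + 1 : ℕ) : ℝ) + 1) * A (j + 1) ^ 2 ≤ 1 - A 0 ^ 2 := by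
    have := hA (N + 1)
    rw [Finset.sum_range_succ'] at this
    simp only [Nat.cast_zero, mul_zero, zero_add, one_mul] at this
    linarith
  have htail0 : 0 ≤ 1 - A 0 ^ 2 := (Finset.sum_nonneg fun _ _ => by positivity).trans htail
  have hwT := sum_le_hasSum (Finset.range N) (fun _ _ => by positivity) hT
  refine (abs_le_of_sq_le_sq' (hcs.trans (le_trans ?_ hTy)) hy).2
  exact mul_le_mul htail hwT (Finset.sum_nonneg fun _ _ => by positivity) htail0

end OddSeries

section CoeffParts

variable {R : ℂ → ℂ} {r : ℝ}

/-- The power series whose coefficients are the real parts of the Taylor coefficients of `R`. -/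
def reCoeffPart (R : ℂ → ℂ) (x : ℂ) : ℂ := (R x + conj (R (conj x))) / 2

/-- The power series whose coefficients are the imaginary parts of the Taylor coefficients
of `R`. -/
def imCoeffPart (R : ℂ → ℂ) (x : ℂ) : ℂ := (R x - conj (R (conj x))) / (2 * Complex.I)

lemma reCoeffPart_add_I_mul_imCoeffPart (R : ℂ → ℂ) (x : ℂ) :
    reCoeffPart R x + Complex.I * imCoeffPart R x = R x := by
  unfold reCoeffPart imCoeffPart
  field_simp
  ring

lemma conj_reCoeffPart_add_I_mul_conj_imCoeffPart (R : ℂ → ℂ) (x : ℂ) :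
    conj (reCoeffPart R x) + Complex.I * conj (imCoeffPart R x) = R (conj x) := by
  simp only [reCoeffPart, imCoeffPart, map_div₀, map_add, map_sub, map_mul, map_ofNat,
    Complex.conj_conj, Complex.conj_I]
  field_simp
  ring

lemma re_reCoeffPart_ofReal (R : ℂ → ℂ) (x : ℝ) : (reCoeffPart R x).re = (R x).re := by
  simp [reCoeffPart]

lemma differentiableOn_conj_comp_conj (hR : DifferentiableOn ℂ R (ball 0 r)) :
    DifferentiableOn ℂ (fun x => conj (R (conj x))) (ball 0 r) := by
  intro z hz
  have hz' : conj z ∈ ball (0 : ℂ) r := by simpa using hz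
  have := (hR.differentiableAt (isOpen_ball.mem_nhds hz')).conj_conj
  rw [Complex.conj_conj] at this
  exact this.differentiableWithinAt

lemma differentiableOn_reCoeffPart (hR : DifferentiableOn ℂ R (ball 0 r)) :
    DifferentiableOn ℂ (reCoeffPart R) (ball 0 r) :=
  (hR.add (differentiableOn_conj_comp_conj hR)).div_const 2

lemma hasSum_conj_comp_conj (hR : DifferentiableOn ℂ R (ball 0 r)) {x : ℂ} (hx : ‖x‖ < r) :
    HasSum (fun n => conj (taylorCoeff R n) * x ^ n) (conj (R (conj x))) := by
  have hx' : ‖conj x‖ < r := by simpa using hx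
  refine ((hasSum_taylorCoeff hR hx').map (starRingEnd ℂ) Complex.continuous_conj).congr_fun
    fun n => ?_
  simp

lemma hasSum_reCoeffPart (hR : DifferentiableOn ℂ R (ball 0 r)) {x : ℂ} (hx : ‖x‖ < r) :
    HasSum (fun n => ((taylorCoeff R n).re : ℂ) * x ^ n) (reCoeffPart R x) := by
  refine (((hasSum_taylorCoeff hR hx).add (hasSum_conj_comp_conj hR hx)).div_const 2).congr_fun
    fun n => ?_
  rw [Complex.re_eq_add_conj]
  ring

lemma hasSum_imCoeffPart (hR : DifferentiableOn ℂ R (ball 0 r)) {x : ℂ} (hx : ‖x‖ < r) :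
    HasSum (fun n => ((taylorCoeff R n).im : ℂ) * x ^ n) (imCoeffPart R x) := by
  refine (((hasSum_taylorCoeff hR hx).sub (hasSum_conj_comp_conj hR hx)).div_const
    (2 * Complex.I)).congr_fun fun n => ?_
  rw [Complex.im_eq_sub_conj]
  ring

end CoeffParts

section Stability

lemma neg_sq_le_mul_add_of_sq_sub_le {A X Y Z : ℝ} (hXY : |X| + |Y| ≤ |A|)
    (h : (A - X) ^ 2 ≤ (A + Y) ^ 2 + Z ^ 2) : -Z ^ 2 ≤ A * (X + Y) := by
  have hX := abs_le.1 (le_refl |X|)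
  have hY := abs_le.1 (le_refl |Y|)
  have hfac : 0 ≤ (X + Y) * (2 * A + Y - X) + Z ^ 2 := by linarith
  rcases le_total 0 A with hA | hA
  · rw [abs_of_nonneg hA] at hXY
    rcases le_or_gt 0 (X + Y) with hs | hs
    · linarith [mul_nonneg hA hs, sq_nonneg Z]
    · have : A ≤ 2 * A + Y - X := by linarith
      nlinarith
  · rw [abs_of_nonpos hA] at hXY
    rcases le_or_gt (X + Y) 0 with hs | hs
    · linarith [mul_nonneg_of_nonpos_of_nonpos hA hs, sq_nonneg Z]
    · have : 2 * A + Y - X ≤ A := by linarith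
      nlinarith

lemma sq_re_mul_sub_le_of_norm_mul_le {t W V P Q : ℂ} (ht : ‖t‖ = 1 / 2)
    (hP : P = 4 * conj t - t + W - Complex.I * V)
    (hQ : Q = 4 * t - conj t + conj W - Complex.I * conj V)
    (h : ‖Q - P‖ * ‖t + conj t‖ * (1 - ‖t‖ ^ 2) ≤ (1 + ‖t‖ ^ 2) * ‖P + Q‖ * ‖t - conj t‖) :
    (15 / 4 * (t.re * t.im) - 3 / 4 * t.re * W.im) ^ 2 ≤
      (15 / 4 * (t.re * t.im) + 5 / 4 * t.im * W.re) ^ 2 + (5 / 4 * t.im * V.re) ^ 2 := by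
  have hre : ‖t + conj t‖ = 2 * |t.re| := by rw [Complex.add_conj]; simp
  have him : ‖t - conj t‖ = 2 * |t.im| := by rw [Complex.sub_conj]; simp
  have hQP : |10 * t.im - 2 * W.im| ≤ ‖Q - P‖ := by
    refine le_trans (le_of_eq ?_) (Complex.abs_im_le_norm (Q - P))
    congr 1
    simp [hP, hQ]
    ring
  have hPQ : ‖P + Q‖ ^ 2 = (6 * t.re + 2 * W.re) ^ 2 + (2 * V.re) ^ 2 := by
    rw [← Complex.normSq_eq_norm_sq, Complex.normSq_apply]
    simp [hP, hQ]
    ring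
  rw [hre, him, ht] at h
  have hle : |10 * t.im - 2 * W.im| * (2 * |t.re|) * (3 / 4) ≤ 5 / 4 * ‖P + Q‖ * (2 * |t.im|) := by
    have := mul_le_mul_of_nonneg_right hQP (mul_nonneg two_pos.le (abs_nonneg t.re))
    linarith
  have hsq := pow_le_pow_left₀ (by positivity) hle 2
  simp only [mul_pow, sq_abs, hPQ] at hsq
  linarith

lemma neg_sq_mul_sq_le_of_sq_sub_le {p q u v w s y : ℝ} (hs : s ≤ 15 / 8)
    (hu : |u| ≤ s * |p|) (hv : |v| ≤ s * |q|) (hw : |w| ≤ y * |p|)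
    (h : (15 / 4 * (p * q) - 3 / 4 * p * v) ^ 2 ≤
      (15 / 4 * (p * q) + 5 / 4 * q * u) ^ 2 + (5 / 4 * q * w) ^ 2) :
    -(25 / 16 * (p * q) ^ 2 * y ^ 2) ≤ 15 / 4 * (p * q) * (3 / 4 * p * v + 5 / 4 * q * u) := by
  have hsmall : |3 / 4 * p * v| + |5 / 4 * q * u| ≤ |15 / 4 * (p * q)| := by
    simp only [abs_mul, abs_of_pos (by norm_num : (0 : ℝ) < 3 / 4),
      abs_of_pos (by norm_num : (0 : ℝ) < 5 / 4), abs_of_pos (by norm_num : (0 : ℝ) < 15 / 4)]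
    calc 3 / 4 * |p| * |v| + 5 / 4 * |q| * |u|
        ≤ 3 / 4 * |p| * (s * |q|) + 5 / 4 * |q| * (s * |p|) := by gcongr
      _ = s * (2 * (|p| * |q|)) := by ring
      _ ≤ 15 / 8 * (2 * (|p| * |q|)) := by gcongr
      _ = 15 / 4 * (|p| * |q|) := by ring
  have hw2 : w ^ 2 ≤ (y * |p|) ^ 2 := sq_le_sq' (abs_le.1 hw).1 (abs_le.1 hw).2
  rw [mul_pow, sq_abs] at hw2
  have hqw := mul_le_mul_of_nonneg_left hw2 (sq_nonneg q)
  linarith [neg_sq_le_mul_add_of_sq_sub_le hsmall h]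

lemma hasSum_sq_div_two_mul_add_one_quarter :
    HasSum (fun j : ℕ => ((2 * ((j + 1 : ℕ) : ℝ) + 1) * (1 / 4) ^ (j + 1)) ^ 2 /
      (2 * (j + 1 : ℕ) + 1)) (47 / 225 : ℝ) := by
  have hgeom := hasSum_geometric_of_lt_one (r := (1 / 16 : ℝ)) (by norm_num) (by norm_num)
  have hcoe := hasSum_coe_mul_geometric_of_norm_lt_one (r := (1 / 16 : ℝ)) (by norm_num)
  have hsum := ((hcoe.mul_left 2).add (hgeom.mul_left 3)).mul_left (1 / 16)
  have hval : (1 / 16 : ℝ) * (2 * (1 / 16 / (1 - 1 / 16) ^ 2) + 3 * (1 - 1 / 16)⁻¹) = 47 / 225 := by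
    norm_num
  rw [hval] at hsum
  refine hsum.congr_fun fun j => ?_
  have hpow : (1 / 16 : ℝ) ^ j = ((1 / 4) ^ j) ^ 2 := by rw [← pow_mul, mul_comm, pow_mul]; norm_num
  rw [hpow]
  push_cast
  field_simp
  ring

end Stability

section KoebeRatioStability

variable {γ : ℂ → ℂ} {c : ℝ}

lemma abs_sub_mul_le_of_hasSum_koebeRatio (hγ : IsUnivalentSqrt γ) (hc : koebeRatio γ 0 = c)
    (hc0 : 0 ≤ c) (hc1 : c ≤ 1) {y : ℝ} (hy : 0 ≤ y) (hyc : y ^ 2 = 94 / 225 * (1 - c)) {a : ℕ → ℝ}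
    (ha : ∀ n, |a n| ≤ ‖taylorCoeff (koebeRatio γ) n‖) {t U : ℂ} (ht : ‖t‖ = 1 / 2)
    (hU : HasSum (fun j : ℕ => (a j : ℂ) * (t ^ 2) ^ j) U) :
    |(t * U - a 0 * t).re| ≤ y * |t.re| ∧ |(t * U - a 0 * t).im| ≤ y * |t.im| := by
  have hpow (j : ℕ) : ‖t‖ ^ (2 * j) = (1 / 4) ^ j := by rw [ht, pow_mul]; norm_num
  have hA0 : ‖taylorCoeff (koebeRatio γ) 0‖ = c := by
    rw [taylorCoeff_zero, hc, Complex.norm_of_nonneg hc0]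
  have hA (N : ℕ) : ∑ j ∈ Finset.range N, ‖taylorCoeff (koebeRatio γ) (j + 1)‖ *
      ((2 * (j + 1 : ℕ) + 1) * ‖t‖ ^ (2 * (j + 1))) ≤ y := by
    simp only [hpow]
    refine sum_mul_le_of_sum_mul_sq_le (A := fun j => ‖taylorCoeff (koebeRatio γ) j‖)
      (w := fun j => (2 * (j : ℝ) + 1) * (1 / 4) ^ j)
      hγ.sum_mul_norm_taylorCoeff_koebeRatio_sq_le_one hasSum_sq_div_two_mul_add_one_quarter hy ?_ N
    simp only [hA0, hyc]
    nlinarith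
  have hsum : HasSum (fun j : ℕ => (a j : ℂ) * t ^ (2 * j + 1)) (t * U) :=
    (hU.mul_left t).congr_fun fun j => by ring
  exact ⟨abs_re_sub_le_of_hasSum_odd ha hA hsum, abs_im_sub_le_of_hasSum_odd ha hA hsum⟩

lemma sq_re_mul_sub_le_koebeRatio (hγ : IsUnivalentSqrt γ) {t W V : ℂ} (ht : ‖t‖ = 1 / 2)
    (hW : W = t * (1 - reCoeffPart (koebeRatio γ) (t ^ 2)))
    (hV : V = t * imCoeffPart (koebeRatio γ) (t ^ 2)) :
    (15 / 4 * (t.re * t.im) - 3 / 4 * t.re * W.im) ^ 2 ≤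
      (15 / 4 * (t.re * t.im) + 5 / 4 * t.im * W.re) ^ 2 + (5 / 4 * t.im * V.re) ^ 2 := by
  have ht0 : t ≠ 0 := norm_pos_iff.1 (by rw [ht]; norm_num)
  have hinv : t⁻¹ = 4 * conj t := by
    refine inv_eq_of_mul_eq_one_left ?_
    rw [mul_assoc, Complex.conj_mul', ht]
    norm_num
  refine sq_re_mul_sub_le_of_norm_mul_le ht ?_ ?_
    (norm_inv_sub_inv_mul_norm_add_le_of_odd hγ.differentiableOn_sqrtTransform
      hγ.injOn_sqrtTransform (sqrtTransform_odd γ) (t := t) (τ := conj t) (by rw [ht]; norm_num) ht0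
      (RCLike.norm_conj t))
  · rw [hγ.inv_sqrtTransform, hinv, ← reCoeffPart_add_I_mul_imCoeffPart (koebeRatio γ), hW, hV]
    ring
  · rw [hγ.inv_sqrtTransform, ← map_pow, ← map_inv₀, hinv,
      ← conj_reCoeffPart_add_I_mul_conj_imCoeffPart (koebeRatio γ), hW, hV]
    simp only [map_mul, map_sub, map_one, map_ofNat, Complex.conj_conj]
    ring

lemma im_sq_sub_mul_eq {t : ℂ} (ht : ‖t‖ = 1 / 2) (u : ℂ) :
    ((t ^ 2 - 1 / 16) * u).im = 3 / 4 * t.re * (t * u).im + 5 / 4 * t.im * (t * u).re := by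
  have hfac : t ^ 2 - 1 / 16 = ⟨3 / 4 * t.re, 5 / 4 * t.im⟩ * t := by
    have h16 : (1 / 16 : ℂ) = conj t / 4 * t := by
      rw [div_mul_eq_mul_div, Complex.conj_mul', ht]
      norm_num
    rw [h16, sq, ← sub_mul]
    congr 1
    apply Complex.ext <;> simp <;> ring
  rw [hfac, mul_assoc, Complex.mul_im]

lemma neg_im_sq_le_im_mul_reCoeffPart (hγ : IsUnivalentSqrt γ) (hc : koebeRatio γ 0 = c)
    (hc0 : 0.98 ≤ c) (hc1 : c ≤ 1) {x : ℂ} (hx : ‖x‖ = 1 / 4) :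
    -(47 / 540 * (1 - c) * x.im ^ 2) ≤
      x.im * ((x - 1 / 16) * (1 - reCoeffPart (koebeRatio γ) x)).im := by
  norm_num at hc0
  obtain ⟨t, rfl⟩ := IsAlgClosed.exists_pow_nat_eq x two_pos
  have ht : ‖t‖ = 1 / 2 := by
    rw [norm_pow] at hx
    nlinarith [norm_nonneg t]
  have hx1 : ‖t ^ 2‖ < 1 := by rw [hx]; norm_num
  have hRdiff := hγ.differentiableOn_koebeRatio
  have hcoeff0 : taylorCoeff (koebeRatio γ) 0 = c := (taylorCoeff_zero _).trans hc
  obtain ⟨y, hy, hyc⟩ : ∃ y : ℝ, 0 ≤ y ∧ y ^ 2 = 94 / 225 * (1 - c) :=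
    ⟨√(94 / 225 * (1 - c)), Real.sqrt_nonneg _, Real.sq_sqrt (by linarith)⟩
  obtain ⟨hUre, hUim⟩ := abs_sub_mul_le_of_hasSum_koebeRatio hγ hc (by linarith) hc1 hy hyc
    (fun n => Complex.abs_re_le_norm _) ht (hasSum_reCoeffPart hRdiff hx1)
  obtain ⟨hVre, -⟩ := abs_sub_mul_le_of_hasSum_koebeRatio hγ hc (by linarith) hc1 hy hyc
    (fun n => Complex.abs_im_le_norm _) ht (hasSum_imCoeffPart hRdiff hx1)
  simp only [hcoeff0, Complex.ofReal_re, Complex.ofReal_im, Complex.ofReal_zero, zero_mul,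
    sub_zero] at hUre hUim hVre
  have hsq := sq_re_mul_sub_le_koebeRatio hγ ht rfl rfl
  set W := t * (1 - reCoeffPart (koebeRatio γ) (t ^ 2)) with hW
  have hWU : W = ((1 - c : ℝ) : ℂ) * t - (t * reCoeffPart (koebeRatio γ) (t ^ 2) - c * t) := by
    push_cast [hW]
    ring
  have hWre : |W.re| ≤ (1 - c + y) * |t.re| := by
    rw [hWU, Complex.sub_re, Complex.re_ofReal_mul]
    refine (abs_sub _ _).trans ?_
    rw [abs_mul, abs_of_nonneg (sub_nonneg.2 hc1)]
    linarith
  have hWim : |W.im| ≤ (1 - c + y) * |t.im| := by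
    rw [hWU, Complex.sub_im, Complex.im_ofReal_mul]
    refine (abs_sub _ _).trans ?_
    rw [abs_mul, abs_of_nonneg (sub_nonneg.2 hc1)]
    linarith
  have hmain := neg_sq_mul_sq_le_of_sq_sub_le (by nlinarith) hWre hWim hVre hsq
  rw [im_sq_sub_mul_eq ht, ← hW, sq t, Complex.mul_im]
  rw [hyc] at hmain
  linarith

lemma re_nonneg_of_neg_im_sq_le {x D : ℂ} {K : ℝ} (hx : ‖x‖ = 1 / 4)
    (h : -(K * x.im ^ 2) ≤ x.im * ((x - 1 / 16) * D).im) :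
    0 ≤ ((D + K) * (1 - 16 * x ^ 2) / (1 - x)).re := by
  have hre : x.re ^ 2 = 1 / 16 - x.im ^ 2 := by
    have := Complex.sq_norm x
    rw [Complex.normSq_apply, hx] at this
    linarith
  rw [Complex.div_re, ← add_div]
  refine div_nonneg ?_ (Complex.normSq_nonneg _)
  suffices hid : ((D + K) * (1 - 16 * x ^ 2)).re * (1 - x).re +
      ((D + K) * (1 - 16 * x ^ 2)).im * (1 - x).im =
      32 * (x.im * ((x - 1 / 16) * D).im + K * x.im ^ 2) by
    rw [hid]
    linarith
  have h16 : (1 / 16 : ℂ) = ((1 / 16 : ℝ) : ℂ) := by push_cast; ring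
  have h16' : (16 : ℂ) = ((16 : ℝ) : ℂ) := by push_cast; ring
  rw [h16, h16']
  simp only [sq, Complex.mul_re, Complex.mul_im, Complex.sub_re, Complex.sub_im,
    Complex.add_re, Complex.add_im, Complex.ofReal_re, Complex.ofReal_im, Complex.one_re,
    Complex.one_im]
  linear_combination (-(16 * (D.re + K) * (1 - x.re)) - 16 * D.im * x.im) * hre

lemma re_koebeRatio_le (hγ : IsUnivalentSqrt γ) (hc : koebeRatio γ 0 = c)
    (hc0 : 0.98 ≤ c) (hc1 : c ≤ 1) {r : ℝ} (hr : 0.1715 < r) (hr' : r < 0.1716) :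
    (koebeRatio γ r).re ≤ 1 - 0.22 * (1 - c) := by
  norm_num at hr hr'
  set K : ℝ := 47 / 540 * (1 - c) with hK
  set h : ℂ → ℂ := fun x =>
    ((1 - reCoeffPart (koebeRatio γ) x) + K) * (1 - 16 * x ^ 2) / (1 - x) with hh
  have hdiff : DifferentiableOn ℂ h (ball 0 1) := by
    refine DifferentiableOn.div ((((differentiableOn_const _).sub (differentiableOn_reCoeffPart
      hγ.differentiableOn_koebeRatio)).add_const _).mul (by fun_prop)) (by fun_prop) ?_
    rintro x hx h1
    rw [← sub_eq_zero.1 h1] at hx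
    simp at hx
  have hpos (x : ℂ) (hx : x ∈ sphere 0 (1 / 4)) : 0 ≤ (h x).re := by
    rw [mem_sphere_zero_iff_norm] at hx
    exact re_nonneg_of_neg_im_sq_le hx (neg_im_sq_le_im_mul_reCoeffPart hγ hc hc0 hc1 hx)
  have hnorm : ‖(r : ℂ)‖ = r := Complex.norm_of_nonneg (by linarith)
  have hharnack := harnack_re_le hdiff (by norm_num) hpos (w := r)
    (by rw [mem_ball_zero_iff, hnorm]; linarith)
  have hzero : (h 0).re = 1 - c + K := by simp [hh, reCoeffPart, hc]
  have hval : (h r).re =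
      (1 - (koebeRatio γ r).re + K) * ((1 - 16 * r ^ 2) / (1 - r)) := by
    have hcast : h r = ((1 - reCoeffPart (koebeRatio γ) r) + K) *
        (((1 - 16 * r ^ 2) / (1 - r) : ℝ) : ℂ) := by
      push_cast [hh]
      ring
    rw [hcast, Complex.re_mul_ofReal, ← re_reCoeffPart_ofReal (koebeRatio γ) r]
    simp
  have hden : (0 : ℝ) < 1 - r := by linarith
  have hfac : (0 : ℝ) < 1 / 4 - r := by linarith
  rw [hzero, hval, sub_zero, hnorm, div_mul_eq_mul_div, ← mul_div_assoc, div_le_div_iff₀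
    (by linarith) hden] at hharnack
  have hle : (1 - c + K) * (1 - r) ≤ (1 - (koebeRatio γ r).re + K) * (1 + 4 * r) ^ 2 := by
    refine le_of_mul_le_mul_left ?_ hfac
    linarith
  have hsq : (1 + 4 * r) ^ 2 ≤ 2.85 := by norm_num; nlinarith
  norm_num at hsq ⊢
  nlinarith

end KoebeRatioStability

/-! ### Majorant series -/

section CauchyProd

/-- The Cauchy product of two sequences. -/
def cauchyProd {R : Type*} [Semiring R] (a b : ℕ → R) (n : ℕ) : R :=
  ∑ p ∈ Finset.HasAntidiagonal.antidiagonal n, a p.1 * b p.2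

lemma cauchyProd_update_zero {R : Type*} [Semiring R] (a b : ℕ → R) (n : ℕ) :
    cauchyProd a b n = a 0 * b n + cauchyProd (Function.update a 0 0) b n := by
  simp [cauchyProd, Finset.Nat.sum_antidiagonal_eq_sum_range_succ_mk, Finset.sum_range_succ',
    add_comm]

lemma norm_cauchyProd_mul_pow_le (a b : ℕ → ℂ) {s : ℝ} (hs : 0 ≤ s) (n : ℕ) :
    ‖cauchyProd a b n‖ * s ^ n ≤
      cauchyProd (fun n => ‖a n‖ * s ^ n) (fun n => ‖b n‖ * s ^ n) n := by
  rw [cauchyProd, cauchyProd]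
  calc _ ≤ (∑ p ∈ Finset.HasAntidiagonal.antidiagonal n, ‖a p.1 * b p.2‖) * s ^ n := by
        gcongr
        exact norm_sum_le _ _
    _ = _ := by
      rw [Finset.sum_mul]
      refine Finset.sum_congr rfl fun p hp => ?_
      rw [norm_mul, ← Finset.HasAntidiagonal.mem_antidiagonal.1 hp, pow_add]
      ring

variable {a b : ℕ → ℝ}

lemma cauchyProd_nonneg (ha : ∀ n, 0 ≤ a n) (hb : ∀ n, 0 ≤ b n) (n : ℕ) :
    0 ≤ cauchyProd a b n :=
  Finset.sum_nonneg fun _ _ => mul_nonneg (ha _) (hb _)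

lemma hasSum_cauchyProd (ha : ∀ n, 0 ≤ a n) (hb : ∀ n, 0 ≤ b n) (hsa : Summable a)
    (hsb : Summable b) : HasSum (cauchyProd a b) ((∑' n, a n) * ∑' n, b n) := by
  have hprod := hsa.mul_of_nonneg hsb ha hb
  rw [hsa.tsum_mul_tsum_eq_tsum_sum_antidiagonal hsb hprod]
  exact (summable_sum_mul_antidiagonal_of_summable_mul hprod).hasSum

lemma summable_sq_of_nonneg (ha : ∀ n, 0 ≤ a n) (hsa : Summable a) :
    Summable fun n => a n ^ 2 := by
  refine Summable.of_norm_bounded_eventually_nat hsa ?_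
  filter_upwards [hsa.tendsto_atTop_zero.eventually (ge_mem_nhds one_pos)] with n hn
  rw [Real.norm_of_nonneg (sq_nonneg _), sq]
  exact mul_le_of_le_one_left (ha n) hn

lemma cauchyProd_sq_le (ha : ∀ n, 0 ≤ a n) (hsa : Summable a) (n : ℕ) :
    cauchyProd a b n ^ 2 ≤ (∑' n, a n) * cauchyProd a (fun n => b n ^ 2) n := by
  have hCS := Finset.sum_sq_le_sum_mul_sum_of_sq_le_mul (Finset.HasAntidiagonal.antidiagonal n)
    (r := fun p => a p.1 * b p.2) (f := fun p => a p.1) (g := fun p => a p.1 * b p.2 ^ 2)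
    (fun _ _ => ha _) (fun _ _ => mul_nonneg (ha _) (sq_nonneg _)) (fun _ _ => le_of_eq (by ring))
  refine hCS.trans (mul_le_mul_of_nonneg_right ?_ (cauchyProd_nonneg ha (fun n => sq_nonneg _) n))
  rw [Finset.Nat.sum_antidiagonal_eq_sum_range_succ_mk]
  exact hsa.sum_le_tsum _ fun i _ => ha i

lemma summable_cauchyProd_sq_and_tsum_le (ha : ∀ n, 0 ≤ a n) (hb : ∀ n, 0 ≤ b n)
    (hsa : Summable a) (hsb : Summable b) :
    (Summable fun n => cauchyProd a b n ^ 2) ∧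
      ∑' n, cauchyProd a b n ^ 2 ≤ (∑' n, a n) ^ 2 * ∑' n, b n ^ 2 := by
  have hsum := (hasSum_cauchyProd ha (fun n => sq_nonneg (b n)) hsa
    (summable_sq_of_nonneg hb hsb)).mul_left (∑' n, a n)
  have hs : Summable fun n => cauchyProd a b n ^ 2 :=
    .of_nonneg_of_le (fun n => sq_nonneg _) (cauchyProd_sq_le ha hsa) hsum.summable
  refine ⟨hs, (hs.tsum_le_tsum (cauchyProd_sq_le ha hsa) hsum.summable).trans (le_of_eq ?_)⟩
  rw [hsum.tsum_eq]
  ring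

end CauchyProd

section Majorant

variable {h k : ℂ → ℂ} {r s : ℝ}

/-- Bohr's majorant series: the power series of `h` at the origin with its coefficients replaced
by their absolute values, evaluated at `s`. -/
def majorant (h : ℂ → ℂ) (s : ℝ) : ℝ := ∑' n, ‖taylorCoeff h n‖ * s ^ n

lemma majorant_nonneg (h : ℂ → ℂ) (hs : 0 ≤ s) : 0 ≤ majorant h s :=
  tsum_nonneg fun _ => by positivity

lemma majorant_mono (hh : DifferentiableOn ℂ h (ball 0 r)) {t : ℝ} (hs : 0 ≤ s) (hst : s ≤ t)
    (htr : t < r) : majorant h s ≤ majorant h t :=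
  (summable_norm_taylorCoeff_mul_pow hh hs (hst.trans_lt htr)).tsum_le_tsum
    (fun _ => by gcongr) (summable_norm_taylorCoeff_mul_pow hh (hs.trans hst) htr)

lemma majorant_mul_le (hh : DifferentiableOn ℂ h (ball 0 r)) (hk : DifferentiableOn ℂ k (ball 0 r))
    (hs : 0 ≤ s) (hsr : s < r) :
    majorant (fun z => h z * k z) s ≤ majorant h s * majorant k s := by
  have hprod := hasSum_cauchyProd (fun n => by positivity) (fun n => by positivity)
    (summable_norm_taylorCoeff_mul_pow hh hs hsr) (summable_norm_taylorCoeff_mul_pow hk hs hsr)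
  rw [majorant, majorant, majorant, ← hprod.tsum_eq]
  refine (summable_norm_taylorCoeff_mul_pow (hh.mul hk) hs hsr).tsum_le_tsum (fun n => ?_)
    hprod.summable
  have := norm_cauchyProd_mul_pow_le (taylorCoeff h) (taylorCoeff k) hs n
  rwa [cauchyProd, ← taylorCoeff_mul (hs.trans_lt hsr) hh hk] at this

lemma majorant_one (s : ℝ) : majorant (fun _ => 1) s = 1 := by
  rw [majorant, tsum_eq_single 0 fun n hn => by simp [taylorCoeff, iteratedDeriv_const, hn]]
  simp [taylorCoeff]

lemma majorant_pow_le (hh : DifferentiableOn ℂ h (ball 0 r)) (hs : 0 ≤ s) (hsr : s < r) (m : ℕ) :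
    majorant (fun z => h z ^ m) s ≤ majorant h s ^ m := by
  induction m with
  | zero => simp only [pow_zero, majorant_one, le_refl]
  | succ m ih =>
    simp only [pow_succ]
    exact (majorant_mul_le (hh.pow m) hh hs hsr).trans
      (mul_le_mul_of_nonneg_right ih (majorant_nonneg h hs))

lemma taylorCoeff_succ_of_eq_const_add_mul (hr : 0 < r) (hk : DifferentiableOn ℂ k (ball 0 r))
    {a : ℂ} (heq : ∀ z : ℂ, ‖z‖ < r → h z = a + z * k z) (n : ℕ) :
    taylorCoeff h (n + 1) = taylorCoeff k n := by
  refine taylorCoeff_eq_of_hasSum (c := fun n => Nat.casesOn n a (taylorCoeff k)) hr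
    (fun z hz => ?_) (n + 1)
  have hsum : HasSum (fun n => taylorCoeff k n * z ^ (n + 1)) (z * k z) :=
    ((hasSum_taylorCoeff hk hz).mul_left z).congr_fun fun n => by
      simp only [pow_succ]
      ring
  simpa [heq z hz, add_comm] using
    (hasSum_nat_add_iff (f := fun n => (Nat.casesOn n a (taylorCoeff k) : ℂ) * z ^ n) 1).1 hsum

lemma majorant_eq_norm_add_mul (hk : DifferentiableOn ℂ k (ball 0 r)) {a : ℂ}
    (heq : ∀ z : ℂ, ‖z‖ < r → h z = a + z * k z) (hs : 0 ≤ s) (hsr : s < r) :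
    majorant h s = ‖a‖ + s * majorant k s := by
  have hr := hs.trans_lt hsr
  have hcoeff := taylorCoeff_succ_of_eq_const_add_mul hr hk heq
  have hsum : HasSum (fun n => ‖taylorCoeff h (n + 1)‖ * s ^ (n + 1)) (s * majorant k s) := by
    refine ((summable_norm_taylorCoeff_mul_pow hk hs hsr).hasSum.mul_left s).congr_fun fun n => ?_
    rw [hcoeff, pow_succ]
    ring
  have h0 : h 0 = a := by simpa using heq 0 (by simpa using hr)
  rw [majorant, ((hasSum_nat_add_iff (f := fun n => ‖taylorCoeff h n‖ * s ^ n) 1).1 hsum).tsum_eq,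
    Finset.sum_range_one, taylorCoeff_zero, h0, pow_zero, mul_one, add_comm]

end Majorant

section KoebeRatioMajorant

variable {γ : ℂ → ℂ} {s T : ℝ}

lemma exists_hasSum_pow_div_two_mul_add_one_le {q : ℝ} (h0 : 0 ≤ q) (h1 : q < 1) :
    ∃ T ≤ q / 3 + q ^ 2 / 5 + q ^ 3 / 7 / (1 - q),
      HasSum (fun j : ℕ => q ^ (j + 1) / (2 * (j + 1 : ℕ) + 1)) T := by
  have hgeom := (hasSum_geometric_of_lt_one h0 h1).mul_left (q ^ 3 / 7)
  have hle (j : ℕ) : q ^ (j + 2 + 1) / (2 * (j + 2 + 1 : ℕ) + 1) ≤ q ^ 3 / 7 * q ^ j := by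
    rw [div_mul_eq_mul_div, ← pow_add, add_comm 3 j]
    gcongr
    push_cast
    linarith [(Nat.cast_nonneg j : (0 : ℝ) ≤ j)]
  have hs : Summable fun j : ℕ => q ^ (j + 1) / (2 * (j + 1 : ℕ) + 1) :=
    (summable_nat_add_iff 2).1 (.of_nonneg_of_le (fun j => by positivity) hle hgeom.summable)
  have htail := ((summable_nat_add_iff 2).2 hs).tsum_le_tsum hle hgeom.summable
  rw [hgeom.tsum_eq, ← div_eq_mul_inv] at htail
  refine ⟨_, ?_, hs.hasSum⟩
  rw [← hs.sum_add_tsum_nat_add 2, Finset.sum_range_succ, Finset.sum_range_one]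
  norm_num at htail ⊢
  linarith

lemma IsUnivalentSqrt.eq_one_add_mul (hγ : IsUnivalentSqrt γ) {z : ℂ} (hz : ‖z‖ < 1) :
    γ z = 1 + z * (koebeRatio γ z * γ z) := by
  have hinv := mul_inv_cancel₀ (hγ.ne_zero (mem_ball_zero_iff.2 hz))
  rw [inv_eq_one_sub_mul_koebeRatio hγ.map_zero] at hinv
  linear_combination hinv

lemma IsUnivalentSqrt.taylorCoeff_succ (hγ : IsUnivalentSqrt γ) (n : ℕ) :
    taylorCoeff γ (n + 1) = cauchyProd (taylorCoeff (koebeRatio γ)) (taylorCoeff γ) n := by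
  rw [taylorCoeff_succ_of_eq_const_add_mul one_pos
    (hγ.differentiableOn_koebeRatio.mul hγ.differentiableOn) (fun z => hγ.eq_one_add_mul)]
  exact taylorCoeff_mul one_pos hγ.differentiableOn_koebeRatio hγ.differentiableOn n

lemma IsUnivalentSqrt.norm_koebeRatio_zero_le_one (hγ : IsUnivalentSqrt γ) :
    ‖koebeRatio γ 0‖ ≤ 1 := by
  have := hγ.sum_mul_norm_taylorCoeff_koebeRatio_sq_le_one 1
  simpa [taylorCoeff_zero] using this

lemma tsum_norm_taylorCoeff_koebeRatio_succ_le (hγ : IsUnivalentSqrt γ) (hs : 0 ≤ s) (hs1 : s < 1)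
    (hT : s ^ 2 / 3 + (s ^ 2) ^ 2 / 5 + (s ^ 2) ^ 3 / 7 / (1 - s ^ 2) ≤ T) :
    ∑' j, ‖taylorCoeff (koebeRatio γ) (j + 1)‖ * s ^ (j + 1) ≤
      √((1 - ‖koebeRatio γ 0‖ ^ 2) * T) := by
  obtain ⟨T', hT', hsum⟩ := exists_hasSum_pow_div_two_mul_add_one_le (sq_nonneg s)
    (pow_lt_one₀ hs hs1 two_ne_zero)
  have hT0 : 0 ≤ T' := hsum.nonneg fun j => by positivity
  have hA0 : 0 ≤ 1 - ‖koebeRatio γ 0‖ ^ 2 :=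
    sub_nonneg.2 (pow_le_one₀ (norm_nonneg _) hγ.norm_koebeRatio_zero_le_one)
  refine Real.tsum_le_of_sum_range_le (fun n => by positivity) ?_
  refine sum_mul_le_of_sum_mul_sq_le (A := fun j => ‖taylorCoeff (koebeRatio γ) j‖)
    (w := fun j => s ^ j) (T := T') hγ.sum_mul_norm_taylorCoeff_koebeRatio_sq_le_one
    (hsum.congr_fun fun j => by rw [← pow_mul, ← pow_mul, mul_comm]) (Real.sqrt_nonneg _) ?_
  rw [taylorCoeff_zero, Real.sq_sqrt (mul_nonneg hA0 (hT0.trans (hT'.trans hT)))]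
  exact mul_le_mul_of_nonneg_left (hT'.trans hT) hA0

lemma majorant_koebeRatio_le_one (hγ : IsUnivalentSqrt γ) (hs : 0 ≤ s) (hs1 : s ≤ 0.1716)
    (hc : ‖koebeRatio γ 0‖ ≤ 0.98) : majorant (koebeRatio γ) s ≤ 1 := by
  norm_num at hs1 hc
  have hsq : s ^ 2 ≤ 0.02945 := by norm_num; nlinarith
  norm_num at hsq
  have htail := tsum_norm_taylorCoeff_koebeRatio_succ_le hγ hs (by linarith) (T := 0.01) (by
    have h2 : (s ^ 2) ^ 2 ≤ (589 / 20000) ^ 2 := by gcongr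
    have h3 : (s ^ 2) ^ 3 / 7 / (1 - s ^ 2) ≤ 0.000004 := by
      rw [div_le_iff₀ (by linarith)]
      have : (s ^ 2) ^ 3 ≤ (589 / 20000) ^ 3 := by gcongr
      norm_num at this ⊢
      linarith
    norm_num at *
    linarith)
  have hsqrt : √((1 - ‖koebeRatio γ 0‖ ^ 2) * 0.01) ≤ 1 - ‖koebeRatio γ 0‖ := by
    rw [Real.sqrt_le_left (by linarith)]
    norm_num
    nlinarith
  rw [majorant, (summable_norm_taylorCoeff_mul_pow hγ.differentiableOn_koebeRatio hs
    (by linarith)).tsum_eq_zero_add, pow_zero, mul_one, taylorCoeff_zero]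
  linarith

lemma majorant_le_one_div_of_majorant_koebeRatio_le_one (hγ : IsUnivalentSqrt γ) (hs : 0 ≤ s)
    (hs1 : s < 1) (hR : majorant (koebeRatio γ) s ≤ 1) : majorant γ s ≤ 1 / (1 - s) := by
  have heq := majorant_eq_norm_add_mul (k := fun z => koebeRatio γ z * γ z)
    (hγ.differentiableOn_koebeRatio.mul hγ.differentiableOn) (fun z => hγ.eq_one_add_mul) hs hs1
  have hmul := (majorant_mul_le hγ.differentiableOn_koebeRatio hγ.differentiableOn hs hs1).trans
    (mul_le_of_le_one_left (majorant_nonneg γ hs) hR)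
  rw [norm_one] at heq
  rw [le_div_iff₀ (sub_pos.2 hs1)]
  linarith [mul_le_mul_of_nonneg_left hmul hs]

end KoebeRatioMajorant

section ConvolutionRecursion

lemma add_sq_le_one_add_mul_sq_add {a b t : ℝ} (ht : 0 < t) :
    (a + b) ^ 2 ≤ (1 + t) * a ^ 2 + (1 + t⁻¹) * b ^ 2 := by
  linarith [two_mul_le_add_mul_sq (a := a) (b := b) ht]

lemma tsum_sq_le_of_succ_le {y C : ℕ → ℝ} {s t : ℝ} (ht : 0 < t) (hy : ∀ n, 0 ≤ y n)
    (hy0 : y 0 = 0) (hrec : ∀ n, y (n + 1) ≤ s * (y n + C n)) (hsy : Summable fun n => y n ^ 2)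
    (hsC : Summable fun n => C n ^ 2) :
    ∑' n, y n ^ 2 ≤ s ^ 2 * ((1 + t) * ∑' n, y n ^ 2 + (1 + t⁻¹) * ∑' n, C n ^ 2) := by
  have hsum := ((hsy.hasSum.mul_left (1 + t)).add (hsC.hasSum.mul_left (1 + t⁻¹))).mul_left (s ^ 2)
  have hle (n : ℕ) : y (n + 1) ^ 2 ≤ s ^ 2 * ((1 + t) * y n ^ 2 + (1 + t⁻¹) * C n ^ 2) :=
    calc y (n + 1) ^ 2 ≤ (s * (y n + C n)) ^ 2 := by
          gcongr
          exacts [hy _, hrec n]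
      _ = s ^ 2 * (y n + C n) ^ 2 := mul_pow ..
      _ ≤ _ := by
          gcongr
          exact add_sq_le_one_add_mul_sq_add ht
  rw [← hsum.tsum_eq, hsy.tsum_eq_zero_add, hy0, zero_pow two_ne_zero, zero_add]
  exact ((summable_nat_add_iff 1).2 hsy).tsum_le_tsum hle hsum.summable

variable {α β : ℕ → ℂ} {c s : ℝ}

lemma norm_ofReal_pow_le_one (hc0 : 0 ≤ c) (hc1 : c ≤ 1) (n : ℕ) : ‖(c : ℂ) ^ n‖ ≤ 1 := by
  rw [norm_pow, Complex.norm_of_nonneg hc0]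
  exact pow_le_one₀ hc0 hc1

lemma norm_sub_pow_succ_mul_pow_le (hα : α 0 = c) (hc0 : 0 ≤ c) (hc1 : c ≤ 1)
    (hrec : ∀ n, β (n + 1) = cauchyProd α β n) (hs : 0 ≤ s) (n : ℕ) :
    ‖β (n + 1) - (c : ℂ) ^ (n + 1)‖ * s ^ (n + 1) ≤
      s * (‖β n - (c : ℂ) ^ n‖ * s ^ n + cauchyProd (fun n => ‖Function.update α 0 0 n‖ * s ^ n)
        (fun n => ‖β n‖ * s ^ n) n) := by
  have hsplit : β (n + 1) - (c : ℂ) ^ (n + 1) =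
      c * (β n - (c : ℂ) ^ n) + cauchyProd (Function.update α 0 0) β n := by
    rw [hrec, cauchyProd_update_zero, hα]
    ring
  have hnorm : ‖β (n + 1) - (c : ℂ) ^ (n + 1)‖ ≤
      ‖β n - (c : ℂ) ^ n‖ + ‖cauchyProd (Function.update α 0 0) β n‖ := by
    rw [hsplit]
    refine (norm_add_le _ _).trans (add_le_add_left ?_ _)
    rw [norm_mul, Complex.norm_of_nonneg hc0]
    exact mul_le_of_le_one_left (norm_nonneg _) hc1
  calc _ ≤ (‖β n - (c : ℂ) ^ n‖ + ‖cauchyProd (Function.update α 0 0) β n‖) * s ^ (n + 1) := by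
        gcongr
    _ = s * (‖β n - (c : ℂ) ^ n‖ * s ^ n +
          ‖cauchyProd (Function.update α 0 0) β n‖ * s ^ n) := by ring
    _ ≤ _ := by
        gcongr
        exact norm_cauchyProd_mul_pow_le _ _ hs n

lemma summable_norm_sub_pow_mul_pow (hc0 : 0 ≤ c) (hc1 : c ≤ 1) (hs : 0 ≤ s) (hs1 : s < 1)
    (hβ : Summable fun n => ‖β n‖ * s ^ n) : Summable fun n => ‖β n - (c : ℂ) ^ n‖ * s ^ n := by
  refine .of_nonneg_of_le (fun n => by positivity) (fun n => ?_)
    (hβ.add (summable_geometric_of_lt_one hs hs1))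
  calc ‖β n - (c : ℂ) ^ n‖ * s ^ n ≤ (‖β n‖ + 1) * s ^ n := by
        gcongr
        exact (norm_sub_le _ _).trans (by gcongr; exact norm_ofReal_pow_le_one hc0 hc1 n)
    _ = _ := by ring

lemma tsum_sq_norm_mul_pow_le {t : ℝ} (ht : 0 < t) (hc0 : 0 ≤ c) (hc1 : c ≤ 1) (hs : 0 ≤ s)
    (hs1 : s < 1) (hβ : Summable fun n => ‖β n‖ * s ^ n) :
    ∑' n, (‖β n‖ * s ^ n) ^ 2 ≤
      (1 + t) * (∑' n, (‖β n - (c : ℂ) ^ n‖ * s ^ n) ^ 2) + (1 + t⁻¹) * (1 - s ^ 2)⁻¹ := by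
  have hsum := ((summable_sq_of_nonneg (fun n => by positivity)
    (summable_norm_sub_pow_mul_pow hc0 hc1 hs hs1 hβ)).hasSum.mul_left (1 + t)).add
    ((hasSum_geometric_of_lt_one (sq_nonneg s) (pow_lt_one₀ hs hs1 two_ne_zero)).mul_left (1 + t⁻¹))
  rw [← hsum.tsum_eq]
  refine (summable_sq_of_nonneg (fun n => by positivity) hβ).tsum_le_tsum (fun n => ?_)
    hsum.summable
  calc (‖β n‖ * s ^ n) ^ 2 ≤ (‖β n - (c : ℂ) ^ n‖ * s ^ n + s ^ n) ^ 2 := by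
        rw [← add_one_mul]
        gcongr
        linarith [norm_le_norm_sub_add (β n) ((c : ℂ) ^ n), norm_ofReal_pow_le_one hc0 hc1 n]
    _ ≤ _ := by
        rw [pow_right_comm s 2 n]
        exact add_sq_le_one_add_mul_sq_add ht

-- The sums of squares `Y`, `C`, `Γ` of `‖β n - c ^ n‖ s ^ n`, of its forcing term and of
-- `‖β n‖ s ^ n` satisfy `Y = O(C)`, `C = O((1 - c) Γ)` and `Γ = O(Y + 1)`.
lemma tsum_sq_norm_sub_pow_mul_pow_le (hα : α 0 = c) (hβ0 : β 0 = 1) (hc0 : 0.98 ≤ c) (hc1 : c ≤ 1)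
    (hrec : ∀ n, β (n + 1) = cauchyProd α β n) (hs : 0 ≤ s) (hs2 : s ^ 2 ≤ 0.1752)
    (hsα : Summable fun n => ‖Function.update α 0 0 n‖ * s ^ n)
    (hαc : (∑' n, ‖Function.update α 0 0 n‖ * s ^ n) ^ 2 ≤ 0.1314 * (1 - c))
    (hsβ : Summable fun n => ‖β n‖ * s ^ n) :
    ∑' n, (‖β n - (c : ℂ) ^ n‖ * s ^ n) ^ 2 ≤ 0.0895 * (1 - c) := by
  norm_num at hc0 hs2
  have hs1 : s < 1 := by nlinarith
  have hc0' : 0 ≤ c := by linarith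
  obtain ⟨hsC, hC⟩ := summable_cauchyProd_sq_and_tsum_le (fun n => by positivity)
    (fun n => by positivity) hsα hsβ
  have hY := tsum_sq_le_of_succ_le (t := 1.39) (by norm_num) (fun n => by positivity)
    (by simp [hβ0]) (norm_sub_pow_succ_mul_pow_le hα hc0' hc1 hrec hs)
    (summable_sq_of_nonneg (fun n => by positivity)
      (summable_norm_sub_pow_mul_pow hc0' hc1 hs hs1 hsβ)) hsC
  have hΓ := tsum_sq_norm_mul_pow_le (t := 26) (by norm_num) hc0' hc1 hs hs1 hsβ
  have hinv : (1 - s ^ 2)⁻¹ ≤ 1.2125 := by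
    rw [inv_le_comm₀ (by linarith) (by norm_num)]
    norm_num
    linarith
  have hY0 : 0 ≤ ∑' n, (‖β n - (c : ℂ) ^ n‖ * s ^ n) ^ 2 := tsum_nonneg fun n => sq_nonneg _
  have hΓ0 : 0 ≤ ∑' n, (‖β n‖ * s ^ n) ^ 2 := tsum_nonneg fun n => sq_nonneg _
  have hC0 : 0 ≤ ∑' n, cauchyProd (fun n => ‖Function.update α 0 0 n‖ * s ^ n)
    (fun n => ‖β n‖ * s ^ n) n ^ 2 := tsum_nonneg fun n => sq_nonneg _
  generalize ∑' n, (‖β n - (c : ℂ) ^ n‖ * s ^ n) ^ 2 = Y at *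
  generalize ∑' n, (‖β n‖ * s ^ n) ^ 2 = Γ at *
  generalize ∑' n, cauchyProd (fun n => ‖Function.update α 0 0 n‖ * s ^ n)
    (fun n => ‖β n‖ * s ^ n) n ^ 2 = C at *
  have hCΓ : C ≤ 0.1314 * (1 - c) * Γ := hC.trans (mul_le_mul_of_nonneg_right hαc hΓ0)
  have hYC : Y ≤ 0.1752 * (2.39 * Y + 1.72 * C) := by
    norm_num at hY ⊢
    nlinarith
  have hΓY : Γ ≤ 27 * Y + 1.2592 := by norm_num at *; linarith
  have h5 := mul_le_mul_of_nonneg_left hΓY (sub_nonneg.2 hc1)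
  have h6 : (1 - c) * Y ≤ 0.02 * Y := mul_le_mul_of_nonneg_right (by norm_num; linarith) hY0
  norm_num at *
  linarith

end ConvolutionRecursion

lemma exists_norm_eq_one_mul_eq_norm (z : ℂ) : ∃ v : ℂ, ‖v‖ = 1 ∧ v * z = ‖z‖ := by
  rcases eq_or_ne z 0 with rfl | hz
  · exact ⟨1, by simp, by simp⟩
  · exact ⟨‖z‖ / z, by simp [hz], by field_simp⟩

section UnivalentSqrtMajorant

lemma norm_le_re_add_norm_sub_sq_div {p : ℝ} (hp : 0 < p) (a : ℂ) :
    ‖a‖ ≤ a.re + ‖a - p‖ ^ 2 / (2 * p) := by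
  have hsq : ‖a - p‖ ^ 2 = ‖a‖ ^ 2 - 2 * p * a.re + p ^ 2 := by
    simp only [← Complex.normSq_eq_norm_sq, Complex.normSq_apply, Complex.sub_re, Complex.sub_im,
      Complex.ofReal_re, Complex.ofReal_im, sub_zero]
    ring
  have hdiv : a.re + ‖a - p‖ ^ 2 / (2 * p) = (‖a‖ ^ 2 + p ^ 2) / (2 * p) := by
    rw [hsq]
    field_simp
    ring
  rw [hdiv, le_div_iff₀ (by positivity)]
  linarith [two_mul_le_add_sq ‖a‖ p]

lemma re_inv_le_one_div {m : ℝ} {w : ℂ} (hm : 0 < m) (hw : m ≤ w.re) : (w⁻¹).re ≤ 1 / m := by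
  rw [one_div]
  calc (w⁻¹).re ≤ ‖w⁻¹‖ := Complex.re_le_norm _
    _ = ‖w‖⁻¹ := norm_inv w
    _ ≤ m⁻¹ := inv_anti₀ hm (hw.trans (Complex.re_le_norm w))

lemma majorant_le_re_add_tsum_sq {h : ℂ → ℂ} {R c r s : ℝ} (hh : DifferentiableOn ℂ h (ball 0 R))
    (hc : 0 < c) (hr : 0 ≤ r) (hrR : r < R) (hs : s ^ 2 = r / c)
    (hsum : Summable fun n => (‖taylorCoeff h n - (c : ℂ) ^ n‖ * s ^ n) ^ 2) :
    majorant h r ≤ (h r).re + 1 / 2 * ∑' n, (‖taylorCoeff h n - (c : ℂ) ^ n‖ * s ^ n) ^ 2 := by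
  have hre : HasSum (fun n => (taylorCoeff h n).re * r ^ n) (h r).re := by
    refine (Complex.hasSum_re (hasSum_taylorCoeff hh (z := r) ?_)).congr_fun fun n => ?_
    · rwa [Complex.norm_of_nonneg hr]
    · rw [← Complex.ofReal_pow, Complex.re_mul_ofReal]
  have htotal := hre.add (hsum.hasSum.mul_left (1 / 2))
  rw [← htotal.tsum_eq]
  refine (summable_norm_taylorCoeff_mul_pow hh hr hrR).tsum_le_tsum (fun n => ?_) htotal.summable
  have hphase := norm_le_re_add_norm_sub_sq_div (pow_pos hc n) (taylorCoeff h n)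
  calc ‖taylorCoeff h n‖ * r ^ n
      ≤ ((taylorCoeff h n).re + ‖taylorCoeff h n - ((c ^ n : ℝ) : ℂ)‖ ^ 2 / (2 * c ^ n)) *
          r ^ n := by
        gcongr
    _ = _ := by
        rw [mul_pow, pow_right_comm s n 2, hs, Complex.ofReal_pow, div_pow]
        field_simp

lemma one_div_add_le_one_div_one_sub {r ε : ℝ} (hε : 0 ≤ ε) (hε' : ε ≤ 0.02) (hr : 0.1715 < r)
    (hr' : r < 0.1716) : 1 / (1 - r + r * (0.22 * ε)) + 0.045 * ε ≤ 1 / (1 - r) := by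
  set δ := r * (0.22 * ε) with hδ
  norm_num at hε' hr hr' hδ
  have hδ0 : 0.0377 * ε ≤ δ := by norm_num; nlinarith
  have hδ1 : δ ≤ 0.001 := by norm_num; nlinarith
  norm_num at hδ0 hδ1
  have hr1 : 0 < 1 - r := by linarith
  have hrδ : 0 < 1 - r + δ := by linarith
  have hdiff : 1 / (1 - r) - 1 / (1 - r + δ) = δ / ((1 - r) * (1 - r + δ)) := by
    field_simp
    ring
  have hle : 0.045 * ε ≤ δ / ((1 - r) * (1 - r + δ)) := by
    rw [le_div_iff₀ (by positivity)]
    have hprod : (1 - r) * (1 - r + δ) ≤ 0.8285 * 0.8295 :=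
      mul_le_mul (by norm_num; linarith) (by norm_num; linarith) hrδ.le (by norm_num)
    calc _ ≤ 0.045 * ε * (0.8285 * 0.8295) := by gcongr
      _ ≤ _ := by norm_num; linarith
  linarith

variable {γ : ℂ → ℂ} {c r s ρ : ℝ}

lemma tsum_sq_norm_taylorCoeff_sub_pow_le (hγ : IsUnivalentSqrt γ) (hc : koebeRatio γ 0 = c)
    (hc0 : 0.98 ≤ c) (hc1 : c ≤ 1) (hs : 0 ≤ s) (hs2 : s ^ 2 ≤ 0.1752) :
    ∑' n, (‖taylorCoeff γ n - (c : ℂ) ^ n‖ * s ^ n) ^ 2 ≤ 0.0895 * (1 - c) := by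
  have hs1 : s < 1 := by norm_num at hs2; nlinarith
  have hsum := (summable_nat_add_iff (f := fun n =>
      ‖Function.update (taylorCoeff (koebeRatio γ)) 0 0 n‖ * s ^ n) 1).1 <| by
    simpa using (summable_nat_add_iff 1).2
      (summable_norm_taylorCoeff_mul_pow hγ.differentiableOn_koebeRatio hs hs1)
  refine tsum_sq_norm_sub_pow_mul_pow_le (by rw [taylorCoeff_zero, hc])
    (by rw [taylorCoeff_zero, hγ.map_zero]) hc0 hc1 hγ.taylorCoeff_succ hs hs2 hsum ?_
    (summable_norm_taylorCoeff_mul_pow hγ.differentiableOn hs hs1)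
  norm_num at hc0 hs2
  have htail := tsum_norm_taylorCoeff_koebeRatio_succ_le hγ hs hs1 (T := 0.0657) (by
    have h2 : (s ^ 2) ^ 2 ≤ (219 / 1250) ^ 2 := by gcongr
    have h3 : (s ^ 2) ^ 3 / 7 / (1 - s ^ 2) ≤ 0.00095 := by
      rw [div_le_iff₀ (by linarith)]
      have : (s ^ 2) ^ 3 ≤ (219 / 1250) ^ 3 := by gcongr
      norm_num at this ⊢
      linarith
    norm_num at *
    linarith)
  rw [hc, Complex.norm_of_nonneg (by linarith)] at htail
  rw [hsum.tsum_eq_zero_add]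
  simp only [Function.update_self, norm_zero, zero_mul, zero_add, ne_eq, Nat.add_eq_zero_iff,
    one_ne_zero, and_false, not_false_eq_true, Function.update_of_ne]
  calc _ ≤ √((1 - c ^ 2) * 0.0657) ^ 2 := by gcongr
    _ = (1 - c ^ 2) * 0.0657 := Real.sq_sqrt (mul_nonneg (by nlinarith) (by norm_num))
    _ ≤ _ := by norm_num; nlinarith

lemma majorant_le_one_div_of_koebeRatio_zero_eq (hγ : IsUnivalentSqrt γ) (hc : koebeRatio γ 0 = c)
    (hc0 : 0.98 ≤ c) (hc1 : c ≤ 1) (hr : 0.1715 < r) (hr' : r < 0.1716) :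
    majorant γ r ≤ 1 / (1 - r) := by
  have hcoeff := tsum_sq_norm_taylorCoeff_sub_pow_le hγ (s := √(r / c)) hc hc0 hc1
  have hratio := re_koebeRatio_le hγ hc hc0 hc1 hr hr'
  have hnum := one_div_add_le_one_div_one_sub (ε := 1 - c) (by linarith)
    (by norm_num at *; linarith) hr hr'
  norm_num at hc0 hr hr' hcoeff hratio hnum
  have hr0 : 0 ≤ r := by linarith
  have hc0' : 0 < c := by linarith
  have hsq : √(r / c) ^ 2 = r / c := Real.sq_sqrt (by positivity)
  have hs2 : r / c ≤ 219 / 1250 := by rw [div_le_iff₀ hc0']; linarith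
  have hs1 : √(r / c) < 1 := by rw [Real.sqrt_lt' one_pos]; linarith
  have hmaj := majorant_le_re_add_tsum_sq hγ.differentiableOn hc0' hr0 (by linarith) hsq
    (summable_sq_of_nonneg (fun n => by positivity)
      (summable_norm_sub_pow_mul_pow hc0'.le hc1 (Real.sqrt_nonneg _) hs1
        (summable_norm_taylorCoeff_mul_pow hγ.differentiableOn (Real.sqrt_nonneg _) hs1)))
  have hre : (γ r).re ≤ 1 / (1 - r + r * (11 / 50 * (1 - c))) := by
    rw [← inv_inv (γ r), inv_eq_one_sub_mul_koebeRatio hγ.map_zero]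
    refine re_inv_le_one_div (by nlinarith) ?_
    rw [Complex.sub_re, Complex.re_ofReal_mul, Complex.one_re]
    nlinarith
  norm_num at hre hmaj hcoeff
  specialize hcoeff (by rwa [hsq])
  rw [one_div]
  linarith

lemma taylorCoeff_comp_const_mul {h : ℂ → ℂ} {w : ℂ} (hh : DifferentiableOn ℂ h (ball 0 1))
    (hw : ‖w‖ = 1) (n : ℕ) : taylorCoeff (fun z => h (w * z)) n = taylorCoeff h n * w ^ n := by
  refine taylorCoeff_eq_of_hasSum (c := fun n => taylorCoeff h n * w ^ n) one_pos (fun z hz => ?_) n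
  refine (hasSum_taylorCoeff hh (z := w * z) (by simpa [hw] using hz)).congr_fun fun n => ?_
  rw [mul_pow, mul_assoc]

lemma IsUnivalentSqrt.comp_const_mul (hγ : IsUnivalentSqrt γ) {w : ℂ} (hw : ‖w‖ = 1) :
    IsUnivalentSqrt fun z => γ (w * z) where
  differentiableOn := hγ.differentiableOn.comp (differentiableOn_id.const_mul w) fun z hz => by
    simpa [hw] using hz
  map_zero := by simp [hγ.map_zero]
  injOn x hx y hy e := by
    have hw0 : w ≠ 0 := norm_ne_zero_iff.1 (hw ▸ one_ne_zero)
    have hmem {z : ℂ} (hz : z ∈ ball (0 : ℂ) 1) : w * z ∈ ball (0 : ℂ) 1 := by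
      simpa [hw] using hz
    exact mul_left_cancel₀ hw0 (hγ.injOn (hmem hx) (hmem hy) (by linear_combination w * e))

lemma IsUnivalentSqrt.deriv_zero (hγ : IsUnivalentSqrt γ) : deriv γ 0 = koebeRatio γ 0 := by
  simpa [cauchyProd, taylorCoeff_one, taylorCoeff_zero, hγ.map_zero] using hγ.taylorCoeff_succ 0

-- The Koebe function, for which `koebeRatio γ 0 = 1`, is extremal: far from it the Taylor
-- coefficients of `koebeRatio γ` are controlled termwise, and close to it the deviation from the
-- geometric series is controlled in mean square.
lemma majorant_le_one_div_one_sub (hγ : IsUnivalentSqrt γ) (hr : 0.1715 < r) (hr' : r < 0.1716) :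
    majorant γ r ≤ 1 / (1 - r) := by
  rcases le_or_gt ‖koebeRatio γ 0‖ 0.98 with hc | hc
  · norm_num at hr hr'
    exact majorant_le_one_div_of_majorant_koebeRatio_le_one hγ (by linarith) (by linarith)
      (majorant_koebeRatio_le_one hγ (by linarith) (by norm_num; linarith) hc)
  obtain ⟨w, hw, hcw⟩ := exists_norm_eq_one_mul_eq_norm (koebeRatio γ 0)
  have hrot := hγ.comp_const_mul hw
  have hcoeff := taylorCoeff_comp_const_mul hγ.differentiableOn hw
  have hratio : koebeRatio (fun z => γ (w * z)) 0 = ‖koebeRatio γ 0‖ := by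
    rw [← hrot.deriv_zero, ← hcw, mul_comm, ← hγ.deriv_zero, ← taylorCoeff_one, ← taylorCoeff_one,
      hcoeff, pow_one]
  have hmaj : majorant (fun z => γ (w * z)) r = majorant γ r := by
    simp [majorant, hcoeff, hw]
  rw [← hmaj]
  exact majorant_le_one_div_of_koebeRatio_zero_eq hrot hratio hc.le
    hγ.norm_koebeRatio_zero_le_one hr hr'

lemma mul_majorant_sq_le (hγ : IsUnivalentSqrt γ) (hρ : 0 ≤ ρ) (hρ' : ρ ≤ 3 - 2 * √2) :
    ρ * majorant (fun z => γ z ^ 2) ρ ≤ 1 / 4 := by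
  have hsq : √2 ^ 2 = 2 := Real.sq_sqrt zero_le_two
  have hlow : (1.4142 : ℝ) < √2 := Real.lt_sqrt_of_sq_lt (by norm_num)
  have hup : √2 < 1.41425 := (Real.sqrt_lt' (by norm_num)).2 (by norm_num)
  norm_num at hlow hup
  set r := 3 - 2 * √2 with hr
  have hr0 : 0 ≤ r := by linarith
  have hr1 : r < 1 := by linarith
  have hmaj := majorant_le_one_div_one_sub hγ (r := r) (by norm_num; linarith)
    (by norm_num; linarith)
  calc ρ * majorant (fun z => γ z ^ 2) ρ ≤ r * majorant (fun z => γ z ^ 2) r := by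
        gcongr
        · exact majorant_nonneg _ hρ
        · exact majorant_mono (hγ.differentiableOn.pow 2) hρ hρ' hr1
    _ ≤ r * (majorant γ r) ^ 2 := by
        gcongr
        exact majorant_pow_le hγ.differentiableOn hr0 hr1 2
    _ ≤ r * (1 / (1 - r)) ^ 2 := by
        gcongr
        exact majorant_nonneg _ hr0
    _ = 1 / 4 := by
        have : 1 - r ≠ 0 := by linarith
        field_simp
        rw [hr]
        linear_combination -4 * hsq

end UnivalentSqrtMajorant

section KoebeQuarter

variable {γ q : ℂ → ℂ} {u : ℂ}

lemma IsUnivalentSqrt.mul_exp_neg_div_two (hγ : IsUnivalentSqrt γ)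
    (hq : DifferentiableOn ℂ q (ball 0 1)) (hq0 : q 0 = 0)
    (hexp : ∀ z ∈ ball (0 : ℂ) 1, Complex.exp (q z) = 1 - u * (z * γ z ^ 2)) :
    IsUnivalentSqrt fun z => γ z * Complex.exp (-q z / 2) where
  differentiableOn := by
    have := hγ.differentiableOn
    fun_prop
  map_zero := by simp [hγ.map_zero, hq0]
  injOn x hx y hy e := by
    have htransform {z : ℂ} (hz : z ∈ ball (0 : ℂ) 1) :
        z * (γ z * Complex.exp (-q z / 2)) ^ 2 * (1 - u * (z * γ z ^ 2)) = z * γ z ^ 2 := by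
      have hcancel : Complex.exp (-q z / 2) ^ 2 * Complex.exp (q z) = 1 := by
        rw [← Complex.exp_nat_mul, ← Complex.exp_add, Complex.exp_eq_one_iff]
        exact ⟨0, by push_cast; ring⟩
      rw [← hexp z hz]
      linear_combination z * γ z ^ 2 * hcancel
    have hx' := htransform hx
    have hy' := htransform hy
    rw [show x * (γ x * Complex.exp (-q x / 2)) ^ 2 = y * (γ y * Complex.exp (-q y / 2)) ^ 2
      from e] at hx'
    set m := y * (γ y * Complex.exp (-q y / 2)) ^ 2
    have hm : 1 + u * m ≠ 0 := fun h0 => by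
      have hm0 : m = 0 := by linear_combination hx' + x * γ x ^ 2 * h0
      simp [hm0] at h0
    exact hγ.injOn hx hy (mul_right_cancel₀ hm (by linear_combination hy' - hx'))

lemma IsUnivalentSqrt.norm_deriv_zero_le_one (hγ : IsUnivalentSqrt γ) : ‖deriv γ 0‖ ≤ 1 :=
  hγ.deriv_zero ▸ hγ.norm_koebeRatio_zero_le_one

-- Omitting the value `1 / u`, the function `S z = z * γ z ^ 2` has the univalent transform
-- `S / (1 - u * S)`; comparing second coefficients bounds `u`.
lemma IsUnivalentSqrt.norm_le_four_of_one_sub_mul_ne_zero (hγ : IsUnivalentSqrt γ)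
    (hu : ∀ z ∈ ball (0 : ℂ) 1, 1 - u * (z * γ z ^ 2) ≠ 0) : ‖u‖ ≤ 4 := by
  have h0 : (0 : ℂ) ∈ ball (0 : ℂ) 1 := mem_ball_self one_pos
  have hγd := (hγ.differentiableOn.differentiableAt (isOpen_ball.mem_nhds h0)).hasDerivAt
  obtain ⟨q, hq, hq0, hqe⟩ := exists_eq_mul_exp (h := fun z => 1 - u * (z * γ z ^ 2))
    (by have := hγ.differentiableOn; fun_prop) hu
  simp only [zero_mul, mul_zero, sub_zero, one_mul] at hqe
  have hqd := (hq.differentiableAt (isOpen_ball.mem_nhds h0)).hasDerivAt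
  have hderiv_q : deriv q 0 = -u := by
    have hexp := hqd.cexp.congr_of_eventuallyEq
      (Filter.eventually_of_mem (isOpen_ball.mem_nhds h0) hqe)
    have hpoly := (((hasDerivAt_id (0 : ℂ)).mul (hγd.pow 2)).const_mul u).const_sub 1
    simpa [hq0, hγ.map_zero] using hexp.unique hpoly
  have hδ := hγ.mul_exp_neg_div_two hq hq0 fun z hz => (hqe z hz).symm
  have hderiv : deriv (fun z => γ z * Complex.exp (-q z / 2)) 0 = deriv γ 0 + u / 2 := by
    refine (hγd.mul (hqd.neg.div_const 2).cexp).deriv.trans ?_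
    simp [hq0, hγ.map_zero, hderiv_q]
  have hhalf : ‖u / 2‖ ≤ 2 := by
    rw [eq_sub_of_add_eq' hderiv.symm]
    refine (norm_sub_le _ _).trans ?_
    linarith [hδ.norm_deriv_zero_le_one, hγ.norm_deriv_zero_le_one]
  rw [norm_div, Complex.norm_two] at hhalf
  linarith

theorem IsUnivalentSqrt.one_div_four_le_norm_of_notMem_image (hγ : IsUnivalentSqrt γ) {w : ℂ}
    (hw : w ∉ (fun z => z * γ z ^ 2) '' ball 0 1) : 1 / 4 ≤ ‖w‖ := by
  have hw0 : w ≠ 0 := by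
    rintro rfl
    exact hw ⟨0, mem_ball_self one_pos, zero_mul _⟩
  have hinv : ‖w⁻¹‖ ≤ 4 := hγ.norm_le_four_of_one_sub_mul_ne_zero fun z hz h => by
    refine hw ⟨z, hz, ?_⟩
    field_simp at h
    linear_combination -h
  rw [norm_inv, inv_le_comm₀ (norm_pos_iff.2 hw0) (by norm_num)] at hinv
  linarith

end KoebeQuarter

/-! ### Bohr's inequality -/

section Caratheodory

variable {h : ℂ → ℂ} {R s : ℝ} {n : ℕ}

lemma integral_expMonomial_neg_mul_comp_circleMap (hh : DifferentiableOn ℂ h (ball 0 R))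
    (hs : 0 ≤ s) (hsR : s < R) (k : ℤ) :
    ∫ θ in -π..π, expMonomial (-k) θ * h (circleMap 0 s θ) =
      2 * π * Function.extend ((↑) : ℕ → ℤ) (fun n => taylorCoeff h n * s ^ n) 0 k := by
  refine integral_expMonomial_neg_mul ?_ (fun θ => ?_) k
  · rw [← Nat.cast_injective.summable_iff fun k hk => by simp [Function.extend_apply' _ _ _ hk]]
    simpa [Function.comp_def, Nat.cast_injective.extend_apply, abs_of_nonneg hs] using
      summable_norm_taylorCoeff_mul_pow hh hs hsR
  · rw [← Nat.cast_injective.hasSum_iff fun k hk => by simp [Function.extend_apply' _ _ _ hk]]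
    refine (hasSum_taylorCoeff hh (z := circleMap 0 s θ) ?_).congr_fun fun n => ?_
    · rwa [norm_circleMap_zero, abs_of_nonneg hs]
    · have := circleMap_zpow_eq_mul_expMonomial s θ n
      rw [zpow_natCast, zpow_natCast] at this
      rw [Function.comp_apply, Nat.cast_injective.extend_apply, this, mul_assoc]

lemma integral_one_add_re_mul_comp_circleMap (hh : DifferentiableOn ℂ h (ball 0 R)) (hs : 0 ≤ s)
    (hsR : s < R) (hn : n ≠ 0) (v : ℂ) :
    ∫ θ in -π..π, ((2 * (1 + (v * expMonomial (-n) θ).re) : ℝ) : ℂ) * h (circleMap 0 s θ) =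
      2 * π * (2 * h 0 + v * taylorCoeff h n * s ^ n) := by
  have hcoeff := integral_expMonomial_neg_mul_comp_circleMap hh hs hsR
  have hcont : Continuous fun θ => h (circleMap 0 s θ) :=
    hh.continuousOn.comp_continuous (continuous_circleMap 0 s) fun θ => by
      simpa [abs_of_nonneg hs] using hsR
  have hint (a : ℂ) (k : ℤ) : IntervalIntegrable
      (fun θ => a * (expMonomial k θ * h (circleMap 0 s θ))) volume (-π) π :=
    (continuous_const.mul ((continuous_expMonomial k).mul hcont)).intervalIntegrable _ _
  have hkernel (θ : ℝ) : ((2 * (1 + (v * expMonomial (-n) θ).re) : ℝ) : ℂ) * h (circleMap 0 s θ) =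
      2 * (expMonomial (-0) θ * h (circleMap 0 s θ)) +
        (v * (expMonomial (-n) θ * h (circleMap 0 s θ)) +
          conj v * (expMonomial (- -n) θ * h (circleMap 0 s θ))) := by
    have hconj := Complex.add_conj (v * expMonomial (-n) θ)
    rw [map_mul, conj_expMonomial] at hconj
    have hzero : expMonomial (-0) θ = 1 := by simp [expMonomial]
    rw [hzero, mul_add, Complex.ofReal_add, ← hconj]
    push_cast
    ring
  have hneg : ¬∃ m : ℕ, (m : ℤ) = -n := by lia
  have hzero : Function.extend ((↑) : ℕ → ℤ) (fun n => taylorCoeff h n * s ^ n) 0 0 = h 0 :=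
    (Nat.cast_injective.extend_apply _ _ 0).trans (by simp [taylorCoeff_zero])
  simp only [hkernel]
  rw [intervalIntegral.integral_add (hint _ _) ((hint _ _).add (hint _ _)),
    intervalIntegral.integral_add (hint _ _) (hint _ _)]
  simp only [intervalIntegral.integral_const_mul, hcoeff]
  rw [Function.extend_apply' _ _ _ hneg, Nat.cast_injective.extend_apply, hzero, Pi.zero_apply]
  ring

lemma norm_taylorCoeff_mul_pow_le_of_re_nonneg (hh : DifferentiableOn ℂ h (ball 0 R)) (hs : 0 ≤ s)
    (hsR : s < R) (hre : ∀ z ∈ sphere (0 : ℂ) s, 0 ≤ (h z).re) (hn : n ≠ 0) :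
    ‖taylorCoeff h n‖ * s ^ n ≤ 2 * (h 0).re := by
  obtain ⟨v, hv, hvn⟩ := exists_norm_eq_one_mul_eq_norm (taylorCoeff h n)
  have hintegral := integral_one_add_re_mul_comp_circleMap hh hs hsR hn (-v)
  have hnonneg : 0 ≤ (∫ θ in -π..π, ((2 * (1 + (-v * expMonomial (-n) θ).re) : ℝ) : ℂ) *
      h (circleMap 0 s θ)).re := by
    have hcont : Continuous fun θ => h (circleMap 0 s θ) :=
      hh.continuousOn.comp_continuous (continuous_circleMap 0 s) fun θ => by
        simpa [abs_of_nonneg hs] using hsR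
    have hcont' : Continuous fun θ =>
        ((2 * (1 + (-v * expMonomial (-n) θ).re) : ℝ) : ℂ) * h (circleMap 0 s θ) := by
      have := continuous_expMonomial (-n)
      exact (Complex.continuous_ofReal.comp (continuous_const.mul (continuous_const.add
        (Complex.continuous_re.comp (continuous_const.mul this))))).mul hcont
    have hre_integral := Complex.reCLM.intervalIntegral_comp_comm
      (hcont'.intervalIntegrable (μ := volume) (-π) π)
    simp only [Complex.reCLM_apply] at hre_integral
    rw [← hre_integral]
    refine intervalIntegral.integral_nonneg (by linarith [Real.pi_pos]) fun θ _ => ?_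
    rw [Complex.re_ofReal_mul]
    refine mul_nonneg ?_ (hre _ (circleMap_mem_sphere 0 hs θ))
    have hkernel := (abs_le.1 (Complex.abs_re_le_norm (-v * expMonomial (-n) θ))).1
    rw [norm_mul, norm_neg, hv, norm_expMonomial] at hkernel
    linarith
  have hvalue : 2 * π * (2 * h 0 + -v * taylorCoeff h n * s ^ n) =
      ((2 * π : ℝ) : ℂ) * (2 * h 0 - ((‖taylorCoeff h n‖ * s ^ n : ℝ) : ℂ)) := by
    push_cast
    rw [← hvn]
    ring
  rw [hintegral, hvalue, Complex.re_ofReal_mul, mul_nonneg_iff_of_pos_left Real.two_pi_pos,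
    Complex.sub_re, Complex.ofReal_re] at hnonneg
  have htwo : (2 * h 0).re = 2 * (h 0).re := by simp
  linarith

lemma norm_taylorCoeff_le_of_re_nonneg (hh : DifferentiableOn ℂ h (ball 0 1))
    (hre : ∀ z ∈ ball (0 : ℂ) 1, 0 ≤ (h z).re) (hn : n ≠ 0) :
    ‖taylorCoeff h n‖ ≤ 2 * (h 0).re := by
  have hlim : Tendsto (fun s : ℝ => ‖taylorCoeff h n‖ * s ^ n) (𝓝[<] 1)
      (𝓝 (‖taylorCoeff h n‖ * 1 ^ n)) :=
    (by fun_prop : Continuous fun s : ℝ => ‖taylorCoeff h n‖ * s ^ n).continuousWithinAt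
  rw [one_pow, mul_one] at hlim
  refine le_of_tendsto hlim ?_
  filter_upwards [Ioo_mem_nhdsLT (zero_lt_one' ℝ)] with s hs
  exact norm_taylorCoeff_mul_pow_le_of_re_nonneg hh hs.1.le hs.2
    (fun z hz => hre z (sphere_subset_ball hs.2 hz)) hn

lemma norm_taylorCoeff_le_of_norm_le_one (hh : DifferentiableOn ℂ h (ball 0 1))
    (hh1 : ∀ z ∈ ball (0 : ℂ) 1, ‖h z‖ ≤ 1) (hn : n ≠ 0) :
    ‖taylorCoeff h n‖ ≤ 2 * (1 - ‖h 0‖) := by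
  obtain ⟨v, hv, hv0⟩ := exists_norm_eq_one_mul_eq_norm (h 0)
  have hcoeff : taylorCoeff (fun z => 1 - v * h z) n = -(v * taylorCoeff h n) := by
    have hseries : ∀ z : ℂ, ‖z‖ < 1 →
        HasSum (fun n => ((if n = 0 then 1 else 0) - v * taylorCoeff h n) * z ^ n)
          (1 - v * h z) := fun z hz => by
      refine ((hasSum_ite_eq 0 1).sub ((hasSum_taylorCoeff hh hz).mul_left v)).congr_fun fun n => ?_
      rcases eq_or_ne n 0 with rfl | hn <;> simp [*, mul_assoc]
    rw [taylorCoeff_eq_of_hasSum one_pos hseries, if_neg hn, zero_sub]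
  have hbound := norm_taylorCoeff_le_of_re_nonneg (h := fun z => 1 - v * h z)
    ((hh.const_mul v).const_sub 1) (fun z hz => ?_) hn
  · rwa [hcoeff, norm_neg, norm_mul, hv, one_mul, hv0, Complex.sub_re, Complex.one_re,
      Complex.ofReal_re] at hbound
  · rw [Complex.sub_re, Complex.one_re, sub_nonneg]
    calc (v * h z).re ≤ ‖v * h z‖ := Complex.re_le_norm _
      _ ≤ 1 := by rw [norm_mul, hv, one_mul]; exact hh1 z hz

end Caratheodory

section Bohr

variable {η ω φ : ℂ → ℂ} {ρ : ℝ}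

theorem majorant_le_one_of_norm_le_one (hη : DifferentiableOn ℂ η (ball 0 1))
    (hη1 : ∀ z ∈ ball (0 : ℂ) 1, ‖η z‖ ≤ 1) (hρ : 0 ≤ ρ) (hρ3 : ρ ≤ 1 / 3) :
    majorant η ρ ≤ 1 := by
  have hρ1 : ρ < 1 := by linarith
  have hη0 := hη1 0 (mem_ball_self one_pos)
  have hsum := summable_norm_taylorCoeff_mul_pow hη hρ hρ1
  have hgeom := ((hasSum_geometric_of_lt_one hρ hρ1).mul_left (2 * (1 - ‖η 0‖) * ρ))
  have htail : ∑' n, ‖taylorCoeff η (n + 1)‖ * ρ ^ (n + 1) ≤ 1 - ‖η 0‖ :=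
    calc ∑' n, ‖taylorCoeff η (n + 1)‖ * ρ ^ (n + 1)
        ≤ ∑' n, 2 * (1 - ‖η 0‖) * ρ * ρ ^ n := by
          refine ((summable_nat_add_iff 1).2 hsum).tsum_le_tsum (fun n => ?_) hgeom.summable
          rw [pow_succ', ← mul_assoc]
          gcongr
          exact norm_taylorCoeff_le_of_norm_le_one hη hη1 n.succ_ne_zero
      _ = (1 - ‖η 0‖) * (2 * ρ / (1 - ρ)) := by
          rw [hgeom.tsum_eq]
          ring
      _ ≤ (1 - ‖η 0‖) * 1 := by
          gcongr
          rw [div_le_one (by linarith)]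
          linarith
      _ = 1 - ‖η 0‖ := mul_one _
  rw [majorant, hsum.tsum_eq_zero_add, taylorCoeff_zero, pow_zero, mul_one]
  linarith

lemma majorant_le_self_of_mapsTo (hω : DifferentiableOn ℂ ω (ball 0 1))
    (hmaps : MapsTo ω (ball 0 1) (ball 0 1)) (hω0 : ω 0 = 0) (hρ : 0 ≤ ρ) (hρ3 : ρ ≤ 1 / 3) :
    majorant ω ρ ≤ ρ := by
  have hdslope : DifferentiableOn ℂ (dslope ω 0) (ball 0 1) :=
    (Complex.differentiableOn_dslope (ball_mem_nhds 0 one_pos)).2 hω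
  have hdslope1 : ∀ z ∈ ball (0 : ℂ) 1, ‖dslope ω 0 z‖ ≤ 1 := fun z hz => by
    simpa using Complex.norm_dslope_le_div_of_mapsTo_ball (R₂ := 1) hω
      (by rw [hω0]; exact hmaps.mono_right ball_subset_closedBall) hz
  rw [majorant_eq_norm_add_mul (a := 0) hdslope
    (fun z _ => by simpa [hω0] using (sub_smul_dslope ω 0 z).symm) hρ (by linarith), norm_zero,
    zero_add]
  exact mul_le_of_le_one_right hρ (majorant_le_one_of_norm_le_one hdslope hdslope1 hρ hρ3)

end Bohr

section Composition

variable {φ ω : ℂ → ℂ} {ρ : ℝ}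

lemma summable_norm_taylorCoeff_mul_norm_taylorCoeff_pow (hφ : DifferentiableOn ℂ φ (ball 0 1))
    (hω : DifferentiableOn ℂ ω (ball 0 1)) (hρ : 0 ≤ ρ) (hρ1 : ρ < 1)
    (hωρ : majorant ω ρ ≤ ρ) : Summable fun p : ℕ × ℕ =>
      ‖taylorCoeff φ p.1‖ * (‖taylorCoeff (fun z => ω z ^ p.1) p.2‖ * ρ ^ p.2) := by
  have hrow (k : ℕ) : Summable fun n =>
      ‖taylorCoeff φ k‖ * (‖taylorCoeff (fun z => ω z ^ k) n‖ * ρ ^ n) :=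
    (summable_norm_taylorCoeff_mul_pow (hω.fun_pow k) hρ hρ1).mul_left _
  refine (summable_prod_of_nonneg fun p => ?_).2 ⟨hrow, ?_⟩
  · dsimp only [Pi.zero_apply]
    positivity
  refine Summable.of_nonneg_of_le (fun k => tsum_nonneg fun n => by positivity) (fun k => ?_)
    (summable_norm_taylorCoeff_mul_pow hφ hρ hρ1)
  dsimp only
  rw [tsum_mul_left]
  gcongr
  exact (majorant_pow_le hω hρ hρ1 k).trans (by gcongr; exact majorant_nonneg _ hρ)

lemma hasSum_taylorCoeff_comp (hφ : DifferentiableOn ℂ φ (ball 0 1))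
    (hω : DifferentiableOn ℂ ω (ball 0 1)) (hmaps : MapsTo ω (ball 0 1) (ball 0 1)) (hρ : 0 < ρ)
    (hρ1 : ρ < 1) (hωρ : majorant ω ρ ≤ ρ) (n : ℕ) :
    HasSum (fun k => taylorCoeff φ k * taylorCoeff (fun z => ω z ^ k) n)
      (taylorCoeff (fun z => φ (ω z)) n) := by
  have hdouble := summable_norm_taylorCoeff_mul_norm_taylorCoeff_pow hφ hω hρ.le hρ1 hωρ
  have hcol (n : ℕ) : Summable fun k => taylorCoeff φ k * taylorCoeff (fun z => ω z ^ k) n := by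
    refine .of_norm (((hdouble.prod_symm.prod_factor n).mul_right (ρ ^ n)⁻¹).congr fun k => ?_)
    rw [norm_mul]
    simp only [Prod.swap_prod_mk]
    field_simp
  rw [taylorCoeff_eq_of_hasSum hρ (c := fun n => ∑' k, taylorCoeff φ k *
    taylorCoeff (fun z => ω z ^ k) n) (fun z hz => ?_) n]
  · exact (hcol n).hasSum
  have hz1 := hz.trans hρ1
  have hsum : Summable fun p : ℕ × ℕ =>
      taylorCoeff φ p.1 * (taylorCoeff (fun z => ω z ^ p.1) p.2 * z ^ p.2) :=
    .of_norm_bounded hdouble fun p => by rw [norm_mul, norm_mul, norm_pow]; gcongr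
  have hvalue : ∑' p : ℕ × ℕ,
      taylorCoeff φ p.1 * (taylorCoeff (fun z => ω z ^ p.1) p.2 * z ^ p.2) = φ (ω z) :=
    (hsum.hasSum.prod_fiberwise fun k =>
      (hasSum_taylorCoeff (hω.fun_pow k) hz1).mul_left (taylorCoeff φ k)).unique
      (hasSum_taylorCoeff hφ (mem_ball_zero_iff.1 (hmaps (mem_ball_zero_iff.2 hz1))))
  rw [← hvalue]
  refine ((Equiv.prodComm ℕ ℕ).hasSum_iff.2 hsum.hasSum).prod_fiberwise fun n => ?_
  exact ((hcol n).hasSum.mul_right (z ^ n)).congr_fun fun k => (mul_assoc _ _ _).symm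

lemma majorant_comp_le_of_majorant_le (hφ : DifferentiableOn ℂ φ (ball 0 1))
    (hω : DifferentiableOn ℂ ω (ball 0 1)) (hmaps : MapsTo ω (ball 0 1) (ball 0 1)) (hρ : 0 < ρ)
    (hρ1 : ρ < 1) (hωρ : majorant ω ρ ≤ ρ) :
    majorant (fun z => φ (ω z)) ρ ≤ majorant φ ρ := by
  have hdouble := summable_norm_taylorCoeff_mul_norm_taylorCoeff_pow hφ hω hρ.le hρ1 hωρ
  have hcoeff (n : ℕ) : ‖taylorCoeff (fun z => φ (ω z)) n‖ * ρ ^ n ≤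
      ∑' k, ‖taylorCoeff φ k‖ * (‖taylorCoeff (fun z => ω z ^ k) n‖ * ρ ^ n) := by
    have hsum := (hasSum_taylorCoeff_comp hφ hω hmaps hρ hρ1 hωρ n).mul_right ((ρ : ℂ) ^ n)
    have hbound := tsum_of_norm_bounded (hdouble.prod_symm.prod_factor n).hasSum
      (f := fun k => taylorCoeff φ k * taylorCoeff (fun z => ω z ^ k) n * (ρ : ℂ) ^ n) fun k => by
        simp [abs_of_pos hρ, mul_assoc]
    rwa [hsum.tsum_eq, norm_mul, norm_pow, Complex.norm_of_nonneg hρ.le] at hbound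
  calc majorant (fun z => φ (ω z)) ρ
      ≤ ∑' n, ∑' k, ‖taylorCoeff φ k‖ * (‖taylorCoeff (fun z => ω z ^ k) n‖ * ρ ^ n) :=
        (summable_norm_taylorCoeff_mul_pow (hφ.comp hω hmaps) hρ.le hρ1).tsum_le_tsum hcoeff
          hdouble.prod_symm.prod
    _ = ∑' k, ‖taylorCoeff φ k‖ * majorant (fun z => ω z ^ k) ρ := by
        simp only [majorant, ← tsum_mul_left]
        exact (hdouble.tsum_comm (f := fun k n =>
          ‖taylorCoeff φ k‖ * (‖taylorCoeff (fun z => ω z ^ k) n‖ * ρ ^ n)))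
    _ ≤ majorant φ ρ := by
        refine Summable.tsum_le_tsum (fun k => ?_) ?_
          (summable_norm_taylorCoeff_mul_pow hφ hρ.le hρ1)
        · gcongr
          exact (majorant_pow_le hω hρ.le hρ1 k).trans (by gcongr; exact majorant_nonneg _ hρ.le)
        · simpa only [tsum_mul_left, majorant] using hdouble.prod

theorem majorant_comp_le (hφ : DifferentiableOn ℂ φ (ball 0 1))
    (hω : DifferentiableOn ℂ ω (ball 0 1)) (hmaps : MapsTo ω (ball 0 1) (ball 0 1))
    (hω0 : ω 0 = 0) (hρ : 0 < ρ) (hρ3 : ρ ≤ 1 / 3) :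
    majorant (fun z => φ (ω z)) ρ ≤ majorant φ ρ :=
  majorant_comp_le_of_majorant_le hφ hω hmaps hρ (by linarith)
    (majorant_le_self_of_mapsTo hω hmaps hω0 hρ.le hρ3)

end Composition

section UnivalentUnitDisc

variable {φ : ℂ → ℂ}

lemma exists_isUnivalentSqrt_of_injOn (hφ : DifferentiableOn ℂ φ (ball 0 1))
    (hinj : InjOn φ (ball 0 1)) (hφ0 : φ 0 = 0) :
    ∃ γ, IsUnivalentSqrt γ ∧ ∀ z ∈ ball (0 : ℂ) 1, φ z = deriv φ 0 * (z * γ z ^ 2) := by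
  have h0 : (0 : ℂ) ∈ ball (0 : ℂ) 1 := mem_ball_self one_pos
  have hderiv : deriv φ 0 ≠ 0 := deriv_ne_zero_of_injOn isOpen_ball hφ hinj h0
  have hfactor (z : ℂ) : φ z = z * dslope φ 0 z := by
    simpa [hφ0] using (sub_smul_dslope φ 0 z).symm
  have hne (z : ℂ) (hz : z ∈ ball (0 : ℂ) 1) : dslope φ 0 z ≠ 0 := by
    intro hzero
    have hz0 : z = 0 := hinj hz h0 (by rw [hfactor z, hzero, mul_zero, hφ0])
    rw [hz0, dslope_same] at hzero
    exact hderiv hzero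
  obtain ⟨q, hq, hq0, hqφ⟩ := exists_eq_mul_exp
    ((Complex.differentiableOn_dslope (ball_mem_nhds 0 one_pos)).2 hφ) hne
  have hsq (z : ℂ) (hz : z ∈ ball (0 : ℂ) 1) :
      φ z = deriv φ 0 * (z * Complex.exp (q z / 2) ^ 2) := by
    rw [hfactor, hqφ z hz, dslope_same, ← Complex.exp_nat_mul, Nat.cast_two,
      mul_div_cancel₀ _ two_ne_zero, mul_left_comm]
  refine ⟨fun z => Complex.exp (q z / 2), ⟨(hq.div_const 2).cexp, by simp [hq0], ?_⟩, hsq⟩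
  intro z hz w hw heq
  exact hinj hz hw (by rw [hsq z hz, hsq w hw]; exact congrArg _ heq)

theorem norm_deriv_div_four_le_norm_of_notMem_image (hφ : DifferentiableOn ℂ φ (ball 0 1))
    (hinj : InjOn φ (ball 0 1)) (hφ0 : φ 0 = 0) {w : ℂ} (hw : w ∉ φ '' ball 0 1) :
    ‖deriv φ 0‖ / 4 ≤ ‖w‖ := by
  obtain ⟨γ, hγ, hφγ⟩ := exists_isUnivalentSqrt_of_injOn hφ hinj hφ0
  have hderiv : deriv φ 0 ≠ 0 :=
    deriv_ne_zero_of_injOn isOpen_ball hφ hinj (mem_ball_self one_pos)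
  have hquarter : 1 / 4 ≤ ‖w / deriv φ 0‖ :=
    hγ.one_div_four_le_norm_of_notMem_image fun ⟨z, hz, hzw⟩ =>
      hw ⟨z, hz, by rw [hφγ z hz, ← mul_div_cancel₀ w hderiv]; exact congrArg _ hzw⟩
  rw [norm_div, le_div_iff₀ (norm_pos_iff.2 hderiv)] at hquarter
  linarith

theorem majorant_le_norm_deriv_div_four (hφ : DifferentiableOn ℂ φ (ball 0 1))
    (hinj : InjOn φ (ball 0 1)) (hφ0 : φ 0 = 0) {ρ : ℝ} (hρ : 0 ≤ ρ) (hρ' : ρ ≤ 3 - 2 * √2) :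
    majorant φ ρ ≤ ‖deriv φ 0‖ / 4 := by
  obtain ⟨γ, hγ, hφγ⟩ := exists_isUnivalentSqrt_of_injOn hφ hinj hφ0
  have hρ1 : ρ < 1 := by linarith [Real.one_lt_sqrt_two]
  have hmajorant := majorant_eq_norm_add_mul (h := φ) (a := 0)
    (k := fun z => deriv φ 0 * γ z ^ 2) ((hγ.differentiableOn.fun_pow 2).const_mul _)
    (fun z hz => by rw [hφγ z (mem_ball_zero_iff.2 hz)]; ring) hρ hρ1
  have hconst : majorant (fun z => deriv φ 0 * γ z ^ 2) ρ =
      ‖deriv φ 0‖ * majorant (fun z => γ z ^ 2) ρ := by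
    simp only [majorant, ← tsum_mul_left, taylorCoeff, iteratedDeriv_const_mul_field, norm_mul]
    exact tsum_congr fun n => by ring
  rw [hmajorant, hconst, norm_zero, zero_add, mul_left_comm, div_eq_mul_one_div]
  gcongr
  exact mul_majorant_sq_le hγ hρ hρ'

lemma image_ball_ne_univ_of_injOn (hφ : DifferentiableOn ℂ φ (ball 0 1))
    (hinj : InjOn φ (ball 0 1)) : φ '' ball 0 1 ≠ univ := by
  intro huniv
  have hinv := differentiableOn_invFunOn isOpen_ball hφ hinj
  rw [huniv, differentiableOn_univ] at hinv
  have hbdd : Bornology.IsBounded (range (Function.invFunOn φ (ball 0 1))) := by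
    refine (isBounded_ball (x := (0 : ℂ)) (r := 1)).subset (range_subset_iff.2 fun w => ?_)
    exact Function.invFunOn_mem (huniv ▸ mem_univ w : w ∈ φ '' ball 0 1)
  have hconst := hinv.apply_eq_apply_of_bounded hbdd (φ 0) (φ (1 / 2))
  rw [hinj.leftInvOn_invFunOn (mem_ball_self one_pos),
    hinj.leftInvOn_invFunOn (by norm_num [mem_ball_zero_iff])] at hconst
  norm_num at hconst

end UnivalentUnitDisc

/-! ### Holomorphic functions on Banach spaces -/

section BanachHolomorphic

variable {X Y Z : Type*} [NormedAddCommGroup X] [NormedSpace ℂ X] [NormedAddCommGroup Y]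
  [NormedSpace ℂ Y] [NormedAddCommGroup Z] [NormedSpace ℂ Z] {f : X → Y} {s : Set X} {x y z : X}
  {δ M : ℝ}

lemma norm_fderiv_le_of_norm_le_on_ball (hδ : 0 < δ) (hf : DifferentiableOn ℂ f (ball x δ))
    (hM : ∀ y ∈ ball x δ, ‖f y‖ ≤ M) : ‖fderiv ℂ f x‖ ≤ 2 * M / δ := by
  refine Complex.norm_fderiv_le_div_of_mapsTo_ball hf (fun y hy => ?_) hδ
  rw [mem_closedBall, dist_eq_norm, two_mul]
  exact (norm_sub_le _ _).trans (add_le_add (hM y hy) (hM x (mem_ball_self hδ)))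

lemma exists_norm_fderiv_le_on_ball (hs : IsOpen s) (hf : DifferentiableOn ℂ f s) (hx : x ∈ s) :
    ∃ δ > 0, ball x δ ⊆ s ∧ ∃ M, ∀ y ∈ ball x δ, ‖fderiv ℂ f y‖ ≤ M := by
  have hcont : ContinuousAt (fun y => ‖f y‖) x :=
    (hf.continuousOn.continuousAt (hs.mem_nhds hx)).norm
  obtain ⟨ε, hε, hball⟩ := Metric.eventually_nhds_iff_ball.1
    ((hcont.eventually (gt_mem_nhds (lt_add_one ‖f x‖))).and (hs.mem_nhds hx))
  have hsub {y : X} (hy : y ∈ ball x (ε / 2)) : ball y (ε / 2) ⊆ ball x ε :=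
    ball_subset_ball' (by linarith [mem_ball.1 hy])
  refine ⟨ε / 2, half_pos hε, fun y hy => (hball y (ball_subset_ball (by linarith) hy)).2,
    2 * (‖f x‖ + 1) / (ε / 2), fun y hy => ?_⟩
  exact norm_fderiv_le_of_norm_le_on_ball (half_pos hε)
    (hf.mono fun z hz => (hball z (hsub hy hz)).2) fun z hz => (hball z (hsub hy hz)).1.le

lemma norm_fderiv_sub_fderiv_le (hδ : 0 < δ) (hf : DifferentiableOn ℂ f (ball x (2 * δ)))
    (hM : ∀ w ∈ ball x (2 * δ), ‖fderiv ℂ f w‖ ≤ M) (hy : y ∈ ball x δ) (hz : z ∈ ball x δ) :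
    ‖fderiv ℂ f z - fderiv ℂ f y‖ ≤ 2 * M / δ * ‖z - y‖ := by
  have hdiff {w : X} (hw : w ∈ ball x (2 * δ)) : DifferentiableAt ℂ f w :=
    hf.differentiableAt (isOpen_ball.mem_nhds hw)
  have hmem {w : X} (hw : w ∈ ball y δ) : w ∈ ball x (2 * δ) :=
    ball_subset_ball' (by linarith [mem_ball.1 hy]) hw
  have hmem' {w : X} (hw : w ∈ ball y δ) : w + (z - y) ∈ ball x (2 * δ) := by
    rw [mem_ball, dist_eq_norm] at *
    calc ‖w + (z - y) - x‖ = ‖(w - y) + (z - x)‖ := by congr 1; abel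
      _ ≤ ‖w - y‖ + ‖z - x‖ := norm_add_le _ _
      _ < 2 * δ := by linarith
  have hincr := norm_fderiv_le_of_norm_le_on_ball (x := y) (M := M * ‖z - y‖)
    (f := fun w => f (w + (z - y)) - f w) hδ
    (fun w hw => (((differentiableAt_comp_add_right _).2 (hdiff (hmem' hw))).sub
      (hdiff (hmem hw))).differentiableWithinAt)
    fun w hw => by
      simpa using (convex_ball x (2 * δ)).norm_image_sub_le_of_norm_fderiv_le
        (fun w hw => hdiff hw) hM (hmem hw) (hmem' hw)
  have hy' := mem_ball_self (x := y) hδ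
  rw [fderiv_fun_sub ((differentiableAt_comp_add_right _).2 (hdiff (hmem' hy'))) (hdiff (hmem hy')),
    fderiv_comp_add_right, add_sub_cancel] at hincr
  exact hincr.trans_eq (by ring)

lemma norm_sub_sub_fderiv_le (hδ : 0 < δ) (hf : DifferentiableOn ℂ f (ball x (2 * δ)))
    (hM : ∀ w ∈ ball x (2 * δ), ‖fderiv ℂ f w‖ ≤ M) (hy : y ∈ ball x δ) (hz : z ∈ ball x δ) :
    ‖f z - f y - fderiv ℂ f y (z - y)‖ ≤ 2 * M / δ * ‖z - y‖ ^ 2 := by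
  have hM0 : 0 ≤ M := (norm_nonneg _).trans (hM x (mem_ball_self (by positivity)))
  have hsub : segment ℝ y z ⊆ ball x δ := (convex_ball x δ).segment_subset hy hz
  rw [pow_two, ← mul_assoc]
  refine (convex_segment y z).norm_image_sub_le_of_norm_fderiv_le' (fun w hw => ?_)
    (fun w hw => ?_) (left_mem_segment ℝ y z) (right_mem_segment ℝ y z)
  · exact hf.differentiableAt (isOpen_ball.mem_nhds (ball_subset_ball (by linarith) (hsub hw)))
  · refine (norm_fderiv_sub_fderiv_le hδ hf hM hy (hsub hw)).trans ?_
    gcongr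
    exact norm_sub_le_of_mem_segment hw

lemma norm_smul_sub_sub_fderiv_le (hδ : 0 < δ) (hf : DifferentiableOn ℂ f (ball x (2 * δ)))
    (hM : ∀ w ∈ ball x (2 * δ), ‖fderiv ℂ f w‖ ≤ M) (hy : y ∈ ball x δ) {c : ℂ} (hc : c ≠ 0) {h : X}
    (hh : y + c⁻¹ • h ∈ ball x δ) :
    ‖c • (f (y + c⁻¹ • h) - f y) - fderiv ℂ f y h‖ ≤ 2 * M / δ * ‖h‖ ^ 2 / ‖c‖ := by
  have hTaylor := norm_sub_sub_fderiv_le hδ hf hM hy hh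
  have hc' : ‖c‖ ≠ 0 := norm_ne_zero_iff.2 hc
  rw [add_sub_cancel_left, map_smul, norm_smul, norm_inv] at hTaylor
  calc ‖c • (f (y + c⁻¹ • h) - f y) - fderiv ℂ f y h‖
      = ‖c‖ * ‖f (y + c⁻¹ • h) - f y - c⁻¹ • fderiv ℂ f y h‖ := by
        rw [← norm_smul, smul_sub _ _ (_ • _), smul_inv_smul₀ hc]
    _ ≤ ‖c‖ * (2 * M / δ * (‖c‖⁻¹ * ‖h‖) ^ 2) := by gcongr
    _ = 2 * M / δ * ‖h‖ ^ 2 / ‖c‖ := by field_simp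

lemma norm_sub_sub_fderiv_le_of_norm_le (hδ : 0 < δ) (hf : DifferentiableOn ℂ f (ball x (3 * δ)))
    (hM : ∀ w ∈ ball x (3 * δ), ‖f w‖ ≤ M) (hz : z ∈ ball x δ) :
    ‖f z - f x - fderiv ℂ f x (z - x)‖ ≤ 4 * M / δ ^ 2 * ‖z - x‖ ^ 2 := by
  have hsub {w : X} (hw : w ∈ ball x (2 * δ)) : ball w δ ⊆ ball x (3 * δ) :=
    ball_subset_ball' (by linarith [mem_ball.1 hw])
  refine (norm_sub_sub_fderiv_le hδ (hf.mono (ball_subset_ball (by linarith))) (fun w hw =>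
    norm_fderiv_le_of_norm_le_on_ball hδ (hf.mono (hsub hw)) fun v hv => hM v (hsub hw hv))
    (mem_ball_self hδ) hz).trans_eq ?_
  field_simp
  ring

lemma differentiableOn_of_tendstoUniformlyOn {ι : Type*} {l : Filter ι} [l.NeBot] [CompleteSpace Y]
    {F : ι → X → Y} (hs : IsOpen s) (hF : ∀ i, DifferentiableOn ℂ (F i) s)
    (hlim : TendstoUniformlyOn F f l s) : DifferentiableOn ℂ f s := by
  intro x hx
  obtain ⟨ε, hε, hball⟩ := Metric.isOpen_iff.1 hs x hx
  have hmem {y : X} (hy : y ∈ ball x (ε / 2)) : ball y (ε / 2) ⊆ s :=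
    (ball_subset_ball' (by linarith [mem_ball.1 hy])).trans hball
  have hcauchy : UniformCauchySeqOn (fun i => fderiv ℂ (F i)) l (ball x (ε / 2)) := by
    intro u hu
    obtain ⟨r, hr, hru⟩ := Metric.mem_uniformity_dist.1 hu
    filter_upwards [hlim.uniformCauchySeqOn _ (Metric.dist_mem_uniformity
      (show 0 < r * ε / 8 by positivity))] with i hi y hy
    apply hru
    have hdiff (j : ι) {z : X} (hz : z ∈ ball y (ε / 2)) : DifferentiableAt ℂ (F j) z :=
      (hF j).differentiableAt (hs.mem_nhds (hmem hy hz))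
    have hy' := mem_ball_self (x := y) (half_pos hε)
    rw [dist_eq_norm, ← fderiv_fun_sub (hdiff i.1 hy') (hdiff i.2 hy')]
    have hbound := norm_fderiv_le_of_norm_le_on_ball (half_pos hε) (M := r * ε / 8)
      (f := fun y => F i.1 y - F i.2 y)
      (fun z hz => ((hdiff i.1 hz).sub (hdiff i.2 hz)).differentiableWithinAt) fun z hz => by
        rw [← dist_eq_norm]; exact (hi z (hmem hy hz)).le
    refine hbound.trans_lt ?_
    field_simp
    linarith
  have hpointwise (y : X) (hy : y ∈ ball x (ε / 2)) :
      ∃ f', Tendsto (fun i => fderiv ℂ (F i) y) l (𝓝 f') :=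
    cauchy_map_iff_exists_tendsto.1 (hcauchy.cauchy_map hy)
  choose! f' hf' using hpointwise
  refine (hasFDerivAt_of_tendstoUniformlyOn isOpen_ball (hcauchy.tendstoUniformlyOn_of_tendsto hf')
    (fun i y hy => ((hF i).differentiableAt (hs.mem_nhds ?_)).hasFDerivAt) (fun y hy => ?_)
    (mem_ball_self (half_pos hε))).differentiableAt.differentiableWithinAt
  · exact hmem hy (mem_ball_self (half_pos hε))
  · exact hlim.tendsto_at (hmem hy (mem_ball_self (half_pos hε)))

lemma differentiableOn_fderiv_apply [CompleteSpace Y] (hs : IsOpen s)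
    (hf : DifferentiableOn ℂ f s) (h : X) : DifferentiableOn ℂ (fun y => fderiv ℂ f y h) s := by
  intro x hx
  obtain ⟨ε, hε, hball, M, hM⟩ := exists_norm_fderiv_le_on_ball hs hf hx
  obtain ⟨δ, hδ, rfl⟩ : ∃ δ > 0, 4 * δ = ε := ⟨ε / 4, by positivity, by ring⟩
  have hdiff {y : X} (hy : y ∈ ball x (4 * δ)) : DifferentiableAt ℂ f y :=
    hf.differentiableAt (hs.mem_nhds (hball hy))
  have hsub : ball x δ ⊆ ball x (4 * δ) := ball_subset_ball (by linarith)
  obtain ⟨N, hN⟩ := exists_nat_gt (‖h‖ / δ)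
  have hN0 : (0 : ℝ) < N := (by positivity : 0 ≤ ‖h‖ / δ).trans_lt hN
  have hc (n : ℕ) : (0 : ℝ) < n + N := by positivity
  have hmem (n : ℕ) {y : X} (hy : y ∈ ball x δ) :
      y + ((n + N : ℝ) : ℂ)⁻¹ • h ∈ ball x (2 * δ) := by
    have hstep : ‖((n + N : ℝ) : ℂ)⁻¹ • h‖ < δ := by
      rw [norm_smul, norm_inv, Complex.norm_of_nonneg (hc n).le, inv_mul_lt_iff₀ (hc n)]
      exact (div_lt_iff₀ hδ).1 (hN.trans_le (by simp))
    rw [mem_ball, dist_eq_norm] at *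
    calc ‖y + ((n + N : ℝ) : ℂ)⁻¹ • h - x‖ = ‖(y - x) + ((n + N : ℝ) : ℂ)⁻¹ • h‖ := by congr 1; abel
      _ ≤ ‖y - x‖ + ‖((n + N : ℝ) : ℂ)⁻¹ • h‖ := norm_add_le _ _
      _ < 2 * δ := by linarith
  refine (differentiableOn_of_tendstoUniformlyOn (l := atTop) isOpen_ball (F := fun (n : ℕ) y =>
    ((n + N : ℝ) : ℂ) • (f (y + ((n + N : ℝ) : ℂ)⁻¹ • h) - f y)) (fun n y hy => ?_)
    (Metric.tendstoUniformlyOn_iff.2 fun r hr => ?_) |>.differentiableAt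
      (ball_mem_nhds x hδ)).differentiableWithinAt
  · have hd := hdiff (ball_subset_ball (by linarith) (hmem n hy))
    exact ((((differentiableAt_comp_add_right _).2 hd).sub
      (hdiff (hsub hy))).const_smul _).differentiableWithinAt
  · have hlim : Tendsto (fun n : ℕ => 2 * M / (2 * δ) * ‖h‖ ^ 2 / (n + N : ℝ)) atTop (𝓝 0) :=
      tendsto_const_nhds.div_atTop (tendsto_atTop_add_const_right _ _ tendsto_natCast_atTop_atTop)
    filter_upwards [hlim.eventually (gt_mem_nhds hr)] with n hn y hy
    have hball' : ball x (2 * (2 * δ)) ⊆ ball x (4 * δ) := ball_subset_ball (by linarith)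
    have hTaylor := norm_smul_sub_sub_fderiv_le (by positivity) (hf.mono (hball'.trans hball))
      (fun w hw => hM w (hball' hw)) (ball_subset_ball (by linarith) hy)
      (Complex.ofReal_ne_zero.2 (hc n).ne') (hmem n hy)
    rw [Complex.norm_of_nonneg (hc n).le] at hTaylor
    rw [dist_comm, dist_eq_norm]
    exact hTaylor.trans_lt hn

lemma differentiableOn_of_forall_apply [CompleteSpace Y] {T : X → Z →L[ℂ] Y} (hs : IsOpen s)
    (hT : ∀ h, DifferentiableOn ℂ (fun y => T y h) s)
    (hbdd : ∀ x ∈ s, ∃ δ > 0, ball x δ ⊆ s ∧ ∃ M, ∀ y ∈ ball x δ, ‖T y‖ ≤ M) :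
    DifferentiableOn ℂ T s := by
  intro x hx
  obtain ⟨ε, hε, hball, M, hM⟩ := hbdd x hx
  obtain ⟨δ, hδ, rfl⟩ : ∃ δ > 0, 3 * δ = ε := ⟨ε / 3, by positivity, by ring⟩
  have hM0 : 0 ≤ M := (norm_nonneg _).trans (hM x (mem_ball_self hε))
  have hTx (h : Z) : DifferentiableAt ℂ (fun y => T y h) x :=
    (hT h).differentiableAt (hs.mem_nhds hx)
  have hTM (h : Z) (y : X) (hy : y ∈ ball x (3 * δ)) : ‖T y h‖ ≤ M * ‖h‖ :=
    (T y).le_of_opNorm_le (hM y hy) h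
  let B : Z →L[ℂ] X →L[ℂ] Y := LinearMap.mkContinuous
    { toFun := fun h => fderiv ℂ (fun y => T y h) x
      map_add' := fun h k => by simp only [map_add, fderiv_fun_add (hTx h) (hTx k)]
      map_smul' := fun c h => by
        simp only [map_smul, fderiv_fun_const_smul (hTx h), RingHom.id_apply] }
    (2 * M / (3 * δ)) fun h => (norm_fderiv_le_of_norm_le_on_ball hε ((hT h).mono hball)
      (hTM h)).trans_eq (by ring)
  refine (HasFDerivAt.of_isLittleO (f' := B.flip) ?_).differentiableAt.differentiableWithinAt
  refine Asymptotics.IsBigO.trans_isLittleO ?_ (Asymptotics.isLittleO_pow_sub_sub x one_lt_two)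
  refine .of_bound (4 * M / δ ^ 2) ?_
  filter_upwards [ball_mem_nhds x hδ] with y hy
  rw [norm_pow, norm_norm]
  refine ContinuousLinearMap.opNorm_le_bound _ (by positivity) fun h => ?_
  exact (norm_sub_sub_fderiv_le_of_norm_le hδ ((hT h).mono hball) (hTM h) hy).trans_eq (by ring)

theorem differentiableOn_fderiv [CompleteSpace Y] (hs : IsOpen s) (hf : DifferentiableOn ℂ f s) :
    DifferentiableOn ℂ (fderiv ℂ f) s :=
  differentiableOn_of_forall_apply hs (differentiableOn_fderiv_apply hs hf) fun _ hx =>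
    exists_norm_fderiv_le_on_ball hs hf hx

end BanachHolomorphic

section BanachContDiff

universe u v

-- The induction replaces `Y` by `X →L[ℂ] Y`, so the universe of `Y` must contain that of `X`.
theorem contDiffOn_nat_of_differentiableOn_aux {X : Type u} [NormedAddCommGroup X] [NormedSpace ℂ X]
    {Y : Type max u v} [NormedAddCommGroup Y] [NormedSpace ℂ Y] [CompleteSpace Y] {f : X → Y}
    {s : Set X} (hs : IsOpen s) (hf : DifferentiableOn ℂ f s) (n : ℕ) : ContDiffOn ℂ n f s := by
  induction n generalizing Y with
  | zero => exact contDiffOn_zero.2 hf.continuousOn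
  | succ n ih =>
    exact (contDiffOn_succ_iff_fderiv_of_isOpen hs).2
      ⟨hf, by simp, ih (differentiableOn_fderiv hs hf)⟩

theorem contDiffOn_nat_of_differentiableOn {X : Type u} [NormedAddCommGroup X] [NormedSpace ℂ X]
    {Y : Type v} [NormedAddCommGroup Y] [NormedSpace ℂ Y] [CompleteSpace Y] {f : X → Y}
    {s : Set X} (hs : IsOpen s) (hf : DifferentiableOn ℂ f s) (n : ℕ) : ContDiffOn ℂ n f s := by
  refine ContDiffOn.of_le (n := (n + 1 : ℕ)) ?_ (by exact_mod_cast n.le_succ)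
  exact (contDiffOn_succ_iff_fderiv_of_isOpen hs).2 ⟨hf, by simp,
    contDiffOn_nat_of_differentiableOn_aux.{u, v} hs (differentiableOn_fderiv hs hf) n⟩

end BanachContDiff

section LineRestriction

variable {X Y : Type*} [NormedAddCommGroup X] [NormedSpace ℂ X] [NormedAddCommGroup Y]
  [NormedSpace ℂ Y] {a u x : X} {f g : X → ℂ} {F G : X → X} {c : ℂ}

lemma iteratedFDeriv_zero_apply_const {G : X → Y} {s : Set X} {n : ℕ} (hs : IsOpen s)
    (hs0 : 0 ∈ s) (hG : ContDiffOn ℂ n G s) (x : X) :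
    iteratedFDeriv ℂ n G 0 (fun _ => x) = iteratedDeriv n (fun z : ℂ => G (z • x)) 0 := by
  let L : ℂ →L[ℂ] X := ContinuousLinearMap.toSpanSingleton ℂ x
  have hL : IsOpen (L ⁻¹' s) := hs.preimage L.continuous
  have hL0 : (0 : ℂ) ∈ L ⁻¹' s := by simpa using hs0
  have hcomp := L.iteratedFDerivWithin_comp_right hG hs.uniqueDiffOn hL.uniqueDiffOn hL0 le_rfl
  rw [map_zero, iteratedFDerivWithin_of_isOpen n hL hL0,
    iteratedFDerivWithin_of_isOpen n hs hs0] at hcomp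
  change _ = iteratedDeriv n (G ∘ L) 0
  simp [iteratedDeriv_eq_iteratedFDeriv, hcomp, L]

lemma exists_norm_eq_one_eq_norm_smul (hx : x ≠ 0) : ∃ u : X, ‖u‖ = 1 ∧ x = (‖x‖ : ℂ) • u :=
  ⟨(‖x‖ : ℂ)⁻¹ • x, norm_smul_inv_norm hx,
    (smul_inv_smul₀ (Complex.ofReal_ne_zero.2 (norm_ne_zero_iff.2 hx)) x).symm⟩

lemma smul_mem_unitBall_iff (hu : ‖u‖ = 1) {z : ℂ} :
    z • u ∈ ball (0 : X) 1 ↔ z ∈ ball (0 : ℂ) 1 := by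
  simp only [mem_ball_zero_iff, norm_smul, hu, mul_one]

lemma differentiableOn_comp_smul_const {f : X → Y} (hu : ‖u‖ = 1)
    (hf : DifferentiableOn ℂ f (ball 0 1)) :
    DifferentiableOn ℂ (fun z : ℂ => f (z • u)) (ball 0 1) :=
  hf.comp (differentiable_id.smul_const u).differentiableOn
    fun _ => (smul_mem_unitBall_iff hu).2

/-- The restriction of `x ↦ f x • x` to the complex line through `u`, in the coordinate of that
line: it maps `z • u` to `slice f u z • u`. -/
def slice (f : X → ℂ) (u : X) (z : ℂ) : ℂ := z * f (z • u)

lemma slice_zero (f : X → ℂ) (u : X) : slice f u 0 = 0 := zero_mul _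

lemma slice_smul (f : X → ℂ) (u : X) (z : ℂ) : slice f u z • u = f (z • u) • z • u := by
  rw [slice, smul_smul, mul_comm]

lemma differentiableOn_slice (hu : ‖u‖ = 1) (hf : DifferentiableOn ℂ f (ball 0 1)) :
    DifferentiableOn ℂ (slice f u) (ball 0 1) :=
  differentiableOn_id.mul (differentiableOn_comp_smul_const hu hf)

lemma deriv_slice_zero (hu : ‖u‖ = 1) (hf : DifferentiableOn ℂ f (ball 0 1)) :
    deriv (slice f u) 0 = f 0 := by
  have hline := (differentiableOn_comp_smul_const hu hf).differentiableAt
    (ball_mem_nhds (0 : ℂ) one_pos)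
  have hderiv : HasDerivAt (slice f u) _ 0 := (hasDerivAt_id 0).mul hline.hasDerivAt
  simpa using hderiv.deriv

lemma injOn_slice (hu : ‖u‖ = 1) (hF : ∀ x ∈ ball (0 : X) 1, F x = a + f x • x)
    (hinj : InjOn F (ball 0 1)) : InjOn (slice f u) (ball 0 1) := by
  intro z hz w hw heq
  have hz' := (smul_mem_unitBall_iff hu).2 hz
  have hw' := (smul_mem_unitBall_iff hu).2 hw
  refine smul_left_injective ℂ (ne_zero_of_norm_ne_zero (hu ▸ one_ne_zero)) (hinj hz' hw' ?_)
  rw [hF _ hz', hF _ hw', ← slice_smul, ← slice_smul, heq]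

lemma ne_zero_of_injOn (hf : DifferentiableOn ℂ f (ball 0 1))
    (hF : ∀ x ∈ ball (0 : X) 1, F x = a + f x • x) (hinj : InjOn F (ball 0 1)) (hu : ‖u‖ = 1)
    (hx : x ∈ ball 0 1) : f x ≠ 0 := by
  intro hfx
  have h0 : (0 : X) ∈ ball (0 : X) 1 := mem_ball_self one_pos
  have hx0 : x = 0 := hinj hx h0 (by rw [hF x hx, hF 0 h0, hfx, zero_smul, smul_zero])
  rw [hx0, ← deriv_slice_zero hu hf] at hfx
  exact deriv_ne_zero_of_injOn isOpen_ball (differentiableOn_slice hu hf)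
    (injOn_slice hu hF hinj) (mem_ball_self one_pos) hfx

lemma exists_eq_smul_of_smul_eq_smul (hu : ‖u‖ = 1) (hx : x ∈ ball 0 1) (hfx : f x ≠ 0)
    (h : f x • x = c • u) : ∃ z ∈ ball (0 : ℂ) 1, x = z • u ∧ slice f u z = c := by
  obtain ⟨z, rfl⟩ : ∃ z : ℂ, x = z • u :=
    ⟨(f x)⁻¹ * c, by rw [mul_smul, ← h, inv_smul_smul₀ hfx]⟩
  refine ⟨z, (smul_mem_unitBall_iff hu).1 hx, rfl, ?_⟩
  exact smul_left_injective ℂ (ne_zero_of_norm_ne_zero (hu ▸ one_ne_zero))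
    ((slice_smul f u z).trans h)

lemma add_smul_mem_image_iff (hf : DifferentiableOn ℂ f (ball 0 1))
    (hF : ∀ x ∈ ball (0 : X) 1, F x = a + f x • x) (hinj : InjOn F (ball 0 1)) (hu : ‖u‖ = 1) :
    a + c • u ∈ F '' ball 0 1 ↔ c ∈ slice f u '' ball 0 1 := by
  constructor
  · rintro ⟨x, hx, hFx⟩
    rw [hF x hx, add_right_inj] at hFx
    obtain ⟨z, hz, -, hzc⟩ :=
      exists_eq_smul_of_smul_eq_smul hu hx (ne_zero_of_injOn hf hF hinj hu hx) hFx
    exact ⟨z, hz, hzc⟩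
  · rintro ⟨z, hz, rfl⟩
    have hz' := (smul_mem_unitBall_iff hu).2 hz
    exact ⟨z • u, hz', by rw [hF _ hz', slice_smul]⟩

lemma ball_subset_image_of_injOn (hf : DifferentiableOn ℂ f (ball 0 1))
    (hF : ∀ x ∈ ball (0 : X) 1, F x = a + f x • x) (hinj : InjOn F (ball 0 1)) :
    ball a (‖f 0‖ / 4) ⊆ F '' ball 0 1 := by
  intro p hp
  rcases eq_or_ne p a with rfl | hpa
  · exact ⟨0, mem_ball_self one_pos, by rw [hF 0 (mem_ball_self one_pos), smul_zero, add_zero]⟩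
  obtain ⟨u, hu, hpu⟩ := exists_norm_eq_one_eq_norm_smul (sub_ne_zero.2 hpa)
  rw [sub_eq_iff_eq_add'] at hpu
  rw [hpu, add_smul_mem_image_iff hf hF hinj hu]
  by_contra hnot
  have hkoebe := norm_deriv_div_four_le_norm_of_notMem_image (differentiableOn_slice hu hf)
    (injOn_slice hu hF hinj) (slice_zero f u) hnot
  rw [deriv_slice_zero hu hf, Complex.norm_real, norm_norm, ← dist_eq_norm] at hkoebe
  exact hkoebe.not_gt hp

lemma frontier_image_nonempty_of_injOn (hf : DifferentiableOn ℂ f (ball 0 1))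
    (hF : ∀ x ∈ ball (0 : X) 1, F x = a + f x • x) (hinj : InjOn F (ball 0 1)) (hu : ‖u‖ = 1) :
    (frontier (F '' ball 0 1)).Nonempty := by
  refine nonempty_frontier_iff.2 ⟨(nonempty_ball.2 one_pos).image F, fun huniv => ?_⟩
  refine image_ball_ne_univ_of_injOn (differentiableOn_slice hu hf) (injOn_slice hu hF hinj)
    (eq_univ_of_forall fun c => ?_)
  rw [← add_smul_mem_image_iff hf hF hinj hu, huniv]
  exact mem_univ _

lemma norm_div_four_le_infDist_frontier (hf : DifferentiableOn ℂ f (ball 0 1))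
    (hF : ∀ x ∈ ball (0 : X) 1, F x = a + f x • x) (hinj : InjOn F (ball 0 1)) (hu : ‖u‖ = 1) :
    ‖f 0‖ / 4 ≤ infDist (F 0) (frontier (F '' ball 0 1)) := by
  rw [le_infDist (frontier_image_nonempty_of_injOn hf hF hinj hu),
    hF 0 (mem_ball_self one_pos), smul_zero, add_zero]
  intro p hp
  by_contra! hlt
  exact hp.2 (interior_maximal (ball_subset_image_of_injOn hf hF hinj) isOpen_ball
    (mem_ball'.2 hlt))

lemma Subordinate.exists_slice_eq (hsub : Subordinate G F)
    (hf : DifferentiableOn ℂ f (ball 0 1)) (hF : ∀ x ∈ ball (0 : X) 1, F x = a + f x • x)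
    (hG : ∀ x ∈ ball (0 : X) 1, G x = a + g x • x) (hinj : InjOn F (ball 0 1)) (hu : ‖u‖ = 1) :
    ∃ ω : ℂ → ℂ, DifferentiableOn ℂ ω (ball 0 1) ∧ MapsTo ω (ball 0 1) (ball 0 1) ∧ ω 0 = 0 ∧
      ∀ z ∈ ball (0 : ℂ) 1, slice g u z = slice f u (ω z) := by
  obtain ⟨W, hW, hWmaps, hW0, hGF⟩ := hsub
  obtain ⟨ℓ, -, hℓ⟩ := exists_dual_vector ℂ u (hu ▸ one_ne_zero)
  have hline (z : ℂ) (hz : z ∈ ball (0 : ℂ) 1) :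
      ℓ (W (z • u)) ∈ ball (0 : ℂ) 1 ∧ slice g u z = slice f u (ℓ (W (z • u))) := by
    have hz' := (smul_mem_unitBall_iff hu).2 hz
    have hWz := hWmaps hz'
    have hGz := hGF _ hz'
    rw [hG _ hz', hF _ hWz, add_right_inj, ← slice_smul] at hGz
    obtain ⟨w, hw, hWw, hslice⟩ :=
      exists_eq_smul_of_smul_eq_smul hu hWz (ne_zero_of_injOn hf hF hinj hu hWz) hGz.symm
    have hℓw : ℓ (W (z • u)) = w := by simp [hWw, hℓ, hu]
    rw [hℓw]
    exact ⟨hw, hslice.symm⟩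
  exact ⟨fun z => ℓ (W (z • u)),
    ℓ.differentiable.comp_differentiableOn (differentiableOn_comp_smul_const hu hW),
    fun z hz => (hline z hz).1, by simp [hW0], fun z hz => (hline z hz).2⟩

lemma iteratedFDeriv_zero_apply_const_eq_smul (hg : DifferentiableOn ℂ g (ball 0 1))
    (hG : ∀ x ∈ ball (0 : X) 1, G x = a + g x • x) (hu : ‖u‖ = 1) {n : ℕ} (hn : 0 < n) :
    iteratedFDeriv ℂ n G 0 (fun _ => u) = iteratedDeriv n (slice g u) 0 • u := by
  have hGn : ContDiffOn ℂ n G (ball 0 1) :=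
    (contDiffOn_const.add ((contDiffOn_nat_of_differentiableOn isOpen_ball hg n).smul
      contDiffOn_id)).congr hG
  have hline : (fun z : ℂ => G (z • u)) =ᶠ[𝓝 0] fun z => a + slice g u z • u := by
    filter_upwards [ball_mem_nhds (0 : ℂ) one_pos] with z hz
    rw [hG _ ((smul_mem_unitBall_iff hu).2 hz), slice_smul]
  have hslice : ContDiffAt ℂ n (slice g u) 0 :=
    ((differentiableOn_slice hu hg).contDiffOn isOpen_ball).contDiffAt (ball_mem_nhds 0 one_pos)
  rw [iteratedFDeriv_zero_apply_const isOpen_ball (mem_ball_self one_pos) hGn,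
    hline.iteratedDeriv_eq, iteratedDeriv_const_add hn, iteratedDeriv_smul_const hslice u]

lemma norm_inv_factorial_smul_iteratedFDeriv (hg : DifferentiableOn ℂ g (ball 0 1))
    (hG : ∀ x ∈ ball (0 : X) 1, G x = a + g x • x) (hu : ‖u‖ = 1) {n : ℕ} (hn : 0 < n) :
    ‖(n.factorial : ℂ)⁻¹ • iteratedFDeriv ℂ n G 0 (fun _ => c • u)‖ =
      ‖taylorCoeff (slice g u) n‖ * ‖c‖ ^ n := by
  have hmul := (iteratedFDeriv ℂ n G 0).map_smul_univ (fun _ => c) (fun _ => u)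
  rw [Finset.prod_const, Finset.card_univ, Fintype.card_fin,
    iteratedFDeriv_zero_apply_const_eq_smul hg hG hu hn] at hmul
  rw [hmul, taylorCoeff, norm_smul, norm_smul, norm_smul, hu, norm_mul, norm_pow]
  ring

end LineRestriction

theorem stmt12_general {X : Type*} [NormedAddCommGroup X] [NormedSpace ℂ X]
    (a : X) (f g : X → ℂ)
    (hf : DifferentiableOn ℂ f (ball (0 : X) 1))
    (hg : DifferentiableOn ℂ g (ball (0 : X) 1))
    (F G : X → X)
    (hF : ∀ x ∈ ball (0 : X) 1, F x = a + f x • x)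
    (hG : ∀ x ∈ ball (0 : X) 1, G x = a + g x • x)
    (hinj : InjOn F (ball (0 : X) 1))
    (hsub : Subordinate G F)
    (r : ℝ) (hr : r ≤ 3 - 2 * √2)
    (x : X) (hx : ‖x‖ = r) :
    Summable (fun s : ℕ =>
        ‖(((1 + s).factorial : ℂ))⁻¹ • iteratedFDeriv ℂ (1 + s) G 0 (fun _ => x)‖) ∧
    (∑' s : ℕ, ‖(((1 + s).factorial : ℂ))⁻¹ • iteratedFDeriv ℂ (1 + s) G 0 (fun _ => x)‖)
      ≤ infDist (F 0) (frontier (F '' ball (0 : X) 1)) := by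
  rcases eq_or_ne x 0 with rfl | hx0
  · have hzero (s : ℕ) : iteratedFDeriv ℂ (1 + s) G 0 (fun _ => 0) = 0 :=
      ContinuousMultilinearMap.map_coord_zero _ ⟨0, by omega⟩ rfl
    simp only [hzero, smul_zero, norm_zero, tsum_zero]
    exact ⟨summable_zero, infDist_nonneg⟩
  have hr0 : 0 < r := hx ▸ norm_pos_iff.2 hx0
  have hr3 : r ≤ 1 / 3 := by nlinarith [Real.sq_sqrt (zero_le_two (α := ℝ)), Real.sqrt_nonneg 2]
  obtain ⟨u, hu, hxu⟩ := exists_norm_eq_one_eq_norm_smul hx0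
  obtain ⟨ω, hω, hωmaps, hω0, hslice⟩ := hsub.exists_slice_eq hf hF hG hinj hu
  have hf' := differentiableOn_slice hu hf
  have hg' := differentiableOn_slice hu hg
  have hterm (s : ℕ) : ‖((1 + s).factorial : ℂ)⁻¹ • iteratedFDeriv ℂ (1 + s) G 0 (fun _ => x)‖ =
      ‖taylorCoeff (slice g u) (s + 1)‖ * r ^ (s + 1) := by
    rw [hxu, norm_inv_factorial_smul_iteratedFDeriv hg hG hu (by omega), Complex.norm_real,
      norm_norm, hx, add_comm]
  have hsummable := summable_norm_taylorCoeff_mul_pow hg' hr0.le (by linarith : r < 1)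
  simp only [hterm]
  refine ⟨(summable_nat_add_iff 1).2 hsummable, ?_⟩
  calc ∑' s, ‖taylorCoeff (slice g u) (s + 1)‖ * r ^ (s + 1)
      = majorant (slice g u) r := by
        rw [majorant, hsummable.tsum_eq_zero_add, taylorCoeff_zero, slice_zero, norm_zero,
          zero_mul, zero_add]
    _ = majorant (fun z => slice f u (ω z)) r := by
        refine tsum_congr fun n => ?_
        rw [taylorCoeff_congr one_pos hg' (fun z hz => hslice z (mem_ball_zero_iff.2 hz))]
    _ ≤ majorant (slice f u) r := majorant_comp_le hf' hω hωmaps hω0 hr0 hr3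
    _ ≤ ‖deriv (slice f u) 0‖ / 4 :=
        majorant_le_norm_deriv_div_four hf' (injOn_slice hu hF hinj) (slice_zero f u) hr0.le hr
    _ = ‖f 0‖ / 4 := by rw [deriv_slice_zero hu hf]
    _ ≤ infDist (F 0) (frontier (F '' ball 0 1)) := norm_div_four_le_infDist_frontier hf hF hinj hu

end Development

/-- **Bohr radius for subordination.** Let `F(x) = a + f(x)·x` be biholomorphic on the unit
ball `𝔹` of a complex Banach space and let `G(x) = a + g(x)·x` be subordinate to `F`, with
`P_s(x) = (1/s!)·DˢG(0)(x,…,x)`. Then for every `x` with `‖x‖ = r ≤ 3 − 2√2`,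
`Σ_{s≥1} ‖P_s(x)‖ ≤ dist(F(0), ∂F(𝔹))`. -/
theorem stmt12 {X : Type*} [NormedAddCommGroup X] [NormedSpace ℂ X] [CompleteSpace X]
    (a : X) (f g : X → ℂ)
    (hf : DifferentiableOn ℂ f (ball (0 : X) 1))
    (hg : DifferentiableOn ℂ g (ball (0 : X) 1))
    (F G : X → X)
    (hF : ∀ x ∈ ball (0 : X) 1, F x = a + f x • x)
    (hG : ∀ x ∈ ball (0 : X) 1, G x = a + g x • x)
    (hbi : IsBiholoOn F (ball (0 : X) 1))
    (hsub : Subordinate G F)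
    (r : ℝ) (hr : r ≤ 3 - 2 * Real.sqrt 2)
    (x : X) (hx : ‖x‖ = r) :
    Summable (fun s : ℕ =>
        ‖(((1 + s).factorial : ℂ))⁻¹ • iteratedFDeriv ℂ (1 + s) G 0 (fun _ => x)‖) ∧
    (∑' s : ℕ, ‖(((1 + s).factorial : ℂ))⁻¹ • iteratedFDeriv ℂ (1 + s) G 0 (fun _ => x)‖)
      ≤ infDist (F 0) (frontier (F '' ball (0 : X) 1)) := by
  exact stmt12_general a f g hf hg F G hF hG hbi.2.1 hsub r hr x hx
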